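/- arXiv:2507.16730 — 2 statements merged into one kernel-verified Lean document; each statement's English description precedes it below -/
import Mathlib

section
/- Almost all cographs have a generalized cospectral mate that is itself a cograph. Precisely, letting c(n) denote the number of isomorphism classes of cographs on n vertices and g(n) denote the number of isomorphism classes of cographs G on n vertices for which there exists a cograph H on n vertices that is generalized cospectral with G but not isomorphic to G, one has lim_{n→∞} g(n)/c(n) = 1. -/
open SimpleGraph

/-- The characteristic polynomial (over `ℝ`) of the adjacency matrix of a finite graph. -/
noncomputable def adjCharPoly {V : Type} [Fintype V] [DecidableEq V] (G : SimpleGraph V) :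
    Polynomial ℝ :=
  letI := Classical.decRel G.Adj
  Matrix.charpoly (G.adjMatrix ℝ)

/-- Two finite graphs are cospectral if their adjacency matrices have the same
characteristic polynomial. -/
def Cospectral {V W : Type} [Fintype V] [DecidableEq V] [Fintype W] [DecidableEq W]
    (G : SimpleGraph V) (H : SimpleGraph W) : Prop :=
  adjCharPoly G = adjCharPoly H

/-- Generalized cospectrality: the graphs are cospectral and so are their complements. -/
def GenCospectral {V W : Type} [Fintype V] [DecidableEq V] [Fintype W] [DecidableEq W]
    (G : SimpleGraph V) (H : SimpleGraph W) : Prop :=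
  Cospectral G H ∧ Cospectral Gᶜ Hᶜ

/-- A cograph is a graph with no induced path `P₄` (on 4 vertices). -/
def IsCograph {V : Type} (G : SimpleGraph V) : Prop :=
  ¬ ∃ f : Fin 4 ↪ V, ∀ i j, G.Adj (f i) (f j) ↔ (SimpleGraph.pathGraph 4).Adj i j

/-- The number of isomorphism classes of graphs on `n` vertices satisfying an
isomorphism-invariant property `P`. -/
noncomputable def classCount (n : ℕ) (P : SimpleGraph (Fin n) → Prop) : ℕ :=
  Nat.card (Quot fun G H : {G : SimpleGraph (Fin n) // P G} => Nonempty (G.1 ≃g H.1))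

/-! ### Isomorphism classes of finite graphs -/

/-- Isomorphism of graphs on `Fin n`, `n` arbitrary. -/
def graphSetoid : Setoid (Σ n : ℕ, SimpleGraph (Fin n)) where
  r G H := Nonempty (G.2 ≃g H.2)
  iseqv := ⟨fun _ => ⟨Iso.refl⟩, fun ⟨e⟩ => ⟨e.symm⟩, fun ⟨e⟩ ⟨f⟩ => ⟨e.trans f⟩⟩

/-- The type of isomorphism classes of finite graphs. -/
def GCls : Type := Quotient graphSetoid

namespace GCls

/-- The isomorphism class of a finite graph. -/
noncomputable def cls {V : Type} [Finite V] (G : SimpleGraph V) : GCls :=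
  Quotient.mk graphSetoid ⟨Nat.card V, G.map (Finite.equivFin V)⟩

theorem cls_eq_iff {V W : Type} [Finite V] [Finite W] {G : SimpleGraph V} {H : SimpleGraph W} :
    cls G = cls H ↔ Nonempty (G ≃g H) := by
  refine Iff.trans (Quotient.eq (r := graphSetoid)) ?_
  constructor
  · rintro ⟨e⟩
    exact ⟨((Iso.map (Finite.equivFin V) G).trans e).trans (Iso.map (Finite.equivFin W) H).symm⟩
  · rintro ⟨e⟩
    exact ⟨((Iso.map (Finite.equivFin V) G).symm.trans e).trans (Iso.map (Finite.equivFin W) H)⟩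

theorem exists_rep' (g : GCls) : ∃ (n : ℕ) (G : SimpleGraph (Fin n)), g = cls G := by
  induction g using Quotient.inductionOn with
  | h a =>
    refine ⟨a.1, a.2, ?_⟩
    refine Quotient.sound ?_
    exact ⟨Iso.map (Finite.equivFin _) a.2⟩

theorem ind {P : GCls → Prop} (h : ∀ (n : ℕ) (G : SimpleGraph (Fin n)), P (cls G)) (g : GCls) :
    P g := by
  obtain ⟨n, G, rfl⟩ := exists_rep' g
  exact h n G

/-- Lift of an invariant. -/
noncomputable def lift {α : Type*} (f : ∀ n : ℕ, SimpleGraph (Fin n) → α) (g : GCls) : α :=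
  f (Quotient.out g).1 (Quotient.out g).2

theorem lift_eq {α : Type*} (f : ∀ n : ℕ, SimpleGraph (Fin n) → α) {V : Type} [Finite V]
    (G : SimpleGraph V) (x : α) (h : ∀ (n : ℕ) (H : SimpleGraph (Fin n)), (G ≃g H) → f n H = x) :
    lift f (cls G) = x := by
  unfold lift
  apply h
  have : cls G = cls (Quotient.out (cls G)).2 := by
    conv_lhs => rw [← Quotient.out_eq (cls G)]
    refine Quotient.sound ?_
    exact ⟨Iso.map (Finite.equivFin _) _⟩
  exact (cls_eq_iff.1 this).some

/-- Number of vertices. -/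
noncomputable def size (g : GCls) : ℕ := lift (fun n _ => n) g

theorem size_cls {V : Type} [Finite V] (G : SimpleGraph V) : size (cls G) = Nat.card V :=
  lift_eq _ _ _ fun n _ e => by
    rw [Nat.card_congr e.toEquiv, Nat.card_eq_fintype_card, Fintype.card_fin]

/-- Connectedness. -/
noncomputable def Conn (g : GCls) : Prop := lift (fun _ G => G.Connected) g

theorem conn_cls {V : Type} [Finite V] (G : SimpleGraph V) : Conn (cls G) ↔ G.Connected :=
  iff_of_eq <| lift_eq _ _ _ fun _ _ e => propext e.connected_iff.symm

/-- Complement. -/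
noncomputable def co (g : GCls) : GCls := lift (fun _ G => cls Gᶜ) g

/-- Isomorphic graphs have isomorphic complements. -/
def isoCompl {V W : Type} {G : SimpleGraph V} {H : SimpleGraph W} (e : G ≃g H) : Gᶜ ≃g Hᶜ :=
  ⟨e.toEquiv, by intro a b; simp [compl_adj, e.map_adj_iff]⟩

theorem co_cls {V : Type} [Finite V] (G : SimpleGraph V) : co (cls G) = cls Gᶜ :=
  lift_eq _ _ _ fun _ _ e => cls_eq_iff.2 ⟨(isoCompl e).symm⟩

theorem co_co (g : GCls) : co (co g) = g := by
  induction g using GCls.ind with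
  | h n G => rw [co_cls, co_cls, compl_compl]

theorem size_co (g : GCls) : size (co g) = size g := by
  induction g using GCls.ind with
  | h n G => rw [co_cls, size_cls, size_cls]

noncomputable instance : Zero GCls := ⟨cls (⊥ : SimpleGraph (Fin 0))⟩

/-- The one-vertex graph. -/
noncomputable def pt : GCls := cls (⊥ : SimpleGraph (Fin 1))

noncomputable instance : Add GCls :=
  ⟨fun a b => lift (fun _ G => lift (fun _ H => cls (G ⊕g H)) b) a⟩

theorem add_cls {V W : Type} [Finite V] [Finite W] (G : SimpleGraph V) (H : SimpleGraph W) :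
    cls G + cls H = cls (G ⊕g H) :=
  lift_eq _ _ _ fun _ _ e => lift_eq _ _ _ fun _ _ f => cls_eq_iff.2 ⟨(Iso.sumCongr e f).symm⟩

theorem zero_def : (0 : GCls) = cls (⊥ : SimpleGraph (Fin 0)) := rfl

theorem cls_eq_zero {V : Type} [Finite V] (G : SimpleGraph V) : cls G = 0 ↔ IsEmpty V := by
  rw [zero_def, cls_eq_iff]
  constructor
  · rintro ⟨e⟩
    exact e.toEquiv.isEmpty
  · intro h
    exact ⟨⟨Equiv.equivOfIsEmpty _ _, by intro a; exact h.elim a⟩⟩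

protected theorem add_comm' (a b : GCls) : a + b = b + a := by
  induction a using GCls.ind with
  | h n G =>
  induction b using GCls.ind with
  | h m H =>
    rw [add_cls, add_cls, cls_eq_iff]
    exact ⟨Iso.sumComm⟩

protected theorem zero_add' (a : GCls) : 0 + a = a := by
  induction a using GCls.ind with
  | h n G =>
    rw [zero_def, add_cls, cls_eq_iff]
    refine ⟨⟨Equiv.emptySum _ _, ?_⟩⟩
    rintro (a | a) (b | b)
    · exact a.elim0
    · exact a.elim0
    · exact b.elim0
    · simp

noncomputable instance : AddCommMonoid GCls where
  add_assoc a b c := by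
    induction a using GCls.ind with
    | h n G =>
    induction b using GCls.ind with
    | h m H =>
    induction c using GCls.ind with
    | h m I =>
      simp only [add_cls, cls_eq_iff]
      exact ⟨Iso.sumAssoc⟩
  zero_add := GCls.zero_add'
  add_zero a := by rw [GCls.add_comm', GCls.zero_add']
  add_comm := GCls.add_comm'
  nsmul := nsmulRec

theorem size_add (a b : GCls) : size (a + b) = size a + size b := by
  induction a using GCls.ind with
  | h n G =>
  induction b using GCls.ind with
  | h m H =>
    rw [add_cls, size_cls, size_cls, size_cls, Nat.card_sum]

theorem size_eq_zero (a : GCls) : size a = 0 ↔ a = 0 := by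
  induction a using GCls.ind with
  | h n G =>
    rw [cls_eq_zero, size_cls, Finite.card_eq_zero_iff]

theorem size_zero : size 0 = 0 := (size_eq_zero 0).2 rfl

theorem size_pt : size pt = 1 := by
  rw [pt, size_cls]; simp

/-- `size` as a hom. -/
noncomputable def sizeHom : GCls →+ ℕ := ⟨⟨size, size_zero⟩, size_add⟩

theorem finite_size (n : ℕ) : {g : GCls | size g = n}.Finite := by
  apply Set.Finite.subset (Set.finite_range (fun G : SimpleGraph (Fin n) => cls G))
  intro g
  induction g using GCls.ind with
  | h m G =>
    intro h
    simp only [Set.mem_ofPred_eq, size_cls, Nat.card_eq_fintype_card, Fintype.card_fin] at h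
    subst h
    exact ⟨G, rfl⟩

theorem conn_pt : Conn pt := by
  rw [pt, conn_cls]
  exact ⟨fun u v => by rw [Subsingleton.elim u v]⟩

theorem conn_ne_zero {g : GCls} (h : Conn g) : g ≠ 0 := by
  induction g using GCls.ind with
  | h n G =>
    rw [conn_cls] at h
    rw [Ne, cls_eq_zero, not_isEmpty_iff]
    exact h.nonempty

theorem conn_or_co {g : GCls} (h : g ≠ 0) : Conn g ∨ Conn (co g) := by
  induction g using GCls.ind with
  | h n G =>
    rw [co_cls, conn_cls, conn_cls]
    rw [Ne, cls_eq_zero, not_isEmpty_iff] at h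
    exact connected_or_connected_compl G

theorem size_one {g : GCls} (h : size g = 1) : g = pt := by
  induction g using GCls.ind with
  | h n G =>
    rw [size_cls, Nat.card_eq_fintype_card, Fintype.card_fin] at h
    subst h
    rw [pt]
    congr 1
    ext a b
    rw [Subsingleton.elim a b]
    simp

theorem split {g : GCls} (h0 : g ≠ 0) (h : ¬ Conn g) : ∃ a b, a ≠ 0 ∧ b ≠ 0 ∧ g = a + b := by
  classical
  induction g using GCls.ind with
  | h n G =>
    rw [conn_cls, connected_iff] at h
    rw [Ne, cls_eq_zero, not_isEmpty_iff] at h0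
    have h1 : ¬ G.Preconnected := fun h' => h ⟨h', h0⟩
    unfold Preconnected at h1
    push Not at h1
    obtain ⟨u, v, huv⟩ := h1
    let S : Set (Fin n) := {w | G.Reachable u w}
    refine ⟨cls (G.induce S), cls (G.induce Sᶜ), ?_, ?_, ?_⟩
    · rw [Ne, cls_eq_zero, not_isEmpty_iff]
      exact ⟨⟨u, Reachable.refl u⟩⟩
    · rw [Ne, cls_eq_zero, not_isEmpty_iff]
      exact ⟨⟨v, huv⟩⟩
    · rw [add_cls, cls_eq_iff]
      have key : ∀ a ∈ S, ∀ b, b ∉ S → ¬ G.Adj a b := by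
        intro a ha b hb hab
        exact hb (Reachable.trans ha hab.reachable)
      refine ⟨(⟨Equiv.Set.sumCompl S, ?_⟩ : (G.induce S ⊕g G.induce Sᶜ) ≃g G).symm⟩
      rintro (⟨a, ha⟩ | ⟨a, ha⟩) (⟨b, hb⟩ | ⟨b, hb⟩)
      · simp
      · simpa using key a ha b hb
      · simpa [G.adj_comm] using fun h => key b hb a ha h
      · simp

/-! ### Components -/

section comps

variable {V W : Type}

theorem closed_reach {G : SimpleGraph V} {H : SimpleGraph W} (f : G ↪g H)
    (hf : ∀ v w, H.Adj (f v) w → w ∈ Set.range f) (v : V) (w : W) (h : H.Reachable (f v) w) :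
    ∃ u, f u = w ∧ G.Reachable v u := by
  obtain ⟨p⟩ := h
  generalize hx : f v = x at p
  induction p generalizing v with
  | nil => exact ⟨v, hx, Reachable.refl v⟩
  | cons hadj p ih =>
    subst hx
    obtain ⟨z, rfl⟩ := hf _ _ hadj
    obtain ⟨u, hu, hr⟩ := ih z rfl
    exact ⟨u, hu, (f.map_adj_iff.1 hadj).reachable.trans hr⟩

theorem closed_iso {G : SimpleGraph V} {H : SimpleGraph W} (f : G ↪g H)
    (hf : ∀ v w, H.Adj (f v) w → w ∈ Set.range f) (C : G.ConnectedComponent) :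
    Nonempty (C.toSimpleGraph ≃g (C.map f.toHom).toSimpleGraph) := by
  induction C using ConnectedComponent.ind with
  | h v =>
    have hmem : ∀ u : (G.connectedComponentMk v).supp,
        f u.1 ∈ ((G.connectedComponentMk v).map f.toHom).supp := by
      rintro ⟨u, hu⟩
      have hu' : G.connectedComponentMk u = G.connectedComponentMk v := hu
      exact congrArg (ConnectedComponent.map f.toHom) hu'
    let F : (G.connectedComponentMk v).supp → ((G.connectedComponentMk v).map f.toHom).supp :=
      fun u => ⟨f u.1, hmem u⟩
    have hF : Function.Bijective F := by
      constructor
      · intro a b hab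
        exact Subtype.ext (f.injective (congrArg Subtype.val hab))
      · rintro ⟨w, hw⟩
        have hw' : H.Reachable (f v) w := by
          rw [ConnectedComponent.mem_supp_iff] at hw
          exact (ConnectedComponent.exact hw).symm
        obtain ⟨u, rfl, hu⟩ := closed_reach f hf v w hw'
        exact ⟨⟨u, ConnectedComponent.sound hu.symm⟩, rfl⟩
    refine ⟨⟨Equiv.ofBijective F hF, ?_⟩⟩
    intro a b
    exact f.map_adj_iff

/-- The multiset of classes of the components of a graph. -/
noncomputable def compsG [Finite V] (G : SimpleGraph V) : Multiset GCls :=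
  letI := Fintype.ofFinite G.ConnectedComponent
  (Finset.univ : Finset G.ConnectedComponent).val.map fun C => cls C.toSimpleGraph

theorem compsG_eq [Finite V] (G : SimpleGraph V) {ι : Type} [Fintype ι]
    (f : ι → G.ConnectedComponent) (hf : Function.Bijective f) :
    compsG G = (Finset.univ : Finset ι).val.map fun i => cls (f i).toSimpleGraph := by
  unfold compsG
  let _ := Fintype.ofFinite G.ConnectedComponent
  have : (Finset.univ : Finset G.ConnectedComponent) =
      Finset.univ.map (Equiv.ofBijective f hf).toEmbedding := by
    rw [Finset.map_univ_equiv]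
  rw [this, Finset.map_val, Multiset.map_map]
  rfl

theorem compsG_iso [Finite V] [Finite W] {G : SimpleGraph V} {H : SimpleGraph W} (e : G ≃g H) :
    compsG G = compsG H := by
  letI := Fintype.ofFinite G.ConnectedComponent
  rw [compsG_eq H (fun C : G.ConnectedComponent => C.map e.toEmbedding.toHom)
    e.connectedComponentEquiv.bijective, compsG_eq G id Function.bijective_id]
  refine Multiset.map_congr rfl fun C _ => cls_eq_iff.2 ?_
  exact closed_iso e.toEmbedding (fun v w _ => ⟨e.symm w, by simp⟩) C

theorem compsG_sum [Finite V] [Finite W] (G : SimpleGraph V) (H : SimpleGraph W) :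
    compsG (G ⊕g H) = compsG G + compsG H := by
  letI := Fintype.ofFinite G.ConnectedComponent
  letI := Fintype.ofFinite H.ConnectedComponent
  have hl : ∀ v w, (G ⊕g H).Adj (Embedding.sumInl (G := G) (H := H) v) w →
      w ∈ Set.range (Embedding.sumInl (G := G) (H := H)) := by
    rintro v (w | w) h
    · exact ⟨w, rfl⟩
    · exact absurd h (by simp [Embedding.sumInl])
  have hr : ∀ v w, (G ⊕g H).Adj (Embedding.sumInr (G := G) (H := H) v) w →
      w ∈ Set.range (Embedding.sumInr (G := G) (H := H)) := by
    rintro v (w | w) h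
    · exact absurd h (by simp [Embedding.sumInr])
    · exact ⟨w, rfl⟩
  let f : G.ConnectedComponent ⊕ H.ConnectedComponent → (G ⊕g H).ConnectedComponent :=
    Sum.elim (fun C => C.map Embedding.sumInl.toHom) (fun C => C.map Embedding.sumInr.toHom)
  have hf : Function.Bijective f := by
    constructor
    · rintro (C | C) (D | D) h
      · congr 1
        induction C using ConnectedComponent.ind with | h v => ?_
        induction D using ConnectedComponent.ind with | h w => ?_
        obtain ⟨u, hu, h'⟩ := closed_reach _ hl v _ (ConnectedComponent.exact h)
        rw [Embedding.sumInl.injective hu] at h'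
        exact ConnectedComponent.sound h'
      · exfalso
        induction C using ConnectedComponent.ind with | h v => ?_
        induction D using ConnectedComponent.ind with | h w => ?_
        exact not_reachable_sum_inl_inr _ _ (ConnectedComponent.exact h)
      · exfalso
        induction C using ConnectedComponent.ind with | h v => ?_
        induction D using ConnectedComponent.ind with | h w => ?_
        exact not_reachable_sum_inl_inr _ _ (ConnectedComponent.exact h).symm
      · congr 1
        induction C using ConnectedComponent.ind with | h v => ?_
        induction D using ConnectedComponent.ind with | h w => ?_
        obtain ⟨u, hu, h'⟩ := closed_reach _ hr v _ (ConnectedComponent.exact h)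
        rw [Embedding.sumInr.injective hu] at h'
        exact ConnectedComponent.sound h'
    · intro C
      induction C using ConnectedComponent.ind with | h v => ?_
      rcases v with v | v
      · exact ⟨Sum.inl (G.connectedComponentMk v), rfl⟩
      · exact ⟨Sum.inr (H.connectedComponentMk v), rfl⟩
  rw [compsG_eq _ f hf, compsG_eq G id Function.bijective_id,
    compsG_eq H id Function.bijective_id, ← Finset.univ_disjSum_univ, Finset.val_disjSum,
    Multiset.disjSum, Multiset.map_add, Multiset.map_map, Multiset.map_map]
  congr 1
  · refine Multiset.map_congr rfl fun C _ => cls_eq_iff.2 ?_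
    exact (closed_iso _ hl C).map Iso.symm
  · refine Multiset.map_congr rfl fun C _ => cls_eq_iff.2 ?_
    exact (closed_iso _ hr C).map Iso.symm

end comps

/-- The multiset of components of a class. -/
noncomputable def comps (g : GCls) : Multiset GCls := lift (fun _ G => compsG G) g

theorem comps_cls {V : Type} [Finite V] (G : SimpleGraph V) : comps (cls G) = compsG G :=
  lift_eq _ _ _ fun _ _ e => (compsG_iso e).symm

theorem comps_add (a b : GCls) : comps (a + b) = comps a + comps b := by
  induction a using GCls.ind with
  | h n G =>
  induction b using GCls.ind with
  | h m H =>
    rw [add_cls, comps_cls, comps_cls, comps_cls, compsG_sum]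

theorem comps_conn {g : GCls} (h : Conn g) : comps g = {g} := by
  induction g using GCls.ind with
  | h n G =>
    rw [conn_cls] at h
    obtain ⟨v⟩ := h.nonempty
    rw [comps_cls, compsG_eq G (fun _ : Unit => G.connectedComponentMk v)]
    · simp only [Finset.univ_unique, Finset.singleton_val, Multiset.map_singleton,
        Multiset.singleton_inj]
      rw [cls_eq_iff]
      have hS : ∀ w, w ∈ (G.connectedComponentMk v).supp := fun w =>
        ConnectedComponent.sound (h.preconnected w v)
      exact ⟨⟨Equiv.subtypeUnivEquiv hS, Iff.rfl⟩⟩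
    · constructor
      · intro a b _; rfl
      · intro C
        induction C using ConnectedComponent.ind with | h w => ?_
        exact ⟨(), ConnectedComponent.sound (h.preconnected v w)⟩

theorem comps_zero : comps 0 = 0 := by
  have h := comps_add 0 0
  rw [add_zero] at h
  simpa using h

theorem comps_sum_conn (g : GCls) : (comps g).sum = g ∧ ∀ c ∈ comps g, Conn c := by
  induction hn : size g using Nat.strong_induction_on generalizing g with
  | _ n ih =>
    by_cases h0 : g = 0
    · subst h0; simp [comps_zero]
    · by_cases hc : Conn g
      · rw [comps_conn hc]; simpa using hc
      · obtain ⟨a, b, ha, hb, rfl⟩ := split h0 hc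
        rw [Ne, ← size_eq_zero] at ha hb
        rw [size_add] at hn
        obtain ⟨h1, h2⟩ := ih (size a) (by omega) a rfl
        obtain ⟨h3, h4⟩ := ih (size b) (by omega) b rfl
        rw [comps_add, Multiset.sum_add, h1, h3]
        refine ⟨rfl, ?_⟩
        intro c hc
        rcases Multiset.mem_add.1 hc with hc | hc
        · exact h2 c hc
        · exact h4 c hc

theorem comps_of_sum (M : Multiset GCls) (h : ∀ c ∈ M, Conn c) : comps M.sum = M := by
  induction M using Multiset.induction_on with
  | empty => simp [comps_zero]
  | cons a M ih =>
    rw [Multiset.sum_cons, comps_add, comps_conn (h a (by simp)),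
      ih (fun c hc => h c (by simp [hc])), Multiset.singleton_add]

theorem comps_inj {a b : GCls} (h : comps a = comps b) : a = b := by
  rw [← (comps_sum_conn a).1, h, (comps_sum_conn b).1]

theorem add_cancel {a b c : GCls} (h : a + c = b + c) : a = b := by
  have := congrArg comps h
  rw [comps_add, comps_add] at this
  exact comps_inj (add_right_cancel this)

theorem not_conn_add {a b : GCls} (ha : a ≠ 0) (hb : b ≠ 0) : ¬ Conn (a + b) := by
  intro h
  have h1 := comps_conn h
  rw [comps_add] at h1
  have h2 : ∀ x : GCls, x ≠ 0 → 0 < (comps x).card := by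
    intro x hx
    rw [Multiset.card_pos]
    intro h'
    apply hx
    rw [← (comps_sum_conn x).1, h', Multiset.sum_zero]
  have h3 := congrArg Multiset.card h1
  rw [Multiset.card_add, Multiset.card_singleton] at h3
  have := h2 a ha
  have := h2 b hb
  omega

end GCls

/-! ### Cographs -/

theorem isCograph_iff {V : Type} (G : SimpleGraph V) :
    IsCograph G ↔ ∀ a b c d, G.Adj a b → G.Adj b c → G.Adj c d → ¬ G.Adj a c → ¬ G.Adj a d →
      G.Adj b d := by
  unfold IsCograph
  rw [not_iff_comm]
  push Not
  constructor
  · rintro ⟨a, b, c, d, hab, hbc, hcd, hac, had, hbd⟩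
    have h1 : a ≠ b := hab.ne
    have h2 : b ≠ c := hbc.ne
    have h3 : c ≠ d := hcd.ne
    have h4 : a ≠ c := by rintro rfl; exact had hcd
    have h5 : a ≠ d := by rintro rfl; exact hac hcd.symm
    have h6 : b ≠ d := by rintro rfl; exact had hab
    refine ⟨⟨![a, b, c, d], ?_⟩, ?_⟩
    · intro i j hij
      fin_cases i <;> fin_cases j <;> simp_all
    · intro i j
      change G.Adj (![a, b, c, d] i) (![a, b, c, d] j) ↔ _
      fin_cases i <;> fin_cases j <;>
        simp_all [pathGraph_adj, G.adj_comm b a, G.adj_comm c b, G.adj_comm d c,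
          G.adj_comm c a, G.adj_comm d a, G.adj_comm d b]
  · rintro ⟨f, hf⟩
    refine ⟨f 0, f 1, f 2, f 3, ?_, ?_, ?_, ?_, ?_, ?_⟩ <;> rw [hf] <;> simp [pathGraph_adj]

theorem IsCograph.of_embedding {V W : Type} {G : SimpleGraph V} {H : SimpleGraph W} (f : G ↪g H)
    (h : IsCograph H) : IsCograph G := by
  rw [isCograph_iff] at h ⊢
  intro a b c d
  have := h (f a) (f b) (f c) (f d)
  simpa only [f.map_adj_iff] using this

theorem IsCograph.compl {V : Type} {G : SimpleGraph V} (h : IsCograph G) : IsCograph Gᶜ := by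
  rw [isCograph_iff] at h ⊢
  intro a b c d hab hbc hcd hac had
  have h4 : a ≠ c := by rintro rfl; exact had hcd
  have h5 : a ≠ d := by rintro rfl; exact hac hcd.symm
  have h6 : b ≠ d := by rintro rfl; exact had hab
  simp only [compl_adj] at *
  refine ⟨h6, fun hbd => ?_⟩
  have hac' : G.Adj a c := by tauto
  have had' : G.Adj a d := by tauto
  have := h c a d b hac'.symm had' hbd.symm hcd.2 (fun h => hbc.2 h.symm)
  exact hab.2 this

theorem IsCograph.sum {V W : Type} {G : SimpleGraph V} {H : SimpleGraph W} (hG : IsCograph G)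
    (hH : IsCograph H) : IsCograph (G ⊕g H) := by
  rw [isCograph_iff] at *
  rintro (a | a) (b | b) <;> rintro (c | c) <;> rintro (d | d) <;> simp
  · exact hG a b c d
  · exact hH a b c d

theorem exists_adj_of_connected {V : Type} {G : SimpleGraph V} (h : G.Connected) {u v : V}
    (huv : u ≠ v) : ∃ w, G.Adj u w := by
  obtain ⟨p⟩ := h.preconnected u v
  cases p with
  | nil => exact absurd rfl huv
  | cons h _ => exact ⟨_, h⟩

theorem cograph_main {V : Type} {G : SimpleGraph V} (hG : IsCograph G) (h1 : G.Connected)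
    (h2 : Gᶜ.Connected) (v z : V) (hz : v ≠ z) : (G.induce {v}ᶜ).Connected := by
  by_contra hcon
  obtain ⟨u, hu⟩ := exists_adj_of_connected h2 hz
  rw [compl_adj] at hu
  have huv : u ∈ ({v}ᶜ : Set V) := fun h => hu.1 h.symm
  have hw : ∃ w, ¬ (G.induce {v}ᶜ).Reachable ⟨u, huv⟩ w := by
    by_contra! hh
    have : Nonempty ({v}ᶜ : Set V) := ⟨⟨u, huv⟩⟩
    exact hcon ⟨fun a b => (hh a).symm.trans (hh b)⟩
  obtain ⟨w, hw⟩ := hw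
  have claim : ∀ (x y : V) (_ : G.Walk x y) (_ : y = v) (hx : x ∈ ({v}ᶜ : Set V)),
      ∃ x', (G.induce {v}ᶜ).Reachable ⟨x, hx⟩ x' ∧ G.Adj v x'.1 := by
    intro x y p
    induction p with
    | nil => intro h hx; exact absurd h hx
    | @cons a b c hab p ih =>
      intro hc ha
      by_cases hb : b ∈ ({v}ᶜ : Set V)
      · obtain ⟨x', hr, hx'⟩ := ih hc hb
        refine ⟨x', Reachable.trans (Adj.reachable ?_) hr, hx'⟩
        exact hab
      · have : b = v := by simpa using hb
        subst this
        exact ⟨⟨a, ha⟩, Reachable.refl _, hab.symm⟩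
  obtain ⟨a, hra, ha⟩ := claim u v (h1.preconnected u v).some rfl huv
  obtain ⟨b, hrb, hb⟩ := claim w.1 v (h1.preconnected w.1 v).some rfl w.2
  have claim2 : ∀ (x y : ({v}ᶜ : Set V)) (_ : (G.induce {v}ᶜ).Walk x y) (_ : G.Adj v x.1)
      (_ : ¬ G.Adj v y.1), ∃ s t, (G.induce {v}ᶜ).Reachable x s ∧ (G.induce {v}ᶜ).Adj s t ∧
        G.Adj v s.1 ∧ ¬ G.Adj v t.1 := by
    intro x y p
    induction p with
    | nil => intro h hx; exact absurd h hx
    | @cons a b c hab p ih =>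
      intro ha hc
      by_cases hb : G.Adj v b.1
      · obtain ⟨s, t, hr, hst, h3, h4⟩ := ih hb hc
        exact ⟨s, t, hab.reachable.trans hr, hst, h3, h4⟩
      · exact ⟨a, b, Reachable.refl _, hab, ha, hb⟩
  obtain ⟨s, t, hs, hst, hvs, hvt⟩ := claim2 a ⟨u, huv⟩ hra.symm.some ha hu.2
  have hus := hra.trans hs
  have hut := hus.trans hst.reachable
  have hbs : ¬ G.Adj b.1 s.1 := by
    intro h
    have h' : (G.induce {v}ᶜ).Adj s b := h.symm
    exact hw ((hus.trans h'.reachable).trans hrb.symm)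
  have hbt : ¬ G.Adj b.1 t.1 := by
    intro h
    have h' : (G.induce {v}ᶜ).Adj t b := h.symm
    exact hw ((hut.trans h'.reachable).trans hrb.symm)
  rw [isCograph_iff] at hG
  exact hvt (hG b.1 v s.1 t.1 hb.symm hvs hst hbs hbt)

theorem cograph_not_both (n : ℕ) : ∀ (V : Type) [Finite V] (G : SimpleGraph V), Nat.card V = n →
    IsCograph G → G.Connected → Gᶜ.Connected → n ≤ 1 := by
  induction n with
  | zero => intros; omega
  | succ n ih =>
    intro V _ G hn hG h1 h2
    by_contra hlt
    have : Nontrivial V := by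
      rw [← Finite.one_lt_card_iff_nontrivial]; omega
    obtain ⟨v, z, hvz⟩ := exists_pair_ne V
    have hcard : Nat.card ({v}ᶜ : Set V) = n := by
      have := Set.ncard_add_ncard_compl ({v} : Set V)
      rw [Set.ncard_singleton, hn, ← Nat.card_coe_set_eq] at this
      omega
    have h3 := cograph_main hG h1 h2 v z hvz
    have h4 := cograph_main hG.compl h2 (by rwa [compl_compl]) v z hvz
    have h5 : (G.induce {v}ᶜ)ᶜ = Gᶜ.induce {v}ᶜ := by
      ext a b
      simp [compl_adj, Subtype.ext_iff]
    have h6 := ih _ (G.induce {v}ᶜ) hcard (hG.of_embedding (Embedding.induce _)) h3 (h5 ▸ h4)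
    have h7 : n = 1 := by omega
    obtain ⟨a, ha⟩ := exists_adj_of_connected h1 hvz
    obtain ⟨b, hb⟩ := exists_adj_of_connected h2 hvz
    rw [compl_adj] at hb
    have hab : a ≠ b := by rintro rfl; exact hb.2 ha
    rw [h7] at hcard
    have hsub := (Nat.card_eq_one_iff_unique.1 hcard).1
    have := congrArg Subtype.val (hsub.elim ⟨a, fun h => ha.ne h.symm⟩ ⟨b, fun h => hb.1 h.symm⟩)
    exact hab this

namespace GCls

/-- Cograph classes. -/
noncomputable def Cog (g : GCls) : Prop := lift (fun _ G => IsCograph G) g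

theorem cog_cls {V : Type} [Finite V] (G : SimpleGraph V) : Cog (cls G) ↔ IsCograph G :=
  iff_of_eq <| lift_eq _ _ _ fun _ _ e => propext
    ⟨fun h => h.of_embedding e.toEmbedding, fun h => h.of_embedding e.symm.toEmbedding⟩

theorem cog_co {g : GCls} (h : Cog g) : Cog (co g) := by
  induction g using GCls.ind with
  | h n G =>
    rw [cog_cls] at h
    rw [co_cls, cog_cls]
    exact h.compl

theorem cog_add {a b : GCls} : Cog (a + b) ↔ Cog a ∧ Cog b := by
  induction a using GCls.ind with
  | h n G =>
  induction b using GCls.ind with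
  | h m H =>
    rw [add_cls, cog_cls, cog_cls, cog_cls]
    exact ⟨fun h => ⟨h.of_embedding Embedding.sumInl, h.of_embedding Embedding.sumInr⟩,
      fun h => h.1.sum h.2⟩

theorem cog_pt : Cog pt := by
  rw [pt, cog_cls, isCograph_iff]
  simp

theorem cog_zero : Cog 0 := by
  rw [zero_def, cog_cls, isCograph_iff]
  simp

theorem not_conn_co {g : GCls} (hg : Cog g) (hc : Conn g) (hs : 2 ≤ size g) : ¬ Conn (co g) := by
  induction g using GCls.ind with
  | h n G =>
    rw [co_cls, conn_cls]
    rw [conn_cls] at hc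
    rw [cog_cls] at hg
    rw [size_cls] at hs
    intro h
    have := cograph_not_both _ _ G rfl hg hc h
    omega

end GCls

/-! ### Spectra -/

section spectra

open Matrix Polynomial

theorem det_add_ones {K n : Type*} [Field K] [Fintype n] [DecidableEq n] (A : Matrix n n K)
    (hA : A.det ≠ 0) :
    (A + Matrix.of fun _ _ => 1).det = A.det * (1 + ∑ i, ∑ j, A⁻¹ i j) := by
  have h := det_add_replicateCol_mul_replicateRow (ι := Unit) (A := A) (isUnit_iff_ne_zero.2 hA)
    (fun _ => 1) (fun _ => 1)
  have h1 : replicateCol Unit (fun _ : n => (1 : K)) * replicateRow Unit (fun _ : n => (1 : K)) =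
      Matrix.of fun _ _ => 1 := by
    ext i j
    simp [Matrix.mul_apply]
  rw [h1] at h
  rw [h]
  congr 1
  rw [det_unique]
  simp only [Matrix.add_apply, Matrix.one_apply_eq, Matrix.mul_apply, replicateRow_apply,
    replicateCol_apply, one_mul, mul_one]
  rw [Finset.sum_comm]

theorem det_block_ones_field {K m n : Type*} [Field K] [Fintype n] [DecidableEq n] [Fintype m]
    [DecidableEq m] (M : Matrix m m K) (N : Matrix n n K) (hM : M.det ≠ 0) (hN : N.det ≠ 0) :
    (fromBlocks M 0 0 N + Matrix.of fun _ _ => 1).det =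
      (M + Matrix.of fun _ _ => 1).det * N.det + M.det * (N + Matrix.of fun _ _ => 1).det
        - M.det * N.det := by
  have hd : (fromBlocks M 0 0 N).det = M.det * N.det := det_fromBlocks_zero₂₁ _ _ _
  have hinv : (fromBlocks M 0 0 N)⁻¹ = fromBlocks M⁻¹ 0 0 N⁻¹ := by
    apply inv_eq_right_inv
    rw [fromBlocks_multiply]
    simp [mul_nonsing_inv _ (isUnit_iff_ne_zero.2 hM), mul_nonsing_inv _ (isUnit_iff_ne_zero.2 hN)]
  rw [det_add_ones _ (by rw [hd]; exact mul_ne_zero hM hN), det_add_ones M hM, det_add_ones N hN,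
    hd, hinv]
  simp only [Fintype.sum_sum_type, fromBlocks_apply₁₁, fromBlocks_apply₁₂, fromBlocks_apply₂₁,
    fromBlocks_apply₂₂, Matrix.zero_apply, Finset.sum_const_zero, add_zero, zero_add]
  ring

theorem det_block_ones {R m n : Type*} [CommRing R] [IsDomain R] [Fintype n] [DecidableEq n]
    [Fintype m] [DecidableEq m] (M : Matrix m m R) (N : Matrix n n R) (hM : M.det ≠ 0)
    (hN : N.det ≠ 0) :
    (fromBlocks M 0 0 N + Matrix.of fun _ _ => 1).det =
      (M + Matrix.of fun _ _ => 1).det * N.det + M.det * (N + Matrix.of fun _ _ => 1).det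
        - M.det * N.det := by
  let φ := algebraMap R (FractionRing R)
  have hφ : Function.Injective φ := IsFractionRing.injective R (FractionRing R)
  have hM' : (φ.mapMatrix M).det ≠ 0 := by
    rw [← RingHom.map_det]; exact (map_ne_zero_iff φ hφ).2 hM
  have hN' : (φ.mapMatrix N).det ≠ 0 := by
    rw [← RingHom.map_det]; exact (map_ne_zero_iff φ hφ).2 hN
  apply hφ
  have h := det_block_ones_field _ _ hM' hN'
  have e1 : φ.mapMatrix (fromBlocks M 0 0 N + Matrix.of fun _ _ => 1) =
      fromBlocks (φ.mapMatrix M) 0 0 (φ.mapMatrix N) + Matrix.of fun _ _ => 1 := by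
    ext (i | i) (j | j) <;> simp
  have e2 : φ.mapMatrix (M + Matrix.of fun _ _ => 1) =
      φ.mapMatrix M + Matrix.of fun _ _ => 1 := by
    ext i j; simp
  have e3 : φ.mapMatrix (N + Matrix.of fun _ _ => 1) =
      φ.mapMatrix N + Matrix.of fun _ _ => 1 := by
    ext i j; simp
  rw [map_sub, map_add, map_mul, map_mul, map_mul]
  simp only [RingHom.map_det]
  rw [e1, e2, e3, h]

/-- `det (X - A + J)`. -/
noncomputable def etaPoly {V : Type} [Fintype V] [DecidableEq V] (G : SimpleGraph V) : ℝ[X] :=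
  letI := Classical.decRel G.Adj
  (charmatrix (G.adjMatrix ℝ) + Matrix.of fun _ _ => 1).det

theorem adjCharPoly_compl {V : Type} [Fintype V] [DecidableEq V] (G : SimpleGraph V) :
    adjCharPoly Gᶜ = (-1) ^ Fintype.card V * (etaPoly G).comp (-1 - X) := by
  classical
  unfold adjCharPoly etaPoly
  rw [← coe_compRingHom_apply, RingHom.map_det, ← det_neg, Matrix.charpoly]
  congr 1
  ext1 i j
  by_cases hij : i = j
  · subst hij
    simp [charmatrix_apply]
  · by_cases hadj : G.Adj i j
    · simp [charmatrix_apply, hij, adjMatrix_apply, hadj]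
    · simp [charmatrix_apply, hij, adjMatrix_apply, hadj]

theorem etaPoly_compl {V : Type} [Fintype V] [DecidableEq V] (G : SimpleGraph V) :
    etaPoly Gᶜ = (-1) ^ Fintype.card V * (adjCharPoly G).comp (-1 - X) := by
  classical
  unfold adjCharPoly etaPoly
  rw [← coe_compRingHom_apply, Matrix.charpoly, RingHom.map_det, ← det_neg]
  congr 1
  ext1 i j
  by_cases hij : i = j
  · subst hij
    simp [charmatrix_apply]
  · by_cases hadj : G.Adj i j
    · simp [charmatrix_apply, hij, adjMatrix_apply, hadj]
    · simp [charmatrix_apply, hij, adjMatrix_apply, hadj]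

theorem adjMatrix_sum {V W : Type} [DecidableEq V] [DecidableEq W] (G : SimpleGraph V)
    (H : SimpleGraph W) [DecidableRel G.Adj] [DecidableRel H.Adj] [DecidableRel (G ⊕g H).Adj] :
    (G ⊕g H).adjMatrix ℝ = fromBlocks (G.adjMatrix ℝ) 0 0 (H.adjMatrix ℝ) := by
  ext (i | i) (j | j) <;> simp [adjMatrix_apply]

theorem adjCharPoly_sum {V W : Type} [Fintype V] [DecidableEq V] [Fintype W] [DecidableEq W]
    (G : SimpleGraph V) (H : SimpleGraph W) :
    adjCharPoly (G ⊕g H) = adjCharPoly G * adjCharPoly H := by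
  classical
  unfold adjCharPoly
  have := adjMatrix_sum G H
  rw [← charpoly_fromBlocks_zero₁₂ (M₁₁ := G.adjMatrix ℝ) (M₂₁ := 0) (M₂₂ := H.adjMatrix ℝ),
    ← adjMatrix_sum G H]

theorem etaPoly_sum {V W : Type} [Fintype V] [DecidableEq V] [Fintype W] [DecidableEq W]
    (G : SimpleGraph V) (H : SimpleGraph W) :
    etaPoly (G ⊕g H) = etaPoly G * adjCharPoly H + adjCharPoly G * etaPoly H
      - adjCharPoly G * adjCharPoly H := by
  classical
  have h := det_block_ones (charmatrix (G.adjMatrix ℝ)) (charmatrix (H.adjMatrix ℝ))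
    (charpoly_monic _).ne_zero (charpoly_monic _).ne_zero
  unfold adjCharPoly etaPoly
  have e : fromBlocks (charmatrix (G.adjMatrix ℝ)) 0 0 (charmatrix (H.adjMatrix ℝ)) =
      charmatrix ((G ⊕g H).adjMatrix ℝ) := by
    rw [adjMatrix_sum, charmatrix_fromBlocks]
    simp
  rw [e] at h
  unfold Matrix.charpoly
  convert h using 2

theorem adjCharPoly_iso {V W : Type} [Fintype V] [DecidableEq V] [Fintype W] [DecidableEq W]
    {G : SimpleGraph V} {H : SimpleGraph W} (e : G ≃g H) : adjCharPoly G = adjCharPoly H := by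
  classical
  unfold adjCharPoly
  rw [← charpoly_reindex e.toEquiv]
  congr 1
  ext i j
  have : G.Adj (e.toEquiv.symm i) (e.toEquiv.symm j) ↔ H.Adj i j := e.symm.map_adj_iff
  simp [adjMatrix_apply, this]

theorem etaPoly_iso {V W : Type} [Fintype V] [DecidableEq V] [Fintype W] [DecidableEq W]
    {G : SimpleGraph V} {H : SimpleGraph W} (e : G ≃g H) : etaPoly G = etaPoly H := by
  have h1 := etaPoly_compl Gᶜ
  have h2 := etaPoly_compl Hᶜ
  rw [compl_compl] at h1 h2
  rw [h1, h2, adjCharPoly_iso (GCls.isoCompl e), Fintype.card_congr e.toEquiv]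

namespace GCls

/-- Characteristic polynomial of a class. -/
noncomputable def chi (g : GCls) : ℝ[X] := lift (fun _ G => adjCharPoly G) g

/-- `det (X - A + J)` of a class. -/
noncomputable def eta (g : GCls) : ℝ[X] := lift (fun _ G => etaPoly G) g

theorem chi_cls {V : Type} [Fintype V] [DecidableEq V] (G : SimpleGraph V) :
    chi (cls G) = adjCharPoly G := lift_eq _ _ _ fun _ _ e => (adjCharPoly_iso e).symm

theorem eta_cls {V : Type} [Fintype V] [DecidableEq V] (G : SimpleGraph V) :
    eta (cls G) = etaPoly G := lift_eq _ _ _ fun _ _ e => (etaPoly_iso e).symm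

theorem chi_co (g : GCls) : chi (co g) = (-1) ^ size g * (eta g).comp (-1 - X) := by
  induction g using GCls.ind with
  | h n G => rw [co_cls, chi_cls, eta_cls, size_cls, adjCharPoly_compl, Nat.card_eq_fintype_card]

theorem eta_co (g : GCls) : eta (co g) = (-1) ^ size g * (chi g).comp (-1 - X) := by
  induction g using GCls.ind with
  | h n G => rw [co_cls, chi_cls, eta_cls, size_cls, etaPoly_compl, Nat.card_eq_fintype_card]

theorem chi_add (a b : GCls) : chi (a + b) = chi a * chi b := by
  induction a using GCls.ind with
  | h n G =>
  induction b using GCls.ind with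
  | h m H => rw [add_cls, chi_cls, chi_cls, chi_cls, adjCharPoly_sum]

theorem eta_add (a b : GCls) :
    eta (a + b) = eta a * chi b + chi a * eta b - chi a * chi b := by
  induction a using GCls.ind with
  | h n G =>
  induction b using GCls.ind with
  | h m H => rw [add_cls, eta_cls, chi_cls, chi_cls, eta_cls, eta_cls, etaPoly_sum]

theorem chi_pt : chi pt = X := by
  rw [pt, chi_cls, adjCharPoly, Matrix.charpoly, det_unique]
  simp [charmatrix_apply]

theorem eta_pt : eta pt = X + 1 := by
  rw [pt, eta_cls, etaPoly, det_unique]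
  simp [charmatrix_apply]

/-- Generalized cospectrality of classes. -/
def GC (g h : GCls) : Prop := chi g = chi h ∧ chi (co g) = chi (co h)

theorem gc_iff {g h : GCls} (hs : size g = size h) : GC g h ↔ chi g = chi h ∧ eta g = eta h := by
  unfold GC
  refine and_congr_right fun h1 => ?_
  constructor
  · intro h2
    rw [← co_co g, ← co_co h, eta_co, eta_co, h2, size_co, size_co, hs]
  · intro h2
    rw [chi_co, chi_co, h2, hs]

theorem gc_add {g h : GCls} (k : GCls) (hs : size g = size h) (hg : GC g h) :
    GC (g + k) (h + k) := by
  rw [gc_iff hs] at hg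
  rw [gc_iff (by rw [size_add, size_add, hs]), chi_add, chi_add, eta_add, eta_add, hg.1, hg.2]
  exact ⟨rfl, rfl⟩

theorem gc_co {g h : GCls} (hg : GC g h) : GC (co g) (co h) :=
  ⟨hg.2, by rw [co_co, co_co]; exact hg.1⟩

theorem gc_cls {n : ℕ} (G H : SimpleGraph (Fin n)) :
    GC (cls G) (cls H) ↔ GenCospectral G H := by
  unfold GC GenCospectral Cospectral
  rw [co_cls, co_cls, chi_cls, chi_cls, chi_cls, chi_cls]

end GCls

end spectra

/-! ### The seed pair on 15 vertices -/

namespace GCls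

section seed

open Polynomial

/-- `Data g n p q`: `g` is a cograph on `n` vertices, with `chi g = p` and `eta g = q`. -/
def Data (g : GCls) (n : ℕ) (p q : ℝ[X]) : Prop := Cog g ∧ size g = n ∧ chi g = p ∧ eta g = q

theorem Data.add {a b : GCls} {n m : ℕ} {p q r s u v : ℝ[X]} (ha : Data a n p q)
    (hb : Data b m r s) (hu : p * r = u) (hv : q * r + p * s - p * r = v) :
    Data (a + b) (n + m) u v := by
  obtain ⟨a1, a2, a3, a4⟩ := ha
  obtain ⟨b1, b2, b3, b4⟩ := hb
  exact ⟨cog_add.2 ⟨a1, b1⟩, by rw [size_add, a2, b2], by rw [chi_add, a3, b3, hu],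
    by rw [eta_add, a3, b3, a4, b4, hv]⟩

theorem Data.co {a : GCls} {n : ℕ} {p q u v : ℝ[X]} (ha : Data a n p q)
    (hu : (-1) ^ n * q.comp (-1 - X) = u) (hv : (-1) ^ n * p.comp (-1 - X) = v) :
    Data (co a) n u v := by
  obtain ⟨a1, a2, a3, a4⟩ := ha
  exact ⟨cog_co a1, by rw [size_co, a2], by rw [chi_co, a4, a2, hu], by rw [eta_co, a3, a2, hv]⟩

theorem data_pt : Data pt 1 X (X + 1) := ⟨cog_pt, size_pt, chi_pt, eta_pt⟩

theorem seed_1 : Data (pt + pt) 2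
    (X ^ 2)
    (X ^ 2 + 2 * X) :=
  data_pt.add data_pt (by ring) (by ring)

theorem seed_2 : Data (co (pt + pt)) 2
    (X ^ 2 - 1)
    (X ^ 2 + 2 * X + 1) :=
  seed_1.co (by simp; try ring) (by simp; try ring)

theorem seed_3 : Data ((pt + pt) + pt) 3
    (X ^ 3)
    (X ^ 3 + 3 * X ^ 2) :=
  seed_1.add data_pt (by ring) (by ring)

theorem seed_4 : Data (((pt + pt) + pt) + pt) 4
    (X ^ 4)
    (X ^ 4 + 4 * X ^ 3) :=
  seed_3.add data_pt (by ring) (by ring)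

theorem seed_5 : Data (co (((pt + pt) + pt) + pt)) 4
    (X ^ 4 - 6 * X ^ 2 - 8 * X - 3)
    (X ^ 4 + 4 * X ^ 3 + 6 * X ^ 2 + 4 * X + 1) :=
  seed_4.co (by simp; try ring) (by simp; try ring)

theorem seed_6 : Data (co (pt + pt) + pt) 3
    (X ^ 3 - X)
    (X ^ 3 + 3 * X ^ 2 + X - 1) :=
  seed_2.add data_pt (by ring) (by ring)

theorem seed_7 : Data (co (co (pt + pt) + pt)) 3
    (X ^ 3 - 2 * X)
    (X ^ 3 + 3 * X ^ 2 + 2 * X) :=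
  seed_6.co (by simp; try ring) (by simp; try ring)

theorem seed_8 : Data (co (((pt + pt) + pt) + pt) + co (pt + pt)) 6
    (X ^ 6 - 7 * X ^ 4 - 8 * X ^ 3 + 3 * X ^ 2 + 8 * X + 3)
    (X ^ 6 + 6 * X ^ 5 + 7 * X ^ 4 - 12 * X ^ 3 - 33 * X ^ 2 - 26 * X - 7) :=
  seed_5.add seed_2 (by ring) (by ring)

theorem seed_9 : Data ((co (((pt + pt) + pt) + pt) + co (pt + pt)) + pt) 7
    (X ^ 7 - 7 * X ^ 5 - 8 * X ^ 4 + 3 * X ^ 3 + 8 * X ^ 2 + 3 * X)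
    (X ^ 7 + 7 * X ^ 6 + 7 * X ^ 5 - 19 * X ^ 4 - 41 * X ^ 3 - 23 * X ^ 2 + X + 3) :=
  seed_8.add data_pt (by ring) (by ring)

theorem seed_10 : Data (co ((co (((pt + pt) + pt) + pt) + co (pt + pt)) + pt)) 7
    (X ^ 7 - 14 * X ^ 5 - 16 * X ^ 4)
    (X ^ 7 + 7 * X ^ 6 + 14 * X ^ 5 + 8 * X ^ 4) :=
  seed_9.co (by simp; try ring) (by simp; try ring)

theorem seed_11 : Data (co ((co (((pt + pt) + pt) + pt) + co (pt + pt)) + pt) + co (co (pt + pt) + pt)) 10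
    (X ^ 10 - 16 * X ^ 8 - 16 * X ^ 7 + 28 * X ^ 6 + 32 * X ^ 5)
    (X ^ 10 + 10 * X ^ 9 + 16 * X ^ 8 - 48 * X ^ 7 - 132 * X ^ 6 - 80 * X ^ 5) :=
  seed_10.add seed_7 (by ring) (by ring)

theorem seed_12 : Data (co (co ((co (((pt + pt) + pt) + pt) + co (pt + pt)) + pt) + co (co (pt + pt) + pt))) 10
    (X ^ 10 - 29 * X ^ 8 - 64 * X ^ 7 + 22 * X ^ 6 + 184 * X ^ 5 + 170 * X ^ 4 + 16 * X ^ 3 - 39 * X ^ 2 - 8 * X + 3)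
    (X ^ 10 + 10 * X ^ 9 + 29 * X ^ 8 + 8 * X ^ 7 - 98 * X ^ 6 - 172 * X ^ 5 - 90 * X ^ 4 + 24 * X ^ 3 + 33 * X ^ 2 + 2 * X - 3) :=
  seed_11.co (by simp; try ring) (by simp; try ring)

theorem seed_13 : Data (co (co ((co (((pt + pt) + pt) + pt) + co (pt + pt)) + pt) + co (co (pt + pt) + pt)) + pt) 11
    (X ^ 11 - 29 * X ^ 9 - 64 * X ^ 8 + 22 * X ^ 7 + 184 * X ^ 6 + 170 * X ^ 5 + 16 * X ^ 4 - 39 * X ^ 3 - 8 * X ^ 2 + 3 * X)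
    (X ^ 11 + 11 * X ^ 10 + 29 * X ^ 9 - 21 * X ^ 8 - 162 * X ^ 7 - 150 * X ^ 6 + 94 * X ^ 5 + 194 * X ^ 4 + 49 * X ^ 3 - 37 * X ^ 2 - 11 * X + 3) :=
  seed_12.add data_pt (by ring) (by ring)

theorem seed_14 : Data (co (co (co ((co (((pt + pt) + pt) + pt) + co (pt + pt)) + pt) + co (co (pt + pt) + pt)) + pt)) 11
    (X ^ 11 - 26 * X ^ 9 - 48 * X ^ 8 + 60 * X ^ 7 + 192 * X ^ 6 + 112 * X ^ 5)
    (X ^ 11 + 11 * X ^ 10 + 26 * X ^ 9 - 32 * X ^ 8 - 180 * X ^ 7 - 212 * X ^ 6 - 80 * X ^ 5) :=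
  seed_13.co (by simp; try ring) (by simp; try ring)

theorem seed_15 : Data (co (pt + pt) + co (pt + pt)) 4
    (X ^ 4 - 2 * X ^ 2 + 1)
    (X ^ 4 + 4 * X ^ 3 + 2 * X ^ 2 - 4 * X - 3) :=
  seed_2.add seed_2 (by ring) (by ring)

theorem seed_16 : Data (co (co (pt + pt) + co (pt + pt))) 4
    (X ^ 4 - 4 * X ^ 2)
    (X ^ 4 + 4 * X ^ 3 + 4 * X ^ 2) :=
  seed_15.co (by simp; try ring) (by simp; try ring)

theorem seed_17 : Data (co (co (co ((co (((pt + pt) + pt) + pt) + co (pt + pt)) + pt) + co (co (pt + pt) + pt)) + pt) + co (co (pt + pt) + co (pt + pt))) 15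
    (X ^ 15 - 30 * X ^ 13 - 48 * X ^ 12 + 164 * X ^ 11 + 384 * X ^ 10 - 128 * X ^ 9 - 768 * X ^ 8 - 448 * X ^ 7)
    (X ^ 15 + 15 * X ^ 14 + 30 * X ^ 13 - 180 * X ^ 12 - 684 * X ^ 11 - 228 * X ^ 10 + 1888 * X ^ 9 + 2832 * X ^ 8 + 1216 * X ^ 7) :=
  seed_14.add seed_16 (by ring) (by ring)

theorem seed_18 : Data (co (co (co (co ((co (((pt + pt) + pt) + pt) + co (pt + pt)) + pt) + co (co (pt + pt) + pt)) + pt) + co (co (pt + pt) + co (pt + pt)))) 15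
    (X ^ 15 - 75 * X ^ 13 - 340 * X ^ 12 - 279 * X ^ 11 + 1152 * X ^ 10 + 2573 * X ^ 9 + 660 * X ^ 8 - 2837 * X ^ 7 - 2560 * X ^ 6 + 423 * X ^ 5 + 1268 * X ^ 4 + 235 * X ^ 3 - 192 * X ^ 2 - 41 * X + 12)
    (X ^ 15 + 15 * X ^ 14 + 75 * X ^ 13 + 113 * X ^ 12 - 235 * X ^ 11 - 989 * X ^ 10 - 833 * X ^ 9 + 981 * X ^ 8 + 2099 * X ^ 7 + 621 * X ^ 6 - 1119 * X ^ 5 - 893 * X ^ 4 - 9 * X ^ 3 + 161 * X ^ 2 + 21 * X - 9) :=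
  seed_17.co (by simp; try ring) (by simp; try ring)

theorem seed_19 : Data ((co (pt + pt) + co (pt + pt)) + pt) 5
    (X ^ 5 - 2 * X ^ 3 + X)
    (X ^ 5 + 5 * X ^ 4 + 2 * X ^ 3 - 6 * X ^ 2 - 3 * X + 1) :=
  seed_15.add data_pt (by ring) (by ring)

theorem seed_20 : Data (co ((co (pt + pt) + co (pt + pt)) + pt)) 5
    (X ^ 5 - 8 * X ^ 3 - 8 * X ^ 2)
    (X ^ 5 + 5 * X ^ 4 + 8 * X ^ 3 + 4 * X ^ 2) :=
  seed_19.co (by simp; try ring) (by simp; try ring)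

theorem seed_21 : Data (co ((co (pt + pt) + co (pt + pt)) + pt) + co (co (pt + pt) + pt)) 8
    (X ^ 8 - 10 * X ^ 6 - 8 * X ^ 5 + 16 * X ^ 4 + 16 * X ^ 3)
    (X ^ 8 + 8 * X ^ 7 + 10 * X ^ 6 - 30 * X ^ 5 - 72 * X ^ 4 - 40 * X ^ 3) :=
  seed_20.add seed_7 (by ring) (by ring)

theorem seed_22 : Data (co (co ((co (pt + pt) + co (pt + pt)) + pt) + co (co (pt + pt) + pt))) 8
    (X ^ 8 - 18 * X ^ 6 - 22 * X ^ 5 + 18 * X ^ 4 + 28 * X ^ 3 - 2 * X ^ 2 - 6 * X + 1)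
    (X ^ 8 + 8 * X ^ 7 + 18 * X ^ 6 + 4 * X ^ 5 - 24 * X ^ 4 - 16 * X ^ 3 + 6 * X ^ 2 + 4 * X - 1) :=
  seed_21.co (by simp; try ring) (by simp; try ring)

theorem seed_23 : Data (co (co ((co (pt + pt) + co (pt + pt)) + pt) + co (co (pt + pt) + pt)) + co (pt + pt)) 10
    (X ^ 10 - 19 * X ^ 8 - 22 * X ^ 7 + 36 * X ^ 6 + 50 * X ^ 5 - 20 * X ^ 4 - 34 * X ^ 3 + 3 * X ^ 2 + 6 * X - 1)
    (X ^ 10 + 10 * X ^ 9 + 19 * X ^ 8 - 40 * X ^ 7 - 122 * X ^ 6 - 28 * X ^ 5 + 122 * X ^ 4 + 72 * X ^ 3 - 23 * X ^ 2 - 14 * X + 3) :=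
  seed_22.add seed_2 (by ring) (by ring)

theorem seed_24 : Data (co (co (co ((co (pt + pt) + co (pt + pt)) + pt) + co (co (pt + pt) + pt)) + co (pt + pt))) 10
    (X ^ 10 - 26 * X ^ 8 - 48 * X ^ 7 + 60 * X ^ 6 + 192 * X ^ 5 + 112 * X ^ 4)
    (X ^ 10 + 10 * X ^ 9 + 26 * X ^ 8 - 10 * X ^ 7 - 132 * X ^ 6 - 184 * X ^ 5 - 80 * X ^ 4) :=
  seed_23.co (by simp; try ring) (by simp; try ring)

theorem seed_25 : Data (co (((pt + pt) + pt) + pt) + pt) 5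
    (X ^ 5 - 6 * X ^ 3 - 8 * X ^ 2 - 3 * X)
    (X ^ 5 + 5 * X ^ 4 + 6 * X ^ 3 - 2 * X ^ 2 - 7 * X - 3) :=
  seed_5.add data_pt (by ring) (by ring)

theorem seed_26 : Data (co (co (((pt + pt) + pt) + pt) + pt)) 5
    (X ^ 5 - 4 * X ^ 3)
    (X ^ 5 + 5 * X ^ 4 + 4 * X ^ 3) :=
  seed_25.co (by simp; try ring) (by simp; try ring)

theorem seed_27 : Data (co (co (co ((co (pt + pt) + co (pt + pt)) + pt) + co (co (pt + pt) + pt)) + co (pt + pt)) + co (co (((pt + pt) + pt) + pt) + pt)) 15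
    (X ^ 15 - 30 * X ^ 13 - 48 * X ^ 12 + 164 * X ^ 11 + 384 * X ^ 10 - 128 * X ^ 9 - 768 * X ^ 8 - 448 * X ^ 7)
    (X ^ 15 + 15 * X ^ 14 + 30 * X ^ 13 - 180 * X ^ 12 - 684 * X ^ 11 - 228 * X ^ 10 + 1888 * X ^ 9 + 2832 * X ^ 8 + 1216 * X ^ 7) :=
  seed_24.add seed_26 (by ring) (by ring)

theorem seed_28 : Data (co (co (co (co ((co (pt + pt) + co (pt + pt)) + pt) + co (co (pt + pt) + pt)) + co (pt + pt)) + co (co (((pt + pt) + pt) + pt) + pt))) 15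
    (X ^ 15 - 75 * X ^ 13 - 340 * X ^ 12 - 279 * X ^ 11 + 1152 * X ^ 10 + 2573 * X ^ 9 + 660 * X ^ 8 - 2837 * X ^ 7 - 2560 * X ^ 6 + 423 * X ^ 5 + 1268 * X ^ 4 + 235 * X ^ 3 - 192 * X ^ 2 - 41 * X + 12)
    (X ^ 15 + 15 * X ^ 14 + 75 * X ^ 13 + 113 * X ^ 12 - 235 * X ^ 11 - 989 * X ^ 10 - 833 * X ^ 9 + 981 * X ^ 8 + 2099 * X ^ 7 + 621 * X ^ 6 - 1119 * X ^ 5 - 893 * X ^ 4 - 9 * X ^ 3 + 161 * X ^ 2 + 21 * X - 9) :=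
  seed_27.co (by simp; try ring) (by simp; try ring)

theorem conn_co_add {a b : GCls} (ha : a ≠ 0) (hb : b ≠ 0) : Conn (co (a + b)) := by
  have h0 : a + b ≠ 0 := by
    intro h
    rw [← size_eq_zero, size_add] at h
    exact ha ((size_eq_zero a).1 (by omega))
  exact (conn_or_co h0).resolve_left (not_conn_add ha hb)

theorem ne_zero_of_size {a : GCls} (h : 0 < size a) : a ≠ 0 := by
  intro h'
  rw [← size_eq_zero] at h'
  omega

theorem seed_ne (a b c d a' b' c' d' : GCls) (ha : 0 < size a) (hb : 0 < size b) (hc : 0 < size c)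
    (hd : 0 < size d) (ha' : 0 < size a') (hb' : 0 < size b') (hc' : 0 < size c')
    (hd' : 0 < size d') (h1 : size a + size b ≠ size a' + size b')
    (h2 : size a + size b ≠ size c' + size d') :
    co (co (a + b) + co (c + d)) ≠ co (co (a' + b') + co (c' + d')) := by
  intro h
  have h := congrArg comps (by rw [← co_co (co (a + b) + co (c + d)), h, co_co] :
    co (a + b) + co (c + d) = co (a' + b') + co (c' + d'))
  rw [comps_add, comps_add, comps_conn (conn_co_add (ne_zero_of_size ha) (ne_zero_of_size hb)),
    comps_conn (conn_co_add (ne_zero_of_size hc) (ne_zero_of_size hd)),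
    comps_conn (conn_co_add (ne_zero_of_size ha') (ne_zero_of_size hb')),
    comps_conn (conn_co_add (ne_zero_of_size hc') (ne_zero_of_size hd'))] at h
  have h3 : co (a + b) ∈ ({co (a' + b')} + {co (c' + d')} : Multiset GCls) := by
    rw [← h]; simp
  rw [Multiset.mem_add, Multiset.mem_singleton, Multiset.mem_singleton] at h3
  rcases h3 with h3 | h3
  · have := congrArg size h3
    rw [size_co, size_co, size_add, size_add] at this
    exact h1 this
  · have := congrArg size h3
    rw [size_co, size_co, size_add, size_add] at this
    exact h2 this

theorem exists_seed : ∃ f h : GCls, Cog f ∧ Cog h ∧ size f = 15 ∧ size h = 15 ∧ GC f h ∧ f ≠ h := by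
  obtain ⟨a1, a2, a3, a4⟩ := seed_18
  obtain ⟨b1, b2, b3, b4⟩ := seed_28
  refine ⟨_, _, a1, b1, a2, b2, (gc_iff (a2.trans b2.symm)).2 ⟨a3.trans b3.symm, a4.trans b4.symm⟩,
    seed_ne _ _ _ _ _ _ _ _ ?_ ?_ ?_ ?_ ?_ ?_ ?_ ?_ ?_ ?_⟩ <;>
  simp only [size_add, size_co, size_pt] <;> norm_num

end seed

end GCls

/-! ### The numerical argument -/

namespace NumArg

open Finset Filter

/-- Index set of the recursion. -/
def E (n : ℕ) : Finset (ℕ × ℕ) :=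
  (range n ×ˢ range n).filter fun p => 1 ≤ p.1 ∧ p.1 ∣ n - p.2

theorem mem_E {n : ℕ} {p : ℕ × ℕ} : p ∈ E n ↔ p.1 < n ∧ p.2 < n ∧ 1 ≤ p.1 ∧ p.1 ∣ n - p.2 := by
  simp [E, and_assoc]

/-- Numerical hypotheses. -/
structure Num (m : ℕ) (t c r : ℕ → ℝ) : Prop where
  hm : 2 ≤ m
  c0 : c 0 = 1
  c1 : c 1 = 1
  t1 : t 1 = 1
  c2 : ∀ n, 2 ≤ n → c n = 2 * t n
  tc : ∀ n, 1 ≤ n → c n ≤ t (n + 1)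
  r0 : ∀ n, 0 ≤ r n
  r1 : ∀ n, r n ≤ 1
  rlt : ∀ n, m ≤ n → r n < 1
  sum_eq : ∀ n, 2 ≤ n → ∑ p ∈ E n, (p.1 : ℝ) * t p.1 * c p.2 = n * t n
  sum_le : ∀ n, 2 ≤ n → n * t n * r n ≤ ∑ p ∈ E n, (p.1 : ℝ) * t p.1 * c p.2 * (r p.1 * r p.2)

variable {m : ℕ} {t c r : ℕ → ℝ}

theorem Num.t_double (h : Num m t c r) (n : ℕ) (hn : 2 ≤ n) : 2 * t n ≤ t (n + 1) := by
  rw [← h.c2 n hn]; exact h.tc n (by omega)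

theorem Num.t_pow (h : Num m t c r) (n : ℕ) : (2 : ℝ) ^ n ≤ t (n + 2) := by
  induction n with
  | zero => have := h.tc 1 le_rfl; rw [h.c1] at this; simpa using this
  | succ n ih => have := h.t_double (n + 2) (by omega); rw [pow_succ]; linarith

theorem Num.t_one (h : Num m t c r) (n : ℕ) (hn : 1 ≤ n) : 1 ≤ t n := by
  rcases Nat.lt_or_ge n 2 with h2 | h2
  · obtain rfl : n = 1 := by omega
    rw [h.t1]
  · obtain ⟨k, rfl⟩ := Nat.exists_eq_add_of_le h2
    have := h.t_pow k
    rw [add_comm]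
    exact le_trans (one_le_pow₀ (by norm_num)) this

theorem Num.t_succ (h : Num m t c r) (n : ℕ) (hn : 1 ≤ n) : t n ≤ t (n + 1) := by
  rcases Nat.lt_or_ge n 2 with h2 | h2
  · obtain rfl : n = 1 := by omega
    rw [h.t1]; exact h.t_one 2 (by omega)
  · have := h.t_double n h2
    have := h.t_one n hn
    linarith

theorem Num.t_mono (h : Num m t c r) {k n : ℕ} (hk : 1 ≤ k) (hn : k ≤ n) : t k ≤ t n := by
  induction n, hn using Nat.le_induction with
  | base => exact le_rfl
  | succ n hn ih => exact ih.trans (h.t_succ n (by omega))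

theorem Num.c_one (h : Num m t c r) (n : ℕ) : 1 ≤ c n := by
  rcases Nat.lt_or_ge n 2 with h2 | h2
  · interval_cases n
    · rw [h.c0]
    · rw [h.c1]
  · rw [h.c2 n h2]
    have := h.t_one n (by omega)
    linarith

theorem Num.c_le (h : Num m t c r) {k n : ℕ} (hk : k ≤ n) (hn : 1 ≤ n) : c k ≤ 2 * t n := by
  have h1 := h.t_one n hn
  rcases Nat.lt_or_ge k 2 with h2 | h2
  · interval_cases k
    · rw [h.c0]; linarith
    · rw [h.c1]; linarith
  · rw [h.c2 k h2]
    have := h.t_mono (k := k) (by omega) hk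
    linarith

theorem Num.w_nonneg (h : Num m t c r) {n : ℕ} {p : ℕ × ℕ} (hp : p ∈ E n) :
    0 ≤ (p.1 : ℝ) * t p.1 * c p.2 := by
  rw [mem_E] at hp
  have := h.t_one p.1 hp.2.2.1
  have := h.c_one p.2
  positivity

theorem Num.sum_t (h : Num m t c r) (n : ℕ) (hn : 1 ≤ n) : ∑ s ∈ Icc 1 n, t s ≤ 2 * t n := by
  induction n, hn using Nat.le_induction with
  | base => simp [h.t1]
  | succ n hn ih =>
    rw [Finset.sum_Icc_succ_top (by omega)]
    rcases Nat.lt_or_ge n 2 with h2 | h2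
    · obtain rfl : n = 1 := by omega
      have := h.t_one 2 (by omega)
      simp [h.t1]
      linarith
    · have := h.t_double n h2
      linarith

theorem Num.large (h : Num m t c r) (C : ℝ) : ∀ᶠ n : ℕ in atTop, C * n ≤ t n := by
  have h1 : Tendsto (fun n : ℕ => (n : ℝ) ^ 1 / 2 ^ n) atTop (nhds 0) :=
    tendsto_pow_const_div_const_pow_of_one_lt 1 (by norm_num)
  have h2 : ∀ᶠ n : ℕ in atTop, (n : ℝ) ^ 1 / 2 ^ n < 1 / (4 * (|C| + 1)) :=
    h1.eventually_lt_const (by positivity)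
  filter_upwards [h2, eventually_ge_atTop 2] with n hn hn2
  obtain ⟨k, rfl⟩ := Nat.exists_eq_add_of_le hn2
  have h3 := h.t_pow k
  rw [div_lt_div_iff₀ (by positivity) (by positivity), pow_add] at hn
  have h4 : C * ((2 + k : ℕ) : ℝ) ≤ (|C| + 1) * ((2 + k : ℕ) : ℝ) := by
    gcongr
    linarith [le_abs_self C]
  rw [add_comm k 2] at h3
  nlinarith

/-- Total weight of the pairs below `K`. -/
noncomputable def kap (t c : ℕ → ℝ) (K : ℕ) : ℝ :=
  ∑ p ∈ range K ×ˢ range K, |(p.1 : ℝ) * t p.1 * c p.2|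

theorem kap_nonneg (K : ℕ) : 0 ≤ kap t c K := sum_nonneg fun _ _ => abs_nonneg _

theorem Num.sum_small (h : Num m t c r) (K n : ℕ) :
    ∑ p ∈ E n, (p.1 : ℝ) * t p.1 * c p.2 * (if p.1 < K ∧ p.2 < K then 1 else 0) ≤ kap t c K := by
  simp only [mul_ite, mul_one, mul_zero]
  rw [← sum_filter]
  calc _ ≤ ∑ p ∈ (E n).filter (fun p => p.1 < K ∧ p.2 < K), |(p.1 : ℝ) * t p.1 * c p.2| :=
        sum_le_sum fun _ _ => le_abs_self _
    _ ≤ _ := by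
        apply sum_le_sum_of_subset_of_nonneg
        · intro p hp
          simpa using (mem_filter.1 hp).2
        · intros; exact abs_nonneg _

/-- The main averaging inequality. -/
theorem Num.gain (h : Num m t c r) {n K : ℕ} (hn : 2 ≤ n) {R γ θ : ℝ} (hR : 0 ≤ R) (hγ : 0 ≤ γ)
    (hK : ∀ s, K ≤ s → r s ≤ R) (G : ℕ × ℕ → Prop) [DecidablePred G]
    (hG : ∀ p ∈ E n, G p → ¬ (p.1 < K ∧ p.2 < K) → r p.1 * r p.2 ≤ R * (1 - γ))
    (hγ1 : γ ≤ 1)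
    (hW : θ * (n * t n) ≤ ∑ p ∈ (E n).filter G, (p.1 : ℝ) * t p.1 * c p.2) :
    r n ≤ R * (1 - γ * θ) + kap t c K / (n * t n) := by
  have hpos : 0 < n * t n := by
    have := h.t_one n (by omega)
    positivity
  have h1 := h.sum_le n hn
  have h2 : ∑ p ∈ E n, (p.1 : ℝ) * t p.1 * c p.2 * (r p.1 * r p.2) ≤
      ∑ p ∈ E n, ((p.1 : ℝ) * t p.1 * c p.2 * R
        + (p.1 : ℝ) * t p.1 * c p.2 * (if p.1 < K ∧ p.2 < K then 1 else 0)
        - (if G p then (p.1 : ℝ) * t p.1 * c p.2 else 0) * (R * γ)) := by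
    apply sum_le_sum
    intro p hp
    have hw := h.w_nonneg hp
    have e : (if G p then (p.1 : ℝ) * t p.1 * c p.2 else 0) =
      (p.1 : ℝ) * t p.1 * c p.2 * (if G p then 1 else 0) := by split_ifs <;> simp
    rw [e, mul_assoc _ _ (R * γ), ← mul_add, ← mul_sub]
    apply mul_le_mul_of_nonneg_left _ hw
    have q0 := h.r0 p.1
    have q1 := h.r1 p.1
    have q2 := h.r0 p.2
    have q3 := h.r1 p.2
    have hRγ : R * γ ≤ R := mul_le_of_le_one_right hR hγ1
    by_cases hs : p.1 < K ∧ p.2 < K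
    · have : r p.1 * r p.2 ≤ 1 := mul_le_one₀ q1 q2 q3
      rw [if_pos hs]
      split_ifs <;> nlinarith
    · rw [if_neg hs]
      by_cases hg : G p
      · rw [if_pos hg]
        have := hG p hp hg hs
        linarith
      · rw [if_neg hg]
        rcases Nat.lt_or_ge p.1 K with hk | hk
        · have := hK p.2 (by omega)
          nlinarith
        · have := hK p.1 hk
          nlinarith
  rw [sum_sub_distrib, sum_add_distrib, ← sum_mul, ← sum_mul, ← sum_filter, h.sum_eq n hn] at h2
  have h3 := h.sum_small K n
  have h4 := mul_le_mul_of_nonneg_right hW (mul_nonneg hR hγ)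
  have h5 : n * t n * r n ≤ n * t n * (R * (1 - γ * θ)) + kap t c K := by linarith
  rw [← sub_le_iff_le_add', le_div_iff₀ hpos]
  linarith

theorem Num.stage1 (h : Num m t c r) : ∃ β, 0 < β ∧ β ≤ 1 ∧ ∀ n, m ≤ n → r n ≤ 1 - β := by
  have hm := h.hm
  -- finite minimum
  have hfin : ∀ N, ∃ β, 0 < β ∧ β ≤ 1 ∧ ∀ n, m ≤ n → n ≤ N → r n ≤ 1 - β := by
    intro N
    induction N with
    | zero => exact ⟨1, by norm_num, le_rfl, fun n h1 h2 => by omega⟩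
    | succ N ih =>
      obtain ⟨β, hβ, hβ1, hb⟩ := ih
      by_cases hN : m ≤ N + 1
      · have := h.rlt _ hN
        refine ⟨min β (1 - r (N + 1)), lt_min hβ (by linarith), (min_le_left _ _).trans hβ1, ?_⟩
        intro n hn hn2
        rcases Nat.lt_or_ge N n with h3 | h3
        · obtain rfl : n = N + 1 := by omega
          linarith [min_le_right β (1 - r (N + 1))]
        · linarith [min_le_left β (1 - r (N + 1)), hb n hn h3]
      · exact ⟨β, hβ, hβ1, fun n h1 h2 => by omega⟩
  obtain ⟨N0, hN0⟩ := eventually_atTop.1 (h.large (kap t c m))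
  set N := max N0 m with hN
  obtain ⟨β, hβ, hβ1, hb⟩ := hfin N
  have key : ∀ n, N ≤ n → ∀ j, m ≤ j → j ≤ n → r j ≤ 1 - β / 2 * (1 + 1 / n) := by
    intro n hn
    have hm0 : m ≤ N := le_max_right _ _
    induction n, hn using Nat.le_induction with
    | base =>
      intro j h1 h2
      have := hb j h1 h2
      have h3 : (1 : ℝ) / N ≤ 1 := by
        rw [div_le_one (by norm_cast; omega)]
        norm_cast; omega
      nlinarith
    | succ n hn ih =>
      have hn0 : (0 : ℝ) < n := by norm_cast; omega
      have hn1 : (2 : ℝ) ≤ n := by norm_cast; omega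
      intro j h1 h2
      rcases Nat.lt_or_ge n j with h3 | h3
      · obtain rfl : j = n + 1 := by omega
        set D := β / 2 * (1 + 1 / (n : ℝ)) with hD
        have hD0 : 0 ≤ D := by positivity
        have hD1 : D ≤ 1 := by
          have : 1 / (n : ℝ) ≤ 1 := by rw [div_le_one hn0]; linarith
          nlinarith
        have hg := h.sum_le (n + 1) (by omega)
        have hpos : 0 < ((n + 1 : ℕ) : ℝ) * t (n + 1) := by
          have := h.t_one (n + 1) (by omega)
          positivity
        have h4 : ∑ p ∈ E (n + 1), (p.1 : ℝ) * t p.1 * c p.2 * (r p.1 * r p.2) ≤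
          ∑ p ∈ E (n + 1), ((p.1 : ℝ) * t p.1 * c p.2 * (1 - D) +
            (p.1 : ℝ) * t p.1 * c p.2 * (if p.1 < m ∧ p.2 < m then 1 else 0) * D) := by
          apply sum_le_sum
          intro p hp
          have hw := h.w_nonneg hp
          rw [mul_assoc _ _ D, ← mul_add]
          apply mul_le_mul_of_nonneg_left _ hw
          have q0 := h.r0 p.1
          have q1 := h.r1 p.1
          have q2 := h.r0 p.2
          have q3 := h.r1 p.2
          rw [mem_E] at hp
          by_cases hs : p.1 < m ∧ p.2 < m
          · rw [if_pos hs]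
            have : r p.1 * r p.2 ≤ 1 := mul_le_one₀ q1 q2 q3
            linarith
          · rw [if_neg hs]
            rcases Nat.lt_or_ge p.1 m with hk | hk
            · have := ih p.2 (by omega) (by omega)
              nlinarith
            · have := ih p.1 (by omega) (by omega)
              nlinarith
        rw [sum_add_distrib, ← sum_mul, ← sum_mul, h.sum_eq (n + 1) (by omega)] at h4
        have h5 := mul_le_mul_of_nonneg_right (h.sum_small m (n + 1)) hD0
        have h6 := hN0 (n + 1) (by have := le_max_left N0 m; omega)
        -- kap ≤ (n+1) t / (n+1)^2
        have h7 : kap t c m ≤ ((n + 1 : ℕ) : ℝ) * t (n + 1) * (1 / ((n + 1 : ℕ) : ℝ) ^ 2) := by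
          have : (0 : ℝ) < ((n + 1 : ℕ) : ℝ) := by positivity
          have e : ((n + 1 : ℕ) : ℝ) * t (n + 1) * (1 / ((n + 1 : ℕ) : ℝ) ^ 2) =
            t (n + 1) / ((n + 1 : ℕ) : ℝ) := by field_simp
          rw [e, le_div_iff₀ this]
          exact h6
        have h8 := mul_le_mul_of_nonneg_right h7 hD0
        have h9 : ((n + 1 : ℕ) : ℝ) * t (n + 1) * r (n + 1) ≤
          ((n + 1 : ℕ) : ℝ) * t (n + 1) * (1 - D + 1 / ((n + 1 : ℕ) : ℝ) ^ 2 * D) := by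
          linarith
        have h10 := le_of_mul_le_mul_left h9 hpos
        refine h10.trans (le_of_eq ?_)
        rw [hD]
        push_cast
        field_simp
        ring
      · have := ih j h1 h3
        have h5 : 1 / ((n + 1 : ℕ) : ℝ) ≤ 1 / n := by
          apply one_div_le_one_div_of_le hn0
          push_cast; linarith
        nlinarith
  refine ⟨β / 2, by linarith, by linarith, fun n hn => ?_⟩
  have h1 := key (max n N) (le_max_right _ _) n hn (le_max_left _ _)
  have h2 : 0 ≤ 1 / ((max n N : ℕ) : ℝ) := by positivity
  nlinarith

theorem chain (t : ℕ → ℝ) (n : ℕ) (η : ℝ) (hη : 0 ≤ η) (m : ℕ) : η ^ m * t n ≤ t (n - m) ∨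
    ∃ j < m, η ^ j * t n ≤ t (n - j) ∧ t (n - j - 1) < η * t (n - j) := by
  induction m with
  | zero => left; simp
  | succ m ih =>
    rcases ih with h | ⟨j, hj, h⟩
    · by_cases h2 : t (n - m - 1) < η * t (n - m)
      · exact Or.inr ⟨m, by omega, h, h2⟩
      · left
        rw [show n - (m + 1) = n - m - 1 by omega, pow_succ]
        nlinarith [mul_le_mul_of_nonneg_left h hη]
    · exact Or.inr ⟨j, by omega, h⟩

/-- Constant bounding the boundary terms. -/
noncomputable def bnd (t c : ℕ → ℝ) (m : ℕ) : ℝ :=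
  ∑ s ∈ range m, |(s : ℝ) * t s| * 2 + ∑ k ∈ range m, |c k| * 2

theorem Num.boundary (h : Num m t c r) (n : ℕ) (hn : 2 ≤ n) :
    ∑ p ∈ (E n).filter (fun p => ¬ (m ≤ p.1 ∧ m ≤ p.2)), (p.1 : ℝ) * t p.1 * c p.2 ≤
      bnd t c m * (n * t (n - 1)) := by
  have ht := h.t_one (n - 1) (by omega)
  have hsub : (E n).filter (fun p => ¬ (m ≤ p.1 ∧ m ≤ p.2)) ⊆
      (range m ×ˢ range n) ∪ (Icc 1 (n - 1) ×ˢ range m) := by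
    intro p hp
    rw [mem_filter, mem_E] at hp
    simp only [mem_union, mem_product, mem_range, mem_Icc]
    omega
  calc _ ≤ ∑ p ∈ (E n).filter (fun p => ¬ (m ≤ p.1 ∧ m ≤ p.2)), |(p.1 : ℝ) * t p.1 * c p.2| :=
        sum_le_sum fun _ _ => le_abs_self _
    _ ≤ ∑ p ∈ (range m ×ˢ range n) ∪ (Icc 1 (n - 1) ×ˢ range m), |(p.1 : ℝ) * t p.1 * c p.2| :=
        sum_le_sum_of_subset_of_nonneg hsub fun _ _ _ => abs_nonneg _
    _ ≤ ∑ p ∈ (range m ×ˢ range n), |(p.1 : ℝ) * t p.1 * c p.2| +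
        ∑ p ∈ (Icc 1 (n - 1) ×ˢ range m), |(p.1 : ℝ) * t p.1 * c p.2| := by
        rw [← sum_union_inter]
        exact le_add_of_nonneg_right (sum_nonneg fun _ _ => abs_nonneg _)
    _ ≤ (∑ s ∈ range m, |(s : ℝ) * t s| * 2) * (n * t (n - 1)) +
        (∑ k ∈ range m, |c k| * 2) * (n * t (n - 1)) := by
        apply add_le_add
        · rw [sum_product, sum_mul]
          apply sum_le_sum
          intro s _
          calc ∑ k ∈ range n, |(s : ℝ) * t s * c k| ≤
              ∑ k ∈ range n, |(s : ℝ) * t s| * (2 * t (n - 1)) := by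
                apply sum_le_sum
                intro k hk
                rw [mem_range] at hk
                rw [abs_mul, abs_of_nonneg (by linarith [h.c_one k] : 0 ≤ c k)]
                exact mul_le_mul_of_nonneg_left (h.c_le (by omega) (by omega)) (abs_nonneg _)
            _ = _ := by
                rw [sum_const, card_range, nsmul_eq_mul]; ring
        · rw [sum_product_right, sum_mul]
          apply sum_le_sum
          intro k _
          calc ∑ s ∈ Icc 1 (n - 1), |(s : ℝ) * t s * c k| ≤
              ∑ s ∈ Icc 1 (n - 1), t s * (n * |c k|) := by
                apply sum_le_sum
                intro s hs
                rw [mem_Icc] at hs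
                have h1 := h.t_one s hs.1
                rw [abs_mul, abs_mul, abs_of_nonneg (by linarith : 0 ≤ t s), Nat.abs_cast]
                have : (s : ℝ) ≤ n := by norm_cast; omega
                have h3 := mul_le_mul_of_nonneg_right this
                  (mul_nonneg (by linarith : 0 ≤ t s) (abs_nonneg (c k)))
                linarith
            _ ≤ 2 * t (n - 1) * (n * |c k|) := by
                rw [← sum_mul]
                exact mul_le_mul_of_nonneg_right (h.sum_t (n - 1) (by omega)) (by positivity)
            _ = _ := by ring
    _ = _ := by rw [bnd]; ring

theorem Num.stage2 (h : Num m t c r) : ∃ δ, 0 < δ ∧ δ < 1 ∧ ∀ R, 0 < R →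
    (∀ᶠ n in atTop, r n ≤ R) → ∀ᶠ n in atTop, r n ≤ R * (1 - δ) := by
  obtain ⟨β, hβ, hβ1, hb⟩ := h.stage1
  have hm := h.hm
  have hB : 0 ≤ bnd t c m := by unfold bnd; positivity
  set η' : ℝ := 1 / (2 * bnd t c m + 2) with hη'
  have hη0 : 0 < η' := by positivity
  have hη1 : η' ≤ 1 := by rw [hη', div_le_one (by positivity)]; linarith
  have hηB : bnd t c m * η' ≤ 1 / 2 := by
    rw [hη', mul_one_div, div_le_div_iff₀ (by positivity) (by norm_num)]; linarith
  set η := η' ^ m with hη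
  have hη2 : 0 < η := by positivity
  have hη3 : η ≤ 1 := pow_le_one₀ hη0.le hη1
  have hβη : β * η ≤ 1 := mul_le_one₀ hβ1 hη2.le hη3
  have hβη0 : 0 < β * η := by positivity
  have hβη' : β * η ≤ β := mul_le_of_le_one_right hβ.le hη3
  refine ⟨β * η / 16, by positivity, by linarith, fun R hR hev => ?_⟩
  obtain ⟨K, hK⟩ := eventually_atTop.1 hev
  obtain ⟨N, hN⟩ := eventually_atTop.1 (h.large (kap t c K / (R * (β * η / 16))))
  -- the error term
  have herr : ∀ n, N ≤ n → 1 ≤ n → kap t c K / (n * t n) ≤ R * (β * η / 16) := by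
    intro n hn hn1
    have h1 := hN n hn
    have h2 := h.t_one n hn1
    have hn1' : (1 : ℝ) ≤ n := by norm_cast
    have hk : 0 ≤ kap t c K := kap_nonneg K
    rw [div_mul_eq_mul_div, div_le_iff₀ (by positivity)] at h1
    rw [div_le_iff₀ (by positivity)]
    have h3 : kap t c K ≤ kap t c K * n := le_mul_of_one_le_right hk hn1'
    have h4 : t n ≤ n * t n := le_mul_of_one_le_left (by linarith) hn1'
    have h5 : (t n) * (R * (β * η / 16)) ≤ (n * t n) * (R * (β * η / 16)) := by gcongr
    linarith
  -- case B inequality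
  have caseB : ∀ n, N ≤ n → 2 ≤ n → t (n - 1) < η' * t n → r n ≤ R * (1 - β / 4) := by
    intro n hn hn2 ht
    have h0 := h.t_one n (by omega)
    have hg := h.gain (n := n) (K := K) hn2 (R := R) (γ := β) (θ := 1 / 2) hR.le hβ.le hK
      (fun p => m ≤ p.1 ∧ m ≤ p.2) ?_ hβ1 ?_
    · have := herr n hn (by omega)
      have : R * (β * η / 16) ≤ R * (β / 16) := by gcongr
      nlinarith [mul_pos hR hβ]
    · rintro p hp ⟨h1, h2⟩ h3
      have q0 := h.r0 p.1
      have q2 := h.r0 p.2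
      have b1 := hb _ h1
      have b2 := hb _ h2
      rcases Nat.lt_or_ge p.1 K with hk | hk
      · rw [mul_comm]
        exact mul_le_mul (hK p.2 (by omega)) b1 q0 hR.le
      · exact mul_le_mul (hK p.1 hk) b2 q2 hR.le
    · have h1 := h.boundary n hn2
      have h2 := Finset.sum_filter_add_sum_filter_not (E n) (fun p => m ≤ p.1 ∧ m ≤ p.2)
        (fun p => (p.1 : ℝ) * t p.1 * c p.2)
      rw [h.sum_eq n hn2] at h2
      have h3 : bnd t c m * (n * t (n - 1)) ≤ bnd t c m * (n * (η' * t n)) := by gcongr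
      have h4 : bnd t c m * η' * (n * t n) ≤ 1 / 2 * (n * t n) := by gcongr
      linarith
  -- single pair gain
  have single : ∀ n j, N ≤ n → 2 * m + 1 ≤ n → j ≤ m → 1 ≤ j → η * t n ≤ t (n - j) →
      r (n - j) * r j ≤ R * (1 - β / 4) → r n ≤ R * (1 - β * η / 16) := by
    intro n j hn hnm hj hj1 ht hr
    have h0 := h.t_one n (by omega)
    have hmem : (n - j, j) ∈ E n := by
      rw [mem_E]
      exact ⟨by simp; omega, by simp; omega, by simp; omega, by simp⟩
    have hg := h.gain (n := n) (K := K) (by omega) (R := R) (γ := β / 4) (θ := η / 2) hR.le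
      (by linarith) hK (fun p => p = (n - j, j)) ?_ (by linarith) ?_
    · have := herr n hn (by omega)
      nlinarith [mul_pos hR hβ]
    · rintro p hp rfl _
      exact hr
    · have e : (E n).filter (fun p => p = (n - j, j)) = {(n - j, j)} := by
        ext p
        simp only [mem_filter, mem_singleton]
        exact ⟨fun h => h.2, fun h => ⟨h ▸ hmem, h⟩⟩
      rw [e, sum_singleton]
      have h1 : (n : ℝ) / 2 ≤ ((n - j : ℕ) : ℝ) := by
        rw [div_le_iff₀ (by norm_num)]
        norm_cast
        omega
      have hc := h.c_one j
      have h2 : (n : ℝ) / 2 * (η * t n) ≤ ((n - j : ℕ) : ℝ) * t (n - j) := by gcongr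
      have h3 : ((n - j : ℕ) : ℝ) * t (n - j) ≤ ((n - j : ℕ) : ℝ) * t (n - j) * c j := by
        apply le_mul_of_one_le_right _ hc
        have : 0 < η * t n := by positivity
        exact mul_nonneg (Nat.cast_nonneg _) (this.le.trans ht)
      dsimp only
      linarith
  filter_upwards [eventually_ge_atTop (N + K + 2 * m + 1)] with n hn
  have h0 := h.t_one n (by omega)
  rcases chain t n η' hη0.le m with hA | ⟨j, hj, hj1, hj2⟩
  · apply single n m (by omega) (by omega) le_rfl (by omega) hA
    have h1 := hK (n - m) (by omega)
    have h2 := hb m le_rfl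
    calc r (n - m) * r m ≤ R * (1 - β) := mul_le_mul h1 h2 (h.r0 _) hR.le
      _ ≤ _ := by gcongr; linarith
  · have hr := caseB (n - j) (by omega) (by omega) hj2
    rcases Nat.eq_zero_or_pos j with rfl | hjp
    · simp only [Nat.sub_zero] at hr
      refine hr.trans ?_
      gcongr
      linarith
    · apply single n j (by omega) (by omega) hj.le hjp
      · refine le_trans ?_ hj1
        gcongr
        exact pow_le_pow_of_le_one hη0.le hη1 hj.le
      · exact (mul_le_of_le_one_right (h.r0 _) (h.r1 _)).trans hr

theorem Num.main (h : Num m t c r) : Tendsto r atTop (nhds 0) := by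
  obtain ⟨δ, h0, h1, hδ⟩ := h.stage2
  have hk : ∀ k : ℕ, ∀ᶠ n in atTop, r n ≤ (1 - δ) ^ k := by
    intro k
    induction k with
    | zero => exact Eventually.of_forall fun n => by simpa using h.r1 n
    | succ k ih =>
      rw [pow_succ]
      exact hδ _ (pow_pos (by linarith) _) ih
  rw [tendsto_order]
  constructor
  · intro a ha
    exact Eventually.of_forall fun n => lt_of_lt_of_le ha (h.r0 n)
  · intro a ha
    obtain ⟨k, hk1⟩ := exists_pow_lt_of_lt_one ha (by linarith : 1 - δ < 1)
    filter_upwards [hk k] with n hn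
    exact lt_of_le_of_lt hn hk1

end NumArg

/-! ### Counting -/

namespace GCls

open Finset
open scoped Classical in
/-- Classes of size `n` with property `P`. -/
noncomputable def S (P : GCls → Prop) (n : ℕ) : Finset GCls := (finite_size n).toFinset.filter P

open scoped Classical in
/-- Connected classes of size `n` with property `P`. -/
noncomputable def T (P : GCls → Prop) (n : ℕ) : Finset GCls := (S P n).filter Conn

theorem mem_S {P : GCls → Prop} {n : ℕ} {g : GCls} : g ∈ S P n ↔ size g = n ∧ P g := by
  simp [S]

theorem mem_T {P : GCls → Prop} {n : ℕ} {g : GCls} : g ∈ T P n ↔ (size g = n ∧ P g) ∧ Conn g := by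
  simp [T, mem_S]

/-- Index set of the Euler recursion. -/
def E' (n : ℕ) : Finset (ℕ × ℕ) :=
  (Icc 1 n ×ˢ range n).filter fun p => p.1 ∣ n - p.2

theorem count_aux (n s q : ℕ) (hs : 1 ≤ s) (hq : q * s ≤ n) :
    ((range n).filter fun k => s ∣ n - k ∧ (n - k) / s ≤ q).card = q := by
  have : ((range n).filter fun k => s ∣ n - k ∧ (n - k) / s ≤ q) =
      (Icc 1 q).image fun i => n - i * s := by
    ext k
    simp only [mem_filter, mem_range, mem_image, mem_Icc]
    constructor
    · rintro ⟨h1, ⟨i, hi⟩, h3⟩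
      rw [hi, Nat.mul_div_cancel_left _ (by omega)] at h3
      refine ⟨i, ⟨?_, h3⟩, ?_⟩
      · rcases Nat.eq_zero_or_pos i with rfl | h
        · omega
        · exact h
      · rw [mul_comm, ← hi]; omega
    · rintro ⟨i, ⟨h1, h2⟩, rfl⟩
      have h3 : i * s ≤ q * s := Nat.mul_le_mul_right _ h2
      have h4 : 1 * s ≤ i * s := Nat.mul_le_mul_right _ h1
      have h5 : n - (n - i * s) = i * s := by omega
      refine ⟨by omega, ?_, ?_⟩
      · rw [h5]; exact Nat.dvd_mul_left _ _
      · rw [h5, Nat.mul_div_cancel _ (by omega)]; exact h2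
  rw [this, card_image_of_injOn, Nat.card_Icc, Nat.add_sub_cancel]
  intro i hi j hj hij
  simp only [coe_Icc, Set.mem_Icc] at hi hj
  have h3 : i * s ≤ q * s := Nat.mul_le_mul_right _ hi.2
  have h4 : j * s ≤ q * s := Nat.mul_le_mul_right _ hj.2
  have h5 : i * s = j * s := by simp only at hij; omega
  exact Nat.eq_of_mul_eq_mul_right (by omega) h5

theorem size_sum (M : Multiset GCls) : size M.sum = (M.map size).sum :=
  map_multiset_sum sizeHom M

theorem conn_size {g : GCls} (h : Conn g) : 1 ≤ size g := by
  have := conn_ne_zero h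
  rw [Ne, ← size_eq_zero] at this
  omega

open scoped Classical in
theorem comps_prop {P : GCls → Prop} (hP : ∀ a b, P (a + b) → P a ∧ P b) {g x : GCls} (hg : P g)
    {i : ℕ} (hi : i ≤ (comps g).count x) : ∃ g', g = g' + i • x ∧ P g' ∧ P (i • x) := by
  rw [Multiset.le_count_iff_replicate_le] at hi
  obtain ⟨M, hM⟩ := Multiset.le_iff_exists_add.1 hi
  have h1 := (comps_sum_conn g).1
  rw [hM, Multiset.sum_add, Multiset.sum_replicate, add_comm] at h1
  have h2 := hP _ _ (h1.symm ▸ hg)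
  exact ⟨M.sum, h1.symm, h2.1, h2.2⟩

theorem size_nsmul (i : ℕ) (x : GCls) : size (i • x) = i * size x := by
  have h : size (i • x) = i • size x := map_nsmul sizeHom i x
  rw [h, smul_eq_mul]

open scoped Classical in
theorem size_expand {P : GCls → Prop} (hP : ∀ a b, P (a + b) → P a ∧ P b) {n : ℕ} {g : GCls}
    (hg : g ∈ S P n) : n = ∑ p ∈ E' n, ∑ x ∈ T P p.1,
      if (n - p.2) / p.1 ≤ (comps g).count x then p.1 else 0 := by
  rw [mem_S] at hg
  have hle : ∀ x, (comps g).count x * size x ≤ n := by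
    intro x
    obtain ⟨g', h1, -⟩ := comps_prop (P := P) hP hg.2 (le_refl ((comps g).count x))
    have := congrArg size h1
    rw [size_add, size_nsmul, hg.1] at this
    omega
  have h1 : n = ∑ x ∈ (comps g).toFinset, (comps g).count x * size x := by
    conv_lhs => rw [← hg.1, ← (comps_sum_conn g).1, size_sum, Finset.sum_multiset_map_count]
    simp
  have h2 : (comps g).toFinset ⊆ (Icc 1 n).biUnion (T P) := by
    intro x hx
    rw [Multiset.mem_toFinset] at hx
    have hc := (comps_sum_conn g).2 x hx
    have h3 := Multiset.one_le_count_iff_mem.2 hx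
    obtain ⟨g', h4, -, h6⟩ := comps_prop (P := P) hP hg.2 h3
    have h5 := hle x
    have : 1 * size x ≤ (comps g).count x * size x := Nat.mul_le_mul_right _ h3
    rw [mem_biUnion]
    refine ⟨size x, mem_Icc.2 ⟨conn_size hc, by omega⟩, mem_T.2 ⟨⟨rfl, ?_⟩, hc⟩⟩
    simpa using h6
  have h3 : n = ∑ x ∈ (Icc 1 n).biUnion (T P), (comps g).count x * size x := by
    refine h1.trans (sum_subset h2 ?_)
    intro x _ hx
    rw [Multiset.mem_toFinset] at hx
    rw [Multiset.count_eq_zero_of_notMem hx, zero_mul]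
  rw [sum_biUnion] at h3
  · conv_lhs => rw [h3]
    rw [E', sum_filter, sum_product]
    apply sum_congr rfl
    intro s hs
    rw [mem_Icc] at hs
    dsimp only
    rw [← sum_filter, sum_comm]
    apply sum_congr rfl
    intro x hx
    rw [mem_T] at hx
    rw [← sum_filter, filter_filter, sum_const, smul_eq_mul, count_aux n s _ hs.1, hx.1.1]
    have := hle x
    rwa [hx.1.1] at this
  · intro s _ s' _ hss
    rw [Function.onFun, Finset.disjoint_left]
    intro x hx hx'
    rw [mem_T] at hx hx'
    exact hss (hx.1.1.symm.trans hx'.1.1)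

open scoped Classical in
theorem euler_expand {P : GCls → Prop} (hP : ∀ a b, P (a + b) → P a ∧ P b) (n : ℕ) :
    n * (S P n).card = ∑ p ∈ E' n, ∑ x ∈ T P p.1,
      p.1 * ((S P n).filter fun g => (n - p.2) / p.1 ≤ (comps g).count x).card := by
  calc n * (S P n).card = ∑ g ∈ S P n, n := by rw [sum_const, smul_eq_mul, mul_comm]
    _ = ∑ g ∈ S P n, ∑ p ∈ E' n, ∑ x ∈ T P p.1,
      if (n - p.2) / p.1 ≤ (comps g).count x then p.1 else 0 :=
        sum_congr rfl fun g hg => size_expand hP hg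
    _ = _ := by
        rw [sum_comm]
        apply sum_congr rfl
        intro p _
        rw [sum_comm]
        apply sum_congr rfl
        intro x _
        rw [← sum_filter, sum_const, smul_eq_mul, mul_comm]

open scoped Classical in
theorem filter_subset' {P : GCls → Prop} (hP : ∀ a b, P (a + b) → P a ∧ P b) {n s k : ℕ}
    (hp : (s, k) ∈ E' n) {x : GCls} (hx : x ∈ T P s) :
    ((S P n).filter fun g => (n - k) / s ≤ (comps g).count x) ⊆
      (S P k).image fun g => g + ((n - k) / s) • x := by
  intro g hg
  rw [mem_filter, mem_S] at hg
  simp only [E', mem_filter, mem_product, mem_Icc, mem_range] at hp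
  obtain ⟨g', h1, h2, -⟩ := comps_prop (P := P) hP hg.1.2 hg.2
  rw [mem_image]
  refine ⟨g', mem_S.2 ⟨?_, h2⟩, h1.symm⟩
  have := congrArg size h1
  rw [size_add, size_nsmul, hg.1.1, (mem_T.1 hx).1.1, Nat.div_mul_cancel hp.2] at this
  omega

theorem euler_le {P : GCls → Prop} (hP : ∀ a b, P (a + b) → P a ∧ P b) (n : ℕ) :
    n * (S P n).card ≤ ∑ p ∈ E' n, p.1 * (T P p.1).card * (S P p.2).card := by
  classical
  rw [euler_expand hP]
  apply sum_le_sum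
  intro p hp
  calc _ ≤ ∑ x ∈ T P p.1, p.1 * (S P p.2).card := by
        apply sum_le_sum
        intro x hx
        apply Nat.mul_le_mul_left
        exact (card_le_card (filter_subset' hP hp hx)).trans card_image_le
    _ = _ := by rw [sum_const, smul_eq_mul]; ring

theorem euler_eq {P : GCls → Prop} (hP : ∀ a b, P (a + b) ↔ P a ∧ P b) (h0 : P 0) (n : ℕ) :
    n * (S P n).card = ∑ p ∈ E' n, p.1 * (T P p.1).card * (S P p.2).card := by
  classical
  have hP' : ∀ a b, P (a + b) → P a ∧ P b := fun a b => (hP a b).1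
  have hmul : ∀ (i : ℕ) x, P x → P (i • x) := by
    intro i x hx
    induction i with
    | zero => simpa using h0
    | succ i ih => rw [succ_nsmul]; exact (hP _ _).2 ⟨ih, hx⟩
  rw [euler_expand hP']
  apply sum_congr rfl
  rintro ⟨s, k⟩ hp
  calc _ = ∑ x ∈ T P s, s * (S P k).card := by
        apply sum_congr rfl
        intro x hx
        congr 1
        have e : ((S P n).filter fun g => (n - k) / s ≤ (comps g).count x) =
            (S P k).image fun g => g + ((n - k) / s) • x := by
          apply Subset.antisymm (filter_subset' hP' hp hx)
          intro g hg
          rw [mem_image] at hg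
          obtain ⟨g', h1, rfl⟩ := hg
          rw [mem_S] at h1
          rw [mem_T] at hx
          simp only [E', mem_filter, mem_product, mem_Icc, mem_range] at hp
          rw [mem_filter, mem_S, size_add, size_nsmul, hx.1.1, Nat.div_mul_cancel hp.2, h1.1]
          refine ⟨⟨by omega, (hP _ _).2 ⟨h1.2, hmul _ _ hx.1.2⟩⟩, ?_⟩
          have h2 : comps (((n - k) / s) • x) = Multiset.replicate ((n - k) / s) x := by
            rw [← Multiset.sum_replicate]
            apply comps_of_sum
            intro y hy
            rw [Multiset.eq_of_mem_replicate hy]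
            exact hx.2
          rw [comps_add, h2, Multiset.count_add, Multiset.count_replicate_self]
          omega
        rw [e, card_image_of_injective]
        intro a b hab
        exact add_cancel hab
    _ = _ := by rw [sum_const, smul_eq_mul]; ring

theorem S_zero {P : GCls → Prop} (h0 : P 0) : (S P 0).card = 1 := by
  rw [card_eq_one]
  refine ⟨0, ?_⟩
  ext g
  rw [mem_S, mem_singleton, size_eq_zero]
  constructor
  · exact fun h => h.1
  · rintro rfl; exact ⟨rfl, h0⟩

theorem S_one {P : GCls → Prop} (h0 : P pt) : (S P 1).card = 1 := by
  rw [card_eq_one]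
  refine ⟨pt, ?_⟩
  ext g
  rw [mem_S, mem_singleton]
  constructor
  · exact fun h => size_one h.1
  · rintro rfl; exact ⟨size_pt, h0⟩

theorem T_one {P : GCls → Prop} (h0 : P pt) : (T P 1).card = 1 := by
  rw [card_eq_one]
  refine ⟨pt, ?_⟩
  ext g
  rw [mem_T, mem_singleton]
  constructor
  · exact fun h => size_one h.1.1
  · rintro rfl; exact ⟨⟨size_pt, h0⟩, conn_pt⟩

theorem S_two {P : GCls → Prop} (hP : ∀ g, P g → Cog g) (hco : ∀ g, P g → P (co g)) {n : ℕ}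
    (hn : 2 ≤ n) : (S P n).card = 2 * (T P n).card := by
  classical
  have h1 := card_filter_add_card_filter_not (s := S P n) Conn
  have h2 : ((S P n).filter fun g => ¬ Conn g).card = (T P n).card := by
    apply card_bij' (fun g _ => co g) (fun g _ => co g)
    · intro g hg
      rw [mem_filter, mem_S] at hg
      rw [mem_T, size_co]
      have : g ≠ 0 := ne_zero_of_size (by omega)
      exact ⟨⟨hg.1.1, hco _ hg.1.2⟩, (conn_or_co this).resolve_left hg.2⟩
    · intro g hg
      rw [mem_T] at hg
      rw [mem_filter, mem_S, size_co]
      exact ⟨⟨hg.1.1, hco _ hg.1.2⟩, not_conn_co (hP _ hg.1.2) hg.2 (by omega)⟩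
    · intro g _; exact co_co g
    · intro g _; exact co_co g
  rw [h2] at h1
  unfold T at *
  convert h1.symm using 1
  rw [two_mul]

theorem S_le_T (n : ℕ) (hn : 1 ≤ n) : (S Cog n).card ≤ (T Cog (n + 1)).card := by
  apply card_le_card_of_injOn (fun g => co (g + pt))
  · intro g hg
    rw [mem_coe, mem_S] at hg
    rw [mem_coe, mem_T, size_co, size_add, size_pt, hg.1]
    exact ⟨⟨rfl, cog_co (cog_add.2 ⟨hg.2, cog_pt⟩)⟩,
      conn_co_add (ne_zero_of_size (by omega)) (conn_ne_zero conn_pt)⟩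
  · intro a _ b _ hab
    have := congrArg co hab
    simp only [co_co] at this
    exact add_cancel this

/-- Having a cograph mate. -/
def Mate (g : GCls) : Prop := ∃ h, Cog h ∧ size h = size g ∧ GC g h ∧ h ≠ g

/-- Cographs without a mate. -/
def Bad (g : GCls) : Prop := Cog g ∧ ¬ Mate g

theorem mate_add {a b : GCls} (hb : Cog b) (h : Mate a) : Mate (a + b) := by
  obtain ⟨x, h1, h2, h3, h4⟩ := h
  exact ⟨x + b, cog_add.2 ⟨h1, hb⟩, by rw [size_add, size_add, h2], gc_add b h2.symm h3,
    fun h => h4 (add_cancel h)⟩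

theorem bad_add (a b : GCls) (h : Bad (a + b)) : Bad a ∧ Bad b := by
  obtain ⟨h1, h2⟩ := h
  rw [cog_add] at h1
  refine ⟨⟨h1.1, fun h => h2 (mate_add h1.2 h)⟩, h1.2, fun h => h2 ?_⟩
  rw [add_comm]
  exact mate_add h1.1 h

theorem bad_co (g : GCls) (h : Bad g) : Bad (co g) := by
  refine ⟨cog_co h.1, fun ⟨x, h1, h2, h3, h4⟩ => h.2 ⟨co x, cog_co h1, ?_, ?_, ?_⟩⟩
  · rw [size_co, h2, size_co]
  · have := gc_co h3
    rwa [co_co] at this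
  · rintro rfl
    exact h4 (co_co x).symm

theorem bad_zero : Bad 0 := by
  refine ⟨cog_zero, fun ⟨x, _, h2, _, h4⟩ => h4 ?_⟩
  rw [size_zero, size_eq_zero] at h2
  exact h2

theorem bad_pt : Bad pt := by
  refine ⟨cog_pt, fun ⟨x, _, h2, _, h4⟩ => h4 ?_⟩
  rw [size_pt] at h2
  exact size_one h2

theorem bad_le (n : ℕ) : (S Bad n).card ≤ (S Cog n).card := by
  apply card_le_card
  intro g hg
  rw [mem_S] at *
  exact ⟨hg.1, hg.2.1⟩

theorem bad_lt (n : ℕ) (hn : 15 ≤ n) : (S Bad n).card < (S Cog n).card := by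
  obtain ⟨f, h, hf, hh, sf, sh, hgc, hne⟩ := exists_seed
  have hf' : Mate f := ⟨h, hh, by rw [sf, sh], hgc, hne.symm⟩
  have hpt : ∀ k : ℕ, Cog (k • pt) := by
    intro k
    induction k with
    | zero => simpa using cog_zero
    | succ k ih => rw [succ_nsmul]; exact cog_add.2 ⟨ih, cog_pt⟩
  apply card_lt_card
  rw [Finset.ssubset_iff_of_subset]
  · refine ⟨f + (n - 15) • pt, ?_, ?_⟩
    · rw [mem_S, size_add, sf, size_nsmul, size_pt]
      exact ⟨by omega, cog_add.2 ⟨hf, hpt _⟩⟩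
    · rw [mem_S]
      rintro ⟨-, h1⟩
      exact h1.2 (mate_add (hpt _) hf')
  · intro g hg
    rw [mem_S] at *
    exact ⟨hg.1, hg.2.1⟩

theorem sum_E' (n : ℕ) (hn : 1 ≤ n) (f : ℕ × ℕ → ℕ) :
    ∑ p ∈ E' n, f p = f (n, 0) + ∑ p ∈ NumArg.E n, f p := by
  have e : E' n = insert (n, 0) (NumArg.E n) := by
    ext ⟨s, k⟩
    simp only [E', mem_filter, mem_product, mem_Icc, mem_range, mem_insert, Prod.mk.injEq,
      NumArg.mem_E]
    constructor
    · rintro ⟨⟨⟨h1, h2⟩, h3⟩, h4⟩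
      rcases Nat.lt_or_ge s n with h5 | h5
      · exact Or.inr ⟨h5, h3, h1, h4⟩
      · have := Nat.le_of_dvd (by omega) h4
        exact Or.inl ⟨by omega, by omega⟩
    · rintro (⟨rfl, rfl⟩ | ⟨h1, h2, h3, h4⟩)
      · simp; omega
      · exact ⟨⟨⟨h3, h1.le⟩, h2⟩, h4⟩
  rw [e, sum_insert]
  rw [NumArg.mem_E]
  simp

/-- The ratio of bad cographs. -/
noncomputable def rat (n : ℕ) : ℝ := (S Bad n).card / (S Cog n).card

theorem T_bad (s : ℕ) (hs : 1 ≤ s) : ((T Bad s).card : ℝ) * (S Cog s).card =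
    (S Bad s).card * (T Cog s).card := by
  rcases Nat.lt_or_ge s 2 with h | h
  · obtain rfl : s = 1 := by omega
    rw [T_one bad_pt, T_one cog_pt, S_one bad_pt, S_one cog_pt]
  · rw [S_two (fun g hg => hg.1) bad_co h, S_two (fun _ h => h) (fun _ => cog_co) h]
    push_cast
    ring

theorem S_cog_pos (n : ℕ) : 0 < (S Cog n).card := by
  rw [card_pos]
  refine ⟨n • pt, ?_⟩
  rw [mem_S, size_nsmul, size_pt, mul_one]
  refine ⟨rfl, ?_⟩
  induction n with
  | zero => simpa using cog_zero
  | succ k ih => rw [succ_nsmul]; exact cog_add.2 ⟨ih, cog_pt⟩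

theorem num_cog : NumArg.Num 15 (fun n => ((T Cog n).card : ℝ)) (fun n => ((S Cog n).card : ℝ))
    rat := by
  have hpos : ∀ n, (0 : ℝ) < (S Cog n).card := fun n => by exact_mod_cast S_cog_pos n
  have hS2 : ∀ n, 2 ≤ n → (S Cog n).card = 2 * (T Cog n).card := fun n hn =>
    S_two (fun _ h => h) (fun _ => cog_co) hn
  have hB2 : ∀ n, 2 ≤ n → (S Bad n).card = 2 * (T Bad n).card := fun n hn =>
    S_two (fun g hg => hg.1) bad_co hn
  have ratS : ∀ k, rat k * (S Cog k).card = (S Bad k).card := fun k => by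
    rw [rat, div_mul_cancel₀ _ (hpos k).ne']
  have ratT : ∀ s, 1 ≤ s → rat s * (T Cog s).card = (T Bad s).card := fun s hs => by
    rw [rat, div_mul_eq_mul_div, div_eq_iff (hpos s).ne', T_bad s hs]
  constructor
  · norm_num
  · simp [S_zero cog_zero]
  · simp [S_one cog_pt]
  · simp [T_one cog_pt]
  · intro n hn
    simp [hS2 n hn]
  · intro n hn
    exact_mod_cast S_le_T n hn
  · intro n; unfold rat; positivity
  · intro n
    rw [rat, div_le_one (hpos n)]
    exact_mod_cast bad_le n
  · intro n hn
    rw [rat, div_lt_one (hpos n)]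
    exact_mod_cast bad_lt n hn
  · intro n hn
    have h1 := euler_eq (P := Cog) (fun _ _ => cog_add) cog_zero n
    rw [sum_E' n (by omega), S_zero cog_zero, hS2 n hn] at h1
    have h2 : ∑ p ∈ NumArg.E n, p.1 * (T Cog p.1).card * (S Cog p.2).card = n * (T Cog n).card := by
      dsimp only at h1
      linarith
    exact_mod_cast h2
  · intro n hn
    have h1 := euler_le (P := Bad) bad_add n
    rw [sum_E' n (by omega), S_zero bad_zero, hB2 n hn] at h1
    have h2 : n * (T Bad n).card ≤ ∑ p ∈ NumArg.E n, p.1 * (T Bad p.1).card * (S Bad p.2).card := by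
      dsimp only at h1
      linarith
    have h3 : (n : ℝ) * (T Bad n).card ≤
        ∑ p ∈ NumArg.E n, (p.1 : ℝ) * (T Bad p.1).card * (S Bad p.2).card := by exact_mod_cast h2
    rw [mul_assoc, mul_comm _ (rat n), ratT n (by omega)]
    refine h3.trans (le_of_eq ?_)
    apply sum_congr rfl
    intro p hp
    rw [NumArg.mem_E] at hp
    rw [← ratT p.1 hp.2.2.1, ← ratS p.2]
    ring

theorem classCount_eq (n : ℕ) (P : SimpleGraph (Fin n) → Prop) (Q : GCls → Prop)
    (h : ∀ G, P G ↔ Q (cls G)) : classCount n P = (S Q n).card := by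
  have e : (S Q n).card = Nat.card (S Q n) := by simp
  rw [classCount, e]
  let F : (Quot fun G H : {G : SimpleGraph (Fin n) // P G} => Nonempty (G.1 ≃g H.1)) → S Q n :=
    Quot.lift (fun G => ⟨cls G.1, mem_S.2 ⟨by rw [size_cls]; simp, (h _).1 G.2⟩⟩)
      fun G H hGH => Subtype.ext (cls_eq_iff.2 hGH)
  apply Nat.card_eq_of_bijective F
  constructor
  · rintro ⟨G⟩ ⟨H⟩ hGH
    exact Quot.sound (cls_eq_iff.1 (congrArg Subtype.val hGH))
  · rintro ⟨g, hg⟩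
    rw [mem_S] at hg
    obtain ⟨k, G, rfl⟩ := exists_rep' g
    obtain ⟨h1, h2⟩ := hg
    rw [size_cls, Nat.card_eq_fintype_card, Fintype.card_fin] at h1
    subst h1
    exact ⟨Quot.mk _ ⟨G, (h G).2 h2⟩, rfl⟩

theorem mate_cls {n : ℕ} (G : SimpleGraph (Fin n)) : Mate (cls G) ↔
    ∃ H : SimpleGraph (Fin n), IsCograph H ∧ GenCospectral G H ∧ ¬ Nonempty (G ≃g H) := by
  constructor
  · rintro ⟨x, h1, h2, h3, h4⟩
    obtain ⟨k, H, rfl⟩ := exists_rep' x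
    have h5 : k = n := by simpa [size_cls] using h2
    subst h5
    exact ⟨H, (cog_cls H).1 h1, (gc_cls G H).1 h3, fun h => h4 (cls_eq_iff.2 h).symm⟩
  · rintro ⟨H, h1, h2, h3⟩
    exact ⟨cls H, (cog_cls H).2 h1, by rw [size_cls, size_cls], (gc_cls G H).2 h2,
      fun h => h3 (cls_eq_iff.1 h.symm)⟩

theorem card_mate (n : ℕ) :
    (S (fun g => Cog g ∧ Mate g) n).card + (S Bad n).card = (S Cog n).card := by
  classical
  rw [← card_filter_add_card_filter_not (s := S Cog n) Mate]
  congr 2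
  · ext g; simp only [mem_filter, mem_S]; tauto
  · ext g; simp only [mem_filter, mem_S, Bad]; tauto

end GCls

/-- **Almost all cographs have a generalized cospectral mate which is itself a cograph.** -/
theorem almost_all_cographs_have_cograph_generalized_cospectral_mate :
    Filter.Tendsto
      (fun n : ℕ =>
        (classCount n (fun G => IsCograph G ∧
            ∃ H : SimpleGraph (Fin n), IsCograph H ∧ GenCospectral G H ∧
              ¬ Nonempty (G ≃g H)) : ℝ) /
        (classCount n (fun G => IsCograph G) : ℝ))
      Filter.atTop (nhds 1) := by
  have h1 := GCls.num_cog.main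
  have h2 : Filter.Tendsto (fun n => 1 - GCls.rat n) Filter.atTop (nhds 1) := by
    simpa using h1.const_sub 1
  refine h2.congr fun n => ?_
  rw [GCls.classCount_eq n _ GCls.Cog fun G => (GCls.cog_cls G).symm,
    GCls.classCount_eq n _ (fun g => GCls.Cog g ∧ GCls.Mate g) fun G => by
      rw [GCls.cog_cls, GCls.mate_cls]]
  have hpos : (0 : ℝ) < (GCls.S GCls.Cog n).card := by exact_mod_cast GCls.S_cog_pos n
  have h3 : ((GCls.S (fun g => GCls.Cog g ∧ GCls.Mate g) n).card : ℝ) +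
      (GCls.S GCls.Bad n).card = (GCls.S GCls.Cog n).card := by
    exact_mod_cast GCls.card_mate n
  rw [GCls.rat, eq_div_iff hpos.ne', sub_mul, div_mul_cancel₀ _ hpos.ne']
  linarith
end

section
/- Almost all cographs have a generalized Q-cospectral mate. Precisely, letting c(n) denote the number of isomorphism classes of cographs on n vertices and q(n) denote the number of isomorphism classes of cographs G on n vertices for which there exists a graph H on n vertices that is generalized Q-cospectral with G but not isomorphic to G, one has lim_{n→∞} q(n)/c(n) = 1. -/
open SimpleGraph

/-- The characteristic polynomial (over `ℝ`) of the signless Laplacian matrix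
`Q(G) = D(G) + A(G)` of a finite graph. -/
noncomputable def qCharPoly {V : Type} [Fintype V] [DecidableEq V] (G : SimpleGraph V) :
    Polynomial ℝ :=
  letI := Classical.decRel G.Adj
  Matrix.charpoly (G.degMatrix ℝ + G.adjMatrix ℝ)

/-- Two finite graphs are `Q`-cospectral if their signless Laplacian matrices have the same
characteristic polynomial. -/
def QCospectral {V W : Type} [Fintype V] [DecidableEq V] [Fintype W] [DecidableEq W]
    (G : SimpleGraph V) (H : SimpleGraph W) : Prop :=
  qCharPoly G = qCharPoly H

/-- Generalized `Q`-cospectrality: the graphs are `Q`-cospectral and so are their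
complements. -/
def GenQCospectral {V W : Type} [Fintype V] [DecidableEq V] [Fintype W] [DecidableEq W]
    (G : SimpleGraph V) (H : SimpleGraph W) : Prop :=
  QCospectral G H ∧ QCospectral Gᶜ Hᶜ


/-- An abstract system of unordered series-reduced rooted trees counted by leaves. -/
structure TreeSys (T : Type) where
  sz : T → ℕ
  leaf : T
  nd : Multiset T → T
  sz_leaf : sz leaf = 1
  sz_nd : ∀ s, 2 ≤ s.card → sz (nd s) = (s.map sz).sum
  nd_inj : ∀ s s', 2 ≤ s.card → 2 ≤ s'.card → nd s = nd s' → s = s'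
  ex : ∀ t, t = leaf ∨ ∃ s, 2 ≤ s.card ∧ t = nd s
  sz_pos : ∀ t, 1 ≤ sz t
  fin : ∀ n, {t | sz t = n}.Finite

namespace TreeSys

variable {T : Type} (S : TreeSys T)

lemma card_le_sum (s : Multiset T) : s.card ≤ (s.map S.sz).sum := by
  induction s using Multiset.induction_on with
  | empty => simp
  | cons a s ih => simp only [Multiset.card_cons, Multiset.map_cons, Multiset.sum_cons]; have := S.sz_pos a; omega

lemma sz_nd_ge (s : Multiset T) (h : 2 ≤ s.card) : 2 ≤ S.sz (S.nd s) := by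
  rw [S.sz_nd s h]; exact h.trans (S.card_le_sum s)

lemma mem_le_sum {s : Multiset T} {x : T} (h : x ∈ s) : S.sz x ≤ (s.map S.sz).sum := by
  obtain ⟨r, rfl⟩ := Multiset.exists_cons_of_mem h
  simp

/-- The second tree is `t` with a canonical leaf deleted, with `i` recording the place. -/
inductive R : T → T → ℕ → Prop
  | r0 (t : T) : R (S.nd (S.leaf ::ₘ {t})) t 0
  | r1 (s : Multiset T) : 2 ≤ s.card → R (S.nd (S.leaf ::ₘ s)) (S.nd s) 1
  | r2 (x x' : T) (i : ℕ) (s : Multiset T) : R x x' i → 1 ≤ s.card →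
      (∀ y ∈ s, S.sz x ≤ S.sz y) → R (S.nd (x ::ₘ s)) (S.nd (x' ::ₘ s)) (i + 2)

lemma R.sz_eq {t t' : T} {i : ℕ} (h : S.R t t' i) : S.sz t = S.sz t' + 1 := by
  induction h with
  | r0 t => rw [S.sz_nd _ (by simp)]; simp [S.sz_leaf, add_comm]
  | r1 s hs => rw [S.sz_nd _ (by simp; omega), S.sz_nd _ hs]; simp [S.sz_leaf, add_comm]
  | r2 x x' i s h hs hm ih =>
    rw [S.sz_nd _ (by simp; omega), S.sz_nd _ (by simp; omega)]; simp [ih]; omega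

lemma R.det {t₁ t' : T} {i : ℕ} (h : S.R t₁ t' i) : ∀ t₂, S.R t₂ t' i → t₁ = t₂ := by
  induction h with
  | r0 t => intro t₂ h2; cases h2; rfl
  | r1 s hs =>
    intro t₂ h2
    generalize ht : S.nd s = t' at h2
    cases h2 with
    | r1 s' hs' => rw [S.nd_inj _ _ hs hs' ht]
  | r2 x x' i s h hs hm ih =>
    intro t₂ h2
    generalize ht : S.nd (x' ::ₘ s) = t' at h2
    generalize hi : i + 2 = j at h2
    cases h2 with
    | r0 t => omega
    | r1 s' hs' => omega
    | r2 y y' i' s' h' hs' hm' =>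
      obtain rfl : i = i' := by omega
      have e := S.nd_inj _ _ (by simp; omega) (by simp; omega) ht
      rcases Multiset.cons_eq_cons.1 e with ⟨rfl, rfl⟩ | ⟨hne, r, hr, hr'⟩
      · rw [ih _ h']
      · have a1 := hm' x' (by rw [hr']; simp)
        have a2 := hm y' (by rw [hr]; simp)
        have := h.sz_eq
        have := h'.sz_eq
        omega

lemma R.exists : ∀ (n : ℕ) (t : T), S.sz t = n → 2 ≤ n → ∃ t' i, S.R t t' i ∧ i + 1 ≤ 2 * Nat.log 2 n := by
  intro n
  induction n using Nat.strong_induction_on with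
  | _ n ih =>
  intro t ht hn
  have hlog : 1 ≤ Nat.log 2 n := Nat.log_pos (by norm_num) hn
  rcases S.ex t with rfl | ⟨s, hs, rfl⟩
  · rw [S.sz_leaf] at ht; omega
  by_cases hl : S.leaf ∈ s
  · obtain ⟨r, rfl⟩ := Multiset.exists_cons_of_mem hl
    simp only [Multiset.card_cons] at hs
    by_cases hr : r.card = 1
    · obtain ⟨x, rfl⟩ := Multiset.card_eq_one.1 hr
      exact ⟨_, _, R.r0 x, by omega⟩
    · exact ⟨_, _, R.r1 r (by omega), by omega⟩
  · classical
    obtain ⟨x, hx, hmin⟩ := Finset.exists_min_image s.toFinset S.sz (by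
      obtain ⟨x, hx⟩ := Multiset.card_pos_iff_exists_mem.1 (show 0 < s.card by omega)
      exact ⟨x, by simpa using hx⟩)
    simp only [Multiset.mem_toFinset] at hx hmin
    obtain ⟨r, rfl⟩ := Multiset.exists_cons_of_mem hx
    simp only [Multiset.card_cons] at hs
    have hx2 : 2 ≤ S.sz x := by
      rcases S.ex x with rfl | ⟨q, hq, rfl⟩
      · exact absurd hx hl
      · exact S.sz_nd_ge q hq
    obtain ⟨y, hy⟩ := Multiset.card_pos_iff_exists_mem.1 (show 0 < r.card by omega)
    have h1 := hmin y (by simp [hy])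
    have h2 := S.mem_le_sum hy
    rw [S.sz_nd _ (by simp; omega)] at ht
    simp only [Multiset.map_cons, Multiset.sum_cons] at ht
    obtain ⟨x', i, hR, hi⟩ := ih (S.sz x) (by omega) x rfl hx2
    refine ⟨_, _, R.r2 x x' i r hR (by omega) (fun z hz => hmin z (by simp [hz])), ?_⟩
    have h3 : Nat.log 2 (S.sz x) + 1 ≤ Nat.log 2 n := by
      have : Nat.log 2 (S.sz x * 2) ≤ Nat.log 2 n := Nat.log_mono_right (by omega)
      rwa [Nat.log_mul_base (by norm_num) (by omega)] at this
    omega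

/-- number of trees with `n` leaves -/
noncomputable def num (n : ℕ) : ℕ := {t | S.sz t = n}.ncard

lemma num_succ_le (n : ℕ) (hn : 1 ≤ n) : S.num (n + 1) ≤ 2 * Nat.log 2 (n + 1) * S.num n := by
  have H : ∀ t : {t | S.sz t = n + 1}, ∃ p : T × ℕ, S.R t p.1 p.2 ∧ p.2 + 1 ≤ 2 * Nat.log 2 (n + 1) := by
    rintro ⟨t, ht⟩
    obtain ⟨t', i, h⟩ := R.exists S (n + 1) t ht (by omega)
    exact ⟨(t', i), h⟩
  choose f hf using H
  have hfin : ({t | S.sz t = n} ×ˢ (↑(Finset.range (2 * Nat.log 2 (n + 1))) : Set ℕ)).Finite :=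
    (S.fin n).prod (Finset.finite_toSet _)
  have := Set.ncard_le_ncard (s := Set.range f) (t := {t | S.sz t = n} ×ˢ
    (↑(Finset.range (2 * Nat.log 2 (n + 1))) : Set ℕ)) (by
      rintro _ ⟨t, rfl⟩
      have h1 := (hf t).1.sz_eq
      have h2 := (hf t).2
      have h3 := t.2
      simp only [Set.mem_ofPred_eq] at h3
      simp only [Set.mem_prod, Set.mem_ofPred_eq, Finset.coe_range, Set.mem_Iio]
      omega) hfin
  rw [Set.ncard_prod, Set.ncard_coe_finset, Finset.card_range, ← Set.image_univ,
    Set.ncard_image_of_injective, Set.ncard_univ] at this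
  · rw [mul_comm]; exact this
  · intro a b hab
    have h1 := (hf a).1
    rw [hab] at h1
    exact Subtype.ext (h1.det S _ (hf b).1)

lemma num_add_le (n m : ℕ) (hn : 1 ≤ n) :
    S.num (n + m) ≤ (2 * Nat.log 2 (n + m)) ^ m * S.num n := by
  induction m with
  | zero => simp
  | succ m ih =>
    have h1 := S.num_succ_le (n + m) (by omega)
    have h2 : Nat.log 2 (n + m) ≤ Nat.log 2 (n + m + 1) := Nat.log_mono_right (by omega)
    calc S.num (n + (m + 1)) ≤ 2 * Nat.log 2 (n + m + 1) * S.num (n + m) := h1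
      _ ≤ 2 * Nat.log 2 (n + m + 1) * ((2 * Nat.log 2 (n + m)) ^ m * S.num n) := by gcongr
      _ ≤ 2 * Nat.log 2 (n + m + 1) * ((2 * Nat.log 2 (n + m + 1)) ^ m * S.num n) := by gcongr
      _ = _ := by ring_nf

lemma two_mul_num_le (n : ℕ) (hn : 2 ≤ n) : 2 * S.num n ≤ S.num (n + 1) := by
  have hc : ∀ t : {t | S.sz t = n}, ∃ s, 2 ≤ s.card ∧ t = S.nd s := by
    rintro ⟨t, ht⟩
    rcases S.ex t with rfl | h
    · simp [S.sz_leaf] at ht; omega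
    · exact h
  choose c hc1 hc2 using hc
  have := Set.ncard_le_ncard (s := (fun t => S.nd (S.leaf ::ₘ {t})) '' {t | S.sz t = n} ∪
    Set.range (fun t => S.nd (S.leaf ::ₘ c t))) (t := {t | S.sz t = n + 1}) (by
      rintro _ (⟨t, ht, rfl⟩ | ⟨t, rfl⟩)
      · have := (R.r0 (S := S) t).sz_eq
        simp only [Set.mem_ofPred_eq] at *
        omega
      · have := (R.r1 (S := S) (c t) (hc1 t)).sz_eq
        rw [← hc2] at this
        have h := t.2
        simp only [Set.mem_ofPred_eq] at *
        omega) (S.fin _)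
  have hfi : Finite {t | S.sz t = n} := S.fin n
  rw [Set.ncard_union_eq _ ((S.fin n).image _) (Set.finite_range _)] at this
  · rw [Set.ncard_image_of_injective, ← Set.image_univ, Set.ncard_image_of_injective,
      Set.ncard_univ] at this
    · rw [two_mul]; exact this
    · intro a b hab
      have := S.nd_inj _ _ (by simp; have := hc1 a; omega) (by simp; have := hc1 b; omega) hab
      rw [Multiset.cons_inj_right] at this
      apply Subtype.ext
      rw [hc2 a, hc2 b, this]
    · intro a b hab
      have := S.nd_inj _ _ (by simp) (by simp) hab
      simpa using this
  · rw [Set.disjoint_left]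
    rintro _ ⟨t, ht, rfl⟩ ⟨t', h⟩
    have := S.nd_inj _ _ (by simp; have := hc1 t'; omega) (by simp) h
    rw [Multiset.cons_inj_right] at this
    have h2 := hc1 t'
    rw [this] at h2
    simp at h2

lemma num_ge (n : ℕ) : 2 ^ n ≤ S.num (n + 2) := by
  induction n with
  | zero =>
    have : S.nd {S.leaf, S.leaf} ∈ {t | S.sz t = 2} := by
      simp only [Set.mem_ofPred_eq]
      rw [S.sz_nd _ (by simp)]; simp [S.sz_leaf]
    have := (Set.ncard_pos (S.fin 2)).2 ⟨_, this⟩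
    exact this
  | succ n ih =>
    have := S.two_mul_num_le (n + 2) (by omega)
    rw [pow_succ]
    have e : n + 1 + 2 = n + 2 + 1 := by ring
    rw [e]; omega

/-- `t` has a branch equal to `A`. -/
inductive Has (A : T) : T → Prop
  | self : Has A A
  | child (s : Multiset T) (x : T) : 2 ≤ s.card → x ∈ s → Has A x → Has A (S.nd s)

/-- The second tree is the first with an additional branch `A`. -/
inductive Ins (A : T) : T → T → Prop
  | here (s : Multiset T) : 2 ≤ s.card → Ins A (S.nd s) (S.nd (A ::ₘ s))
  | deep (x x' : T) (s : Multiset T) : 1 ≤ s.card → Ins A x x' →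
      Ins A (S.nd (x ::ₘ s)) (S.nd (x' ::ₘ s))

variable {A : T}

lemma Ins.sz_eq {t t' : T} (h : S.Ins A t t') : S.sz t' = S.sz t + S.sz A := by
  induction h with
  | here s hs => rw [S.sz_nd _ (by simp; omega), S.sz_nd _ hs]; simp [add_comm]
  | deep x x' s hs h ih =>
    rw [S.sz_nd _ (by simp; omega), S.sz_nd _ (by simp; omega)]; simp [ih]; omega

lemma Ins.has {t t' : T} (h : S.Ins A t t') : S.Has A t' := by
  induction h with
  | here s hs => exact Has.child _ A (by simp; omega) (by simp) Has.self
  | deep x x' s hs h ih => exact Has.child _ x' (by simp; omega) (by simp) ih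

lemma Ins.ne {t t' : T} (h : S.Ins A t t') : t' ≠ A := by
  rintro rfl
  have := h.sz_eq
  have := S.sz_pos t
  omega

lemma free_mem {s : Multiset T} (hs : 2 ≤ s.card) (h : ¬ S.Has A (S.nd s)) {x : T} (hx : x ∈ s) :
    ¬ S.Has A x := fun hh => h (Has.child s x hs hx hh)

lemma deep_eq {x x' y' : T} {s r : Multiset T} (hx : S.Ins A x x')
    (hr : ∀ z ∈ r, ¬ S.Has A z) (e : x' ::ₘ s = y' ::ₘ r) :
    x' = y' ∧ s = r := by
  rcases Multiset.cons_eq_cons.1 e with h | ⟨hne, q, hq, hq'⟩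
  · exact h
  · exact absurd hx.has (hr x' (by rw [hq']; simp))

lemma Ins.det {t₁ t' : T} (h : S.Ins A t₁ t') :
    ¬ S.Has A t₁ → ∀ t₂, ¬ S.Has A t₂ → S.Ins A t₂ t' → t₁ = t₂ := by
  induction h with
  | here s hs =>
    intro f1 t₂ f2 h2
    generalize ht : S.nd (A ::ₘ s) = t' at h2
    cases h2 with
    | here s' hs' =>
      have := S.nd_inj _ _ (by simp; omega) (by simp; omega) ht
      rw [Multiset.cons_inj_right] at this
      rw [this]
    | deep y y' r hr hi =>
      have := S.nd_inj _ _ (by simp; omega) (by simp; omega) ht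
      have hA : A ∈ y' ::ₘ r := by rw [← this]; simp
      rcases Multiset.mem_cons.1 hA with h | h
      · exact absurd h.symm (hi.ne)
      · exact absurd Has.self (S.free_mem (by simp; omega) f2 (Multiset.mem_cons_of_mem h))
  | deep x x' s hs hx ih =>
    intro f1 t₂ f2 h2
    generalize ht : S.nd (x' ::ₘ s) = t' at h2
    cases h2 with
    | here s' hs' =>
      have := S.nd_inj _ _ (by simp; omega) (by simp; omega) ht
      have hA : A ∈ x' ::ₘ s := by rw [this]; simp
      rcases Multiset.mem_cons.1 hA with h | h
      · exact absurd h.symm (hx.ne)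
      · exact absurd Has.self (S.free_mem (by simp; omega) f1 (Multiset.mem_cons_of_mem h))
    | deep y y' r hr hy =>
      have := S.nd_inj _ _ (by simp; omega) (by simp; omega) ht
      obtain ⟨e1, e2⟩ := S.deep_eq hx
        (fun z hz => S.free_mem (by simp; omega) f2 (Multiset.mem_cons_of_mem hz)) this
      subst e1 e2
      rw [ih (S.free_mem (by simp; omega) f1 (Multiset.mem_cons_self _ _)) y
        (S.free_mem (by simp; omega) f2 (Multiset.mem_cons_self _ _)) hy]

lemma ins_finite (A t : T) : {t' | S.Ins A t t'}.Finite :=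
  (S.fin (S.sz t + S.sz A)).subset fun _ h => h.sz_eq

/-- The finite set of results of inserting the branch `A` into `t`. -/
noncomputable def insF (A t : T) : Finset T := (S.ins_finite A t).toFinset

lemma mem_insF {t t' : T} : t' ∈ S.insF A t ↔ S.Ins A t t' := by simp [insF]

open Classical in
/-- Number of insertions summed over the distinct members of `s`. -/
noncomputable def J (A : T) (s : Multiset T) : ℕ := ∑ x ∈ s.toFinset, (S.insF A x).card

lemma insF_card (s : Multiset T) (hs : 2 ≤ s.card) (hf : ¬ S.Has A (S.nd s)) :
    1 + S.J A s ≤ (S.insF A (S.nd s)).card := by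
  classical
  have her : ∀ x ∈ s, 1 ≤ (s.erase x).card := fun x hx => by
    rw [Multiset.card_erase_of_mem hx]; simp; omega
  have hmem : ∀ x, ∀ z ∈ s.erase x, ¬ S.Has A z := fun x z hz =>
    S.free_mem hs hf (Multiset.mem_of_mem_erase hz)
  have key : insert (S.nd (A ::ₘ s)) (s.toFinset.biUnion fun x =>
      (S.insF A x).image fun x' => S.nd (x' ::ₘ s.erase x)) ⊆ S.insF A (S.nd s) := by
    intro t ht
    rw [mem_insF]
    simp only [Finset.mem_insert, Finset.mem_biUnion, Multiset.mem_toFinset, Finset.mem_image,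
      mem_insF] at ht
    rcases ht with rfl | ⟨x, hx, x', hx', rfl⟩
    · exact Ins.here s hs
    · have := Ins.deep x x' (s.erase x) (her x hx) hx'
      rwa [Multiset.cons_erase hx] at this
  refine le_trans (le_of_eq ?_) (Finset.card_le_card key)
  rw [Finset.card_insert_of_notMem, Finset.card_biUnion, add_comm]
  · congr 1
    unfold J
    refine Finset.sum_congr rfl fun x hx => ?_
    rw [Finset.card_image_of_injOn]
    intro a ha b hb hab
    rw [Multiset.mem_toFinset] at hx
    have := S.nd_inj _ _ (by simp; have := her x hx; omega) (by simp; have := her x hx; omega) hab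
    exact (Multiset.cons_inj_left _).1 this
  · intro x hx y hy hxy
    simp only [Finset.mem_coe, Multiset.mem_toFinset] at hx hy
    simp only [Function.onFun]
    rw [Finset.disjoint_left]
    intro t ht ht'
    simp only [Finset.mem_image, mem_insF] at ht ht'
    obtain ⟨x', hx', rfl⟩ := ht
    obtain ⟨y', hy', e⟩ := ht'
    have := S.nd_inj _ _ (by simp; have := her y hy; omega) (by simp; have := her x hx; omega) e
    obtain ⟨e1, e2⟩ := S.deep_eq hy' (hmem x) this
    subst e1
    exact hxy (hx'.det S (S.free_mem hs hf hx) y (S.free_mem hs hf hy) hy')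
  · simp only [Finset.mem_biUnion, Multiset.mem_toFinset, Finset.mem_image, mem_insF, not_exists,
      not_and]
    intro x hx x' hx' e
    have := S.nd_inj _ _ (by simp; have := her x hx; omega) (by simp; omega) e
    have hA : A ∈ x' ::ₘ s.erase x := by rw [this]; simp
    rcases Multiset.mem_cons.1 hA with h | h
    · exact hx'.ne S h.symm
    · exact hmem x _ h Has.self

/-- Few multisets of trees have few insertions. -/
lemma few (A : T) (n : ℕ) : ∀ k ≤ n, ∃ F : Finset (Multiset T),
    (∀ s : Multiset T, (∀ x ∈ s, ¬ S.Has A x) → (s.map S.sz).sum ≤ n → S.J A s ≤ k → s ∈ F) ∧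
    F.card ≤ (n + 1) ^ (4 * k + 1) := by
  classical
  intro k
  induction k using Nat.strong_induction_on with
  | _ k ih =>
  intro hk
  have ih' : ∀ i : ℕ, ∃ F : Finset (Multiset T), i < k →
    ((∀ s : Multiset T, (∀ x ∈ s, ¬ S.Has A x) → (s.map S.sz).sum ≤ n → S.J A s ≤ i → s ∈ F) ∧
    F.card ≤ (n + 1) ^ (4 * i + 1)) := by
    intro i
    by_cases h : i < k
    · obtain ⟨F, hF⟩ := ih i h (by omega)
      exact ⟨F, fun _ => hF⟩
    · exact ⟨∅, fun h' => absurd h' h⟩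
  choose F hF using ih'
  refine ⟨(Finset.range (n + 1)).image (fun j => Multiset.replicate j S.leaf) ∪
    (Finset.range k).biUnion fun i => ((F i ×ˢ F (k - 1 - i)) ×ˢ Finset.range (n + 1)).image
      fun p => Multiset.replicate p.2 (S.nd p.1.1) + p.1.2, ?_, ?_⟩
  · intro s hA hsz hJ
    have hcard : ∀ x, s.count x ≤ n := fun x =>
      ((Multiset.count_le_card x s).trans (S.card_le_sum s)).trans hsz
    by_cases hl : ∀ x ∈ s, x = S.leaf
    · rw [Finset.mem_union]; left
      rw [Finset.mem_image]
      refine ⟨s.card, ?_, ?_⟩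
      · have := (S.card_le_sum s).trans hsz
        simp; omega
      · exact (Multiset.eq_replicate_card.2 hl).symm
    · push Not at hl
      obtain ⟨x, hx, hxl⟩ := hl
      rcases S.ex x with rfl | ⟨r, hr, rfl⟩
      · exact absurd rfl hxl
      generalize hxdef : S.nd r = x at *
      have hs : s = Multiset.replicate (s.count x) x + s.filter (· ≠ x) := by
        conv_lhs => rw [← Multiset.filter_add_not (· = x) s]
        congr 1
        exact Multiset.filter_eq' s x
      have hJs : S.J A s = (S.insF A x).card + S.J A (s.filter (· ≠ x)) := by
        unfold J
        have : s.toFinset = insert x (s.filter (· ≠ x)).toFinset := by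
          ext y
          simp only [Multiset.mem_toFinset, Finset.mem_insert, Multiset.mem_filter]
          by_cases h : y = x
          · subst h; simp [hx]
          · simp [h]
        rw [this, Finset.sum_insert]
        simp
      have h1 := S.insF_card r hr (hxdef ▸ hA _ hx)
      rw [hxdef] at h1
      have h2 : S.sz x ≤ n := (S.mem_le_sum hx).trans hsz
      rw [← hxdef, S.sz_nd r hr] at h2
      have hlt : S.J A r < k := by omega
      have hlt2 : k - 1 - S.J A r < k := by omega
      have h3 : ((s.filter (· ≠ x)).map S.sz).sum ≤ n := by
        rw [hs] at hsz
        simp only [Multiset.map_add, Multiset.sum_add] at hsz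
        omega
      rw [Finset.mem_union]; right
      rw [Finset.mem_biUnion]
      refine ⟨S.J A r, by simpa using hlt, ?_⟩
      rw [Finset.mem_image]
      refine ⟨((r, s.filter (· ≠ x)), s.count x), ?_, by rw [hxdef]; exact hs.symm⟩
      simp only [Finset.mem_product, Finset.mem_range]
      refine ⟨⟨(hF _ hlt).1 r (fun y hy => S.free_mem hr (hxdef ▸ hA _ hx) hy) h2 le_rfl, ?_⟩, ?_⟩
      · refine (hF _ hlt2).1 _ (fun y hy => hA y (Multiset.mem_of_mem_filter hy)) h3 ?_
        omega
      · have := hcard x; omega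
  · refine (Finset.card_union_le _ _).trans ?_
    have h1 : ((Finset.range (n + 1)).image (fun j => Multiset.replicate j S.leaf)).card ≤ n + 1 :=
      Finset.card_image_le.trans (by simp)
    have h2 : ((Finset.range k).biUnion fun i => ((F i ×ˢ F (k - 1 - i)) ×ˢ
        Finset.range (n + 1)).image
        fun p => Multiset.replicate p.2 (S.nd p.1.1) + p.1.2).card ≤ k * (n + 1) ^ (4 * k - 1) := by
      refine Finset.card_biUnion_le.trans ?_
      have : ∀ i ∈ Finset.range k, (((F i ×ˢ F (k - 1 - i)) ×ˢ Finset.range (n + 1)).image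
        fun p => Multiset.replicate p.2 (S.nd p.1.1) + p.1.2).card ≤ (n + 1) ^ (4 * k - 1) := by
        intro i hi
        rw [Finset.mem_range] at hi
        refine Finset.card_image_le.trans ?_
        rw [Finset.card_product, Finset.card_product, Finset.card_range]
        calc (F i).card * (F (k - 1 - i)).card * (n + 1)
            ≤ (n + 1) ^ (4 * i + 1) * (n + 1) ^ (4 * (k - 1 - i) + 1) * (n + 1) := by
              gcongr
              · exact (hF i hi).2
              · exact (hF _ (by omega)).2
          _ = (n + 1) ^ (4 * (k - 1) + 3) := by
              rw [← pow_add, ← pow_succ]; congr 1; omega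
          _ = _ := by congr 1; omega
      refine (Finset.sum_le_sum this).trans ?_
      simp
    refine (Nat.add_le_add h1 h2).trans ?_
    rcases Nat.eq_zero_or_pos k with rfl | hk0
    · simp
    · obtain ⟨j, rfl⟩ : ∃ j, k = j + 1 := ⟨k - 1, by omega⟩
      have e1 : 4 * (j + 1) - 1 = 4 * j + 3 := by omega
      have e2 : 4 * (j + 1) + 1 = 4 * j + 3 + 2 := by omega
      rw [e1, e2]
      have h3 : n + 1 ≤ (n + 1) ^ (4 * j + 3) := Nat.le_self_pow (by omega) _
      have h4 : (n + 1) ^ (4 * j + 3 + 2) = (n + 1) ^ (4 * j + 3) * (n + 1) ^ 2 := pow_add _ _ _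
      rw [h4]
      generalize (n + 1) ^ (4 * j + 3) = P at *
      calc n + 1 + (j + 1) * P ≤ P + n * P := by gcongr
        _ ≤ P * (n + 1) ^ 2 := by nlinarith [Nat.zero_le (P * n), Nat.zero_le (P * n ^ 2)]

/-- number of `A`-free trees with `n` leaves -/
noncomputable def free (A : T) (n : ℕ) : ℕ := {t | S.sz t = n ∧ ¬ S.Has A t}.ncard

lemma free_le (A : T) (n K : ℕ) (hK : K ≤ n) :
    K * S.free A n ≤ S.num (n + S.sz A) + K * ((n + 1) ^ (4 * K + 1) + 1) := by
  classical
  obtain ⟨F, hF, hFc⟩ := S.few A n K hK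
  have hfin : {t | S.sz t = n ∧ ¬ S.Has A t}.Finite := (S.fin n).subset fun _ h => h.1
  set U := hfin.toFinset with hU
  have hUc : S.free A n = U.card := Set.ncard_eq_toFinset_card _ hfin
  have memU : ∀ t, t ∈ U ↔ S.sz t = n ∧ ¬ S.Has A t := fun t => by simp [hU]
  have hsplit := Finset.card_filter_add_card_filter_not (s := U)
    (fun t => K ≤ (S.insF A t).card)
  have hb : (U.filter fun t => ¬ K ≤ (S.insF A t).card).card ≤ (n + 1) ^ (4 * K + 1) + 1 := by
    have : (U.filter fun t => ¬ K ≤ (S.insF A t).card) ⊆ insert S.leaf (F.image S.nd) := by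
      intro t ht
      rw [Finset.mem_filter, memU] at ht
      rcases S.ex t with rfl | ⟨s, hs, rfl⟩
      · simp
      · rw [Finset.mem_insert]; right
        refine Finset.mem_image_of_mem _ (hF s (fun x hx => S.free_mem hs ht.1.2 hx) ?_ ?_)
        · rw [← S.sz_nd s hs, ht.1.1]
        · have := S.insF_card s hs ht.1.2
          omega
    refine (Finset.card_le_card this).trans ((Finset.card_insert_le _ _).trans ?_)
    have := (Finset.card_image_le (s := F) (f := S.nd)).trans hFc
    omega
  have ha : K * (U.filter fun t => K ≤ (S.insF A t).card).card ≤ S.num (n + S.sz A) := by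
    set W := U.filter fun t => K ≤ (S.insF A t).card with hW
    have h1 : (W.biUnion (S.insF A)).card = ∑ t ∈ W, (S.insF A t).card := by
      apply Finset.card_biUnion
      intro x hx y hy hxy
      simp only [hW, Finset.mem_coe, Finset.mem_filter, memU] at hx hy
      simp only [Function.onFun]
      rw [Finset.disjoint_left]
      intro t ht ht'
      rw [mem_insF] at ht ht'
      exact hxy (ht.det S hx.1.2 y hy.1.2 ht')
    have h2 : K * W.card ≤ ∑ t ∈ W, (S.insF A t).card := by
      rw [mul_comm, ← smul_eq_mul]
      exact Finset.card_nsmul_le_sum _ _ _ fun t ht => (Finset.mem_filter.1 ht).2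
    rw [← h1] at h2
    refine h2.trans ?_
    unfold num
    rw [← Set.ncard_coe_finset]
    refine Set.ncard_le_ncard ?_ (S.fin _)
    intro t ht
    simp only [Finset.coe_biUnion, Set.mem_iUnion, Finset.mem_coe] at ht
    obtain ⟨x, hx, hxt⟩ := ht
    rw [mem_insF] at hxt
    simp only [hW, Finset.mem_filter, memU] at hx
    simp only [Set.mem_ofPred_eq]
    rw [hxt.sz_eq, hx.1.1]
  rw [hUc, ← hsplit, mul_add]
  exact Nat.add_le_add ha (Nat.mul_le_mul_left K hb)

open Filter Topology

lemma asym (m : ℕ) : Tendsto (fun n : ℕ => ((2 * Nat.log 2 (n + m)) ^ m : ℝ) / (Nat.sqrt n : ℝ) +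
    (((n : ℝ) + 1) ^ (4 * Nat.sqrt n + 1) + 1) / 2 ^ (n - 2)) atTop (𝓝 0) := by
  have hsq : Tendsto Nat.sqrt atTop atTop := by
    refine tendsto_atTop.2 fun b => ?_
    filter_upwards [eventually_ge_atTop (b * b)] with n hn
    exact Nat.le_sqrt.2 hn
  have hlim : Tendsto (fun k : ℕ => 12 ^ m * (Real.log k ^ m / (k : ℝ)) + 8 * (1 / ((k : ℝ) + 1)))
      atTop (𝓝 0) := by
    have h1 : Tendsto (fun k : ℕ => Real.log k ^ m / (k : ℝ)) atTop (𝓝 0) :=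
      ((Real.isLittleO_pow_log_id_atTop (n := m)).tendsto_div_nhds_zero).comp
        tendsto_natCast_atTop_atTop
    have h2 : Tendsto (fun k : ℕ => 1 / ((k : ℝ) + 1)) atTop (𝓝 0) :=
      tendsto_one_div_add_atTop_nhds_zero_nat
    simpa using (h1.const_mul (12 ^ m)).add (h2.const_mul 8)
  have hpow : ∀ᶠ k : ℕ in atTop, ((k : ℝ) + 1) ^ 16 ≤ 2 ^ k := by
    have h := (tendsto_pow_const_div_const_pow_of_one_lt 16 (show (1 : ℝ) < 2 by norm_num)).comp
      (tendsto_add_atTop_nat 1)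
    have h2 := h.eventually (gt_mem_nhds (show (0 : ℝ) < 1 / 2 by norm_num))
    filter_upwards [h2] with k hk
    simp only [Function.comp] at hk
    rw [div_lt_iff₀ (by positivity), pow_succ 2] at hk
    push_cast at hk
    linarith
  refine tendsto_of_tendsto_of_tendsto_of_le_of_le' tendsto_const_nhds (hlim.comp hsq)
    (Eventually.of_forall fun n => by positivity) ?_
  filter_upwards [hsq.eventually hpow, hsq.eventually (eventually_ge_atTop (m + 4)),
    eventually_ge_atTop 2] with n h1 h2 hn
  simp only [Function.comp]
  have hk1 : n ≤ Nat.sqrt n * Nat.sqrt n + Nat.sqrt n + Nat.sqrt n := Nat.sqrt_le_add n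
  have hk2 : Nat.sqrt n * Nat.sqrt n ≤ n := Nat.sqrt_le n
  generalize Nat.sqrt n = k at *
  have hkr : (4 : ℝ) ≤ k := by exact_mod_cast (show 4 ≤ k by omega)
  refine add_le_add ?_ ?_
  · rw [← mul_div_assoc, ← mul_pow]
    refine div_le_div_of_nonneg_right (pow_le_pow_left₀ (by positivity) ?_ m) (by positivity)
    have hnm : n + m ≤ k ^ 3 := by nlinarith
    have h3 : Nat.log 2 (n + m) * Real.log 2 ≤ Real.log ((k : ℝ) ^ 3) := by
      rw [← Real.log_pow]
      apply Real.log_le_log (by positivity)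
      have : 2 ^ Nat.log 2 (n + m) ≤ n + m := Nat.pow_log_le_self 2 (by omega)
      exact_mod_cast this.trans hnm
    rw [Real.log_pow] at h3
    have h4 := Real.log_two_gt_d9
    have h5 : (0 : ℝ) ≤ Nat.log 2 (n + m) := by positivity
    push_cast at h3
    nlinarith
  · have hb : ((n : ℝ) + 1) ≤ ((k : ℝ) + 1) ^ 2 := by
      have : n + 1 ≤ (k + 1) ^ 2 := by nlinarith
      exact_mod_cast this
    have hk0 : (1 : ℝ) ≤ (k : ℝ) + 1 := by linarith
    have e1 : ((n : ℝ) + 1) ^ (4 * k + 1) ≤ ((k : ℝ) + 1) ^ (8 * k + 2) := by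
      calc ((n : ℝ) + 1) ^ (4 * k + 1) ≤ (((k : ℝ) + 1) ^ 2) ^ (4 * k + 1) := by gcongr
        _ = _ := by rw [← pow_mul]; congr 1; ring
    have e2 : ((k : ℝ) + 1) ^ (8 * k + 2) * ((k : ℝ) + 1) ≤ 2 ^ n := by
      calc ((k : ℝ) + 1) ^ (8 * k + 2) * ((k : ℝ) + 1) = ((k : ℝ) + 1) ^ (8 * k + 3) := by ring
        _ ≤ ((k : ℝ) + 1) ^ (16 * k) := pow_le_pow_right₀ hk0 (by omega)
        _ = (((k : ℝ) + 1) ^ 16) ^ k := by rw [← pow_mul]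
        _ ≤ (2 ^ k) ^ k := by gcongr
        _ = 2 ^ (k * k) := by rw [← pow_mul]
        _ ≤ 2 ^ n := pow_le_pow_right₀ (by norm_num) hk2
    have e3 : (1 : ℝ) ≤ ((k : ℝ) + 1) ^ (8 * k + 2) := one_le_pow₀ hk0
    have e4 : (2 : ℝ) ^ n = 2 ^ (n - 2) * 4 := by
      conv_lhs => rw [show n = n - 2 + 2 by omega, pow_add]
      norm_num
    rw [div_le_iff₀ (by positivity), mul_one_div, div_mul_eq_mul_div, le_div_iff₀ (by positivity)]
    calc (((n : ℝ) + 1) ^ (4 * k + 1) + 1) * ((k : ℝ) + 1)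
        ≤ (2 * ((k : ℝ) + 1) ^ (8 * k + 2)) * ((k : ℝ) + 1) := by gcongr; linarith
      _ ≤ 2 * 2 ^ n := by rw [mul_assoc]; gcongr
      _ = _ := by rw [e4]; ring

theorem free_div_num (A : T) :
    Tendsto (fun n : ℕ => (S.free A n : ℝ) / (S.num n : ℝ)) atTop (𝓝 0) := by
  refine tendsto_of_tendsto_of_tendsto_of_le_of_le' tendsto_const_nhds (asym (S.sz A))
    (Eventually.of_forall fun n => by positivity) ?_
  filter_upwards [eventually_ge_atTop 2] with n hn
  have h1 := S.free_le A n (Nat.sqrt n) (Nat.sqrt_le_self n)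
  have h2 := S.num_add_le n (S.sz A) (by omega)
  have h3 := S.num_ge (n - 2)
  rw [show n - 2 + 2 = n by omega] at h3
  have hK : 0 < Nat.sqrt n := Nat.sqrt_pos.2 (by omega)
  have h1' : (Nat.sqrt n : ℝ) * S.free A n ≤ (2 * Nat.log 2 (n + S.sz A)) ^ (S.sz A) * S.num n +
      Nat.sqrt n * (((n : ℝ) + 1) ^ (4 * Nat.sqrt n + 1) + 1) := by
    exact_mod_cast h1.trans (Nat.add_le_add_right h2 _)
  have h3' : (2 : ℝ) ^ (n - 2) ≤ S.num n := by exact_mod_cast h3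
  have hKr : (0 : ℝ) < Nat.sqrt n := by exact_mod_cast hK
  have hnum : (0 : ℝ) < S.num n := lt_of_lt_of_le (by positivity) h3'
  rw [div_le_iff₀ hnum]
  set B : ℝ := (2 * Nat.log 2 (n + S.sz A)) ^ (S.sz A)
  set E : ℝ := ((n : ℝ) + 1) ^ (4 * Nat.sqrt n + 1) + 1
  have hE : 0 ≤ E := by positivity
  have h4 : E ≤ E / 2 ^ (n - 2) * S.num n := by
    rw [div_mul_eq_mul_div, le_div_iff₀ (by positivity)]
    gcongr
  have h5 : (S.free A n : ℝ) ≤ B / Nat.sqrt n * S.num n + E := by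
    have : B / Nat.sqrt n * S.num n + E = (B * S.num n + Nat.sqrt n * E) / Nat.sqrt n := by
      field_simp
    rw [this, le_div_iff₀ hKr, mul_comm]
    exact h1'
  linarith [add_mul (B / Nat.sqrt n) (E / 2 ^ (n - 2)) (S.num n : ℝ)]

end TreeSys
open SimpleGraph

namespace CG

instance gsetoid : Setoid (Σ n : ℕ, SimpleGraph (Fin n)) where
  r a b := Nonempty (a.2 ≃g b.2)
  iseqv := ⟨fun _ => ⟨Iso.refl⟩, fun ⟨e⟩ => ⟨e.symm⟩, fun ⟨e⟩ ⟨f⟩ => ⟨e.trans f⟩⟩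

/-- Isomorphism classes of finite graphs. -/
def GC : Type := Quotient gsetoid

noncomputable def cls {V : Type} [Finite V] (G : SimpleGraph V) : GC :=
  Quotient.mk gsetoid ⟨Nat.card V, G.map (Finite.equivFin V).toEmbedding⟩

noncomputable def size (g : GC) : ℕ := (Quotient.out g).1

noncomputable def rep (g : GC) : SimpleGraph (Fin (size g)) := (Quotient.out g).2

theorem cls_eq {V W : Type} [Finite V] [Finite W] {G : SimpleGraph V} {H : SimpleGraph W} :
    cls G = cls H ↔ Nonempty (G ≃g H) := by
  refine Iff.trans (Quotient.eq (r := gsetoid)) ?_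
  constructor
  · rintro ⟨e⟩
    exact ⟨((Iso.map (Finite.equivFin V) G).trans e).trans (Iso.map (Finite.equivFin W) H).symm⟩
  · rintro ⟨e⟩
    exact ⟨((Iso.map (Finite.equivFin V) G).symm.trans e).trans (Iso.map (Finite.equivFin W) H)⟩

theorem cls_rep (g : GC) : cls (rep g) = g := by
  refine Eq.trans ?_ (Quotient.out_eq g)
  exact Quotient.sound (s := gsetoid) ⟨(Iso.map (Finite.equivFin _) _).symm⟩

theorem ex_rep (g : GC) : ∃ n, ∃ G : SimpleGraph (Fin n), cls G = g := ⟨_, _, cls_rep g⟩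

noncomputable def repIso {V : Type} [Finite V] (G : SimpleGraph V) : rep (cls G) ≃g G :=
  (cls_eq.1 (cls_rep (cls G))).some

theorem size_cls {V : Type} [Finite V] (G : SimpleGraph V) : size (cls G) = Nat.card V := by
  have := Nat.card_congr (repIso G).toEquiv
  simpa using this

def complIso {V W : Type} {G : SimpleGraph V} {H : SimpleGraph W} (e : G ≃g H) : Gᶜ ≃g Hᶜ where
  toEquiv := e.toEquiv
  map_rel_iff' := by
    intro a b
    change (¬ (e a = e b) ∧ ¬ H.Adj (e a) (e b)) ↔ (¬ (a = b) ∧ ¬ G.Adj a b)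
    rw [e.map_adj_iff, e.injective.eq_iff]

noncomputable def gcompl (g : GC) : GC := cls (rep g)ᶜ

theorem gcompl_cls {V : Type} [Finite V] (G : SimpleGraph V) : gcompl (cls G) = cls Gᶜ :=
  cls_eq.2 ⟨complIso (repIso G)⟩

theorem gcompl_gcompl (g : GC) : gcompl (gcompl g) = g := by
  obtain ⟨n, G, rfl⟩ := ex_rep g
  rw [gcompl_cls, gcompl_cls, compl_compl]

theorem size_gcompl (g : GC) : size (gcompl g) = size g := by
  obtain ⟨n, G, rfl⟩ := ex_rep g
  rw [gcompl_cls, size_cls, size_cls]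

noncomputable instance : Add GC := ⟨fun g h => cls (rep g ⊕g rep h)⟩
noncomputable instance : Zero GC := ⟨cls (⊥ : SimpleGraph (Fin 0))⟩

theorem add_cls {V W : Type} [Finite V] [Finite W] (G : SimpleGraph V) (H : SimpleGraph W) :
    cls G + cls H = cls (G ⊕g H) :=
  cls_eq.2 ⟨Iso.sumCongr (repIso G) (repIso H)⟩

theorem zero_def : (0 : GC) = cls (⊥ : SimpleGraph (Fin 0)) := rfl

theorem cls_empty {V : Type} [Finite V] [IsEmpty V] (G : SimpleGraph V) : cls G = 0 := by
  rw [zero_def, cls_eq]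
  exact ⟨⟨Equiv.equivOfIsEmpty _ _, fun {a} => isEmptyElim a⟩⟩

theorem gadd_comm (a b : GC) : a + b = b + a := by
  obtain ⟨n, G, rfl⟩ := ex_rep a; obtain ⟨m, H, rfl⟩ := ex_rep b
  rw [add_cls, add_cls, cls_eq]
  exact ⟨Iso.sumComm⟩

theorem gzero_add (a : GC) : 0 + a = a := by
  obtain ⟨n, G, rfl⟩ := ex_rep a
  rw [zero_def, add_cls, cls_eq]
  refine ⟨⟨Equiv.emptySum _ _, ?_⟩⟩
  rintro (a | a) (b | b)
  · exact a.elim0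
  · exact a.elim0
  · exact b.elim0
  · simp

noncomputable instance : AddCommMonoid GC where
  add_assoc a b c := by
    obtain ⟨n, G, rfl⟩ := ex_rep a; obtain ⟨m, H, rfl⟩ := ex_rep b; obtain ⟨k, K, rfl⟩ := ex_rep c
    rw [add_cls, add_cls, add_cls, add_cls, cls_eq]
    exact ⟨Iso.sumAssoc⟩
  zero_add := gzero_add
  add_zero a := by rw [gadd_comm, gzero_add]
  add_comm := gadd_comm
  nsmul := nsmulRec

theorem size_add (a b : GC) : size (a + b) = size a + size b := by
  obtain ⟨n, G, rfl⟩ := ex_rep a; obtain ⟨m, H, rfl⟩ := ex_rep b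
  rw [add_cls, size_cls, size_cls, size_cls]; simp

theorem size_zero : size 0 = 0 := by rw [zero_def, size_cls]; simp

theorem size_sum (s : Multiset GC) : size s.sum = (s.map size).sum := by
  induction s using Multiset.induction_on with
  | empty => simp [size_zero]
  | cons a s ih => simp [size_add, ih]

def Conn (g : GC) : Prop := (rep g).Connected

theorem conn_cls {V : Type} [Finite V] (G : SimpleGraph V) : Conn (cls G) ↔ G.Connected :=
  (repIso G).connected_iff

/-! components -/

section closed
variable {V W : Type} {G : SimpleGraph V} {K : SimpleGraph W}

theorem reach_closed (f : G ↪g K)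
    (hf : ∀ x y, K.Adj (f x) y → ∃ z, f z = y) {u w : W} (h : K.Reachable u w) :
    ∀ x, f x = u → ∃ z, f z = w ∧ G.Reachable x z := by
  rw [reachable_iff_reflTransGen] at h
  induction h with
  | refl => intro x hx; exact ⟨x, hx, Reachable.rfl⟩
  | tail _ hbc ih =>
    intro x hx
    obtain ⟨z, rfl, hz⟩ := ih x hx
    obtain ⟨z', rfl⟩ := hf _ _ hbc
    exact ⟨z', rfl, hz.trans (f.map_adj_iff.1 hbc).reachable⟩

theorem reach_closed_iff (f : G ↪g K)
    (hf : ∀ x y, K.Adj (f x) y → ∃ z, f z = y) {x z : V} : K.Reachable (f x) (f z) ↔ G.Reachable x z := by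
  constructor
  · intro h
    obtain ⟨z', hz', hr⟩ := reach_closed f hf h x rfl
    rwa [f.injective hz'] at hr
  · intro h; exact h.map f.toHom

theorem map_closed_inj (f : G ↪g K)
    (hf : ∀ x y, K.Adj (f x) y → ∃ z, f z = y) : Function.Injective (ConnectedComponent.map f.toHom) := by
  intro c d
  refine ConnectedComponent.ind₂ (fun v w => ?_) c d
  intro h
  simp only [ConnectedComponent.map_mk, ConnectedComponent.eq] at h ⊢
  exact (reach_closed_iff f hf).1 h

theorem iso_closed (f : G ↪g K)
    (hf : ∀ x y, K.Adj (f x) y → ∃ z, f z = y) (c : G.ConnectedComponent) :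
    Nonempty (c.toSimpleGraph ≃g (c.map f.toHom).toSimpleGraph) := by
  refine ConnectedComponent.ind (fun v => ?_) c
  have hm : ∀ x : V, x ∈ (G.connectedComponentMk v).supp ↔
      f x ∈ ((G.connectedComponentMk v).map f.toHom).supp := by
    intro x
    simp only [ConnectedComponent.mem_supp_iff, ConnectedComponent.map_mk, ConnectedComponent.eq]
    exact (reach_closed_iff f hf).symm
  let φ : (G.connectedComponentMk v).supp → ((G.connectedComponentMk v).map f.toHom).supp :=
    fun x => ⟨f x.1, (hm x.1).1 x.2⟩
  have hφ : Function.Bijective φ := by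
    constructor
    · intro x y h
      exact Subtype.ext (f.injective (congrArg Subtype.val h))
    · rintro ⟨y, hy⟩
      have hy' := hy
      simp only [ConnectedComponent.mem_supp_iff, ConnectedComponent.map_mk,
        ConnectedComponent.eq] at hy'
      obtain ⟨z, rfl, hz⟩ := reach_closed f hf hy'.symm v rfl
      exact ⟨⟨z, (hm z).2 hy⟩, rfl⟩
  exact ⟨⟨Equiv.ofBijective φ hφ, by
    intro a b
    change K.Adj (f a.1) (f b.1) ↔ G.Adj a.1 b.1
    exact f.map_adj_iff⟩⟩
end closed

open Classical in
noncomputable def compsG {V : Type} [Finite V] (G : SimpleGraph V) : Multiset GC :=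
  let := Fintype.ofFinite G.ConnectedComponent
  ∑ c : G.ConnectedComponent, {cls c.toSimpleGraph}

theorem compsG_iso {V W : Type} [Finite V] [Finite W] {G : SimpleGraph V} {H : SimpleGraph W}
    (e : G ≃g H) : compsG G = compsG H := by
  unfold compsG
  let := Fintype.ofFinite G.ConnectedComponent
  let := Fintype.ofFinite H.ConnectedComponent
  refine Fintype.sum_equiv e.connectedComponentEquiv _ _ fun c => ?_
  congr 1
  rw [cls_eq]
  exact iso_closed e.toEmbedding (fun x y _ => ⟨e.symm y, by simp⟩) c

theorem compsG_sum {V W : Type} [Finite V] [Finite W] (G : SimpleGraph V) (H : SimpleGraph W) :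
    compsG (G ⊕g H) = compsG G + compsG H := by
  classical
  unfold compsG
  let := Fintype.ofFinite G.ConnectedComponent
  let := Fintype.ofFinite H.ConnectedComponent
  let := Fintype.ofFinite (G ⊕g H).ConnectedComponent
  let i1 : G ↪g (G ⊕g H) := Embedding.sumInl
  let i2 : H ↪g (G ⊕g H) := Embedding.sumInr
  have h1 : ∀ x y, (G ⊕g H).Adj (i1 x) y → ∃ z, i1 z = y := by
    rintro x (y | y) h
    · exact ⟨y, rfl⟩
    · exact absurd h (by change ¬ (G ⊕g H).Adj (Sum.inl x) _; simp)
  have h2 : ∀ x y, (G ⊕g H).Adj (i2 x) y → ∃ z, i2 z = y := by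
    rintro x (y | y) h
    · exact absurd h (by change ¬ (G ⊕g H).Adj (Sum.inr x) _; simp)
    · exact ⟨y, rfl⟩
  let ψ : G.ConnectedComponent ⊕ H.ConnectedComponent → (G ⊕g H).ConnectedComponent :=
    Sum.elim (ConnectedComponent.map i1.toHom) (ConnectedComponent.map i2.toHom)
  have hψ : Function.Bijective ψ := by
    constructor
    · rw [Sum.elim_injective]
      refine ⟨map_closed_inj i1 h1, map_closed_inj i2 h2, ?_⟩
      intro a b
      refine ConnectedComponent.ind (fun v => ?_) a
      refine ConnectedComponent.ind (fun w => ?_) b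
      simp only [ConnectedComponent.map_mk, ne_eq, ConnectedComponent.eq]
      exact not_reachable_sum_inl_inr v w
    · intro c
      refine ConnectedComponent.ind (fun v => ?_) c
      rcases v with v | v
      · exact ⟨Sum.inl (G.connectedComponentMk v), rfl⟩
      · exact ⟨Sum.inr (H.connectedComponentMk v), rfl⟩
  have key : ∑ c : (G ⊕g H).ConnectedComponent, ({cls c.toSimpleGraph} : Multiset GC)
      = ∑ c : G.ConnectedComponent ⊕ H.ConnectedComponent, {cls (ψ c).toSimpleGraph} :=
    (Fintype.sum_equiv (Equiv.ofBijective ψ hψ) _ _ fun c => rfl).symm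
  have e1 : ∀ c : G.ConnectedComponent, cls (ψ (Sum.inl c)).toSimpleGraph = cls c.toSimpleGraph :=
    fun c => (cls_eq.2 (iso_closed i1 h1 c)).symm
  have e2 : ∀ c : H.ConnectedComponent, cls (ψ (Sum.inr c)).toSimpleGraph = cls c.toSimpleGraph :=
    fun c => (cls_eq.2 (iso_closed i2 h2 c)).symm
  rw [key, Fintype.sum_sum_type]
  congr 1
  · exact Finset.sum_congr rfl fun c _ => by rw [e1]
  · exact Finset.sum_congr rfl fun c _ => by rw [e2]

noncomputable def comps (g : GC) : Multiset GC := compsG (rep g)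

theorem comps_cls {V : Type} [Finite V] (G : SimpleGraph V) : comps (cls G) = compsG G :=
  compsG_iso (repIso G)

theorem comps_add (g h : GC) : comps (g + h) = comps g + comps h := by
  obtain ⟨n, G, rfl⟩ := ex_rep g; obtain ⟨m, H, rfl⟩ := ex_rep h
  rw [add_cls, comps_cls, comps_cls, comps_cls, compsG_sum]

theorem comps_zero : comps 0 = 0 := by
  have := comps_add 0 0
  rw [add_zero] at this
  simpa using this

theorem comps_conn {g : GC} (hg : Conn g) : comps g = {g} := by
  obtain ⟨n, G, rfl⟩ := ex_rep g
  rw [conn_cls] at hg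
  rw [comps_cls]
  unfold compsG
  let := Fintype.ofFinite G.ConnectedComponent
  obtain ⟨v⟩ := hg.nonempty
  have := hg.preconnected.subsingleton_connectedComponent
  rw [Fintype.sum_subsingleton _ (G.connectedComponentMk v)]
  congr 1
  rw [cls_eq]
  refine ⟨⟨Equiv.subtypeUnivEquiv (fun x => ?_), ?_⟩⟩
  · change x ∈ (G.connectedComponentMk v).supp
    rw [ConnectedComponent.mem_supp_iff, ConnectedComponent.eq]
    exact hg.preconnected _ _
  · intro a b; rfl

theorem comps_sum (s : Multiset GC) (hs : ∀ x ∈ s, Conn x) : comps s.sum = s := by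
  induction s using Multiset.induction_on with
  | empty => simp [comps_zero]
  | cons a s ih =>
    rw [Multiset.sum_cons, comps_add, comps_conn (hs a (by simp)),
      ih (fun x hx => hs x (by simp [hx]))]
    simp

theorem split {V : Type} [Finite V] (G : SimpleGraph V) (p : V → Prop)
    (hp : ∀ x y, G.Adj x y → (p x ↔ p y)) :
    cls G = cls (G.induce {x | p x}) + cls (G.induce {x | ¬ p x}) := by
  classical
  rw [add_cls, cls_eq]
  refine ⟨Iso.symm ⟨Equiv.sumCompl p, ?_⟩⟩
  rintro (⟨a, ha⟩ | ⟨a, ha⟩) (⟨b, hb⟩ | ⟨b, hb⟩)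
  · change G.Adj a b ↔ _
    rw [sum_adj_inl]; rfl
  · change G.Adj a b ↔ _
    constructor
    · intro h; exact absurd ((hp _ _ h).1 ha) hb
    · intro h; simp at h
  · change G.Adj a b ↔ _
    constructor
    · intro h; exact absurd ((hp _ _ h).2 hb) ha
    · intro h; simp at h
  · change G.Adj a b ↔ _
    rw [sum_adj_inr]; rfl

theorem split_exists (g : GC) (h0 : 0 < size g) (hg : ¬ Conn g) :
    ∃ a b, g = a + b ∧ 0 < size a ∧ 0 < size b := by
  obtain ⟨n, G, rfl⟩ := ex_rep g
  rw [size_cls] at h0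
  have : Nonempty (Fin n) := (Nat.card_pos_iff.1 h0).1
  rw [conn_cls, connected_iff] at hg
  have hg' : ¬ G.Preconnected := fun h => hg ⟨h, inferInstance⟩
  unfold Preconnected at hg'
  push Not at hg'
  obtain ⟨u, v, huv⟩ := hg'
  refine ⟨_, _, split G (fun x => G.Reachable u x) ?_, ?_, ?_⟩
  · intro x y hxy
    exact ⟨fun h => h.trans hxy.reachable, fun h => h.trans hxy.symm.reachable⟩
  · rw [size_cls]
    exact Nat.card_pos_iff.2 ⟨⟨⟨u, Reachable.rfl⟩⟩, inferInstance⟩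
  · rw [size_cls]
    exact Nat.card_pos_iff.2 ⟨⟨⟨v, huv⟩⟩, inferInstance⟩

theorem eq_zero_of_size {g : GC} (h : size g = 0) : g = 0 := by
  obtain ⟨n, G, rfl⟩ := ex_rep g
  rw [size_cls] at h
  simp at h; subst h
  exact cls_empty G

theorem exists_decomp (g : GC) : ∃ s : Multiset GC, (∀ x ∈ s, Conn x) ∧ s.sum = g := by
  induction h : size g using Nat.strong_induction_on generalizing g with
  | _ n ih =>
  by_cases hc : Conn g
  · exact ⟨{g}, by simpa using hc, by simp⟩
  rcases Nat.eq_zero_or_pos (size g) with h0 | h0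
  · exact ⟨0, by simp, by rw [eq_zero_of_size h0]; simp⟩
  obtain ⟨a, b, rfl, ha, hb⟩ := split_exists g h0 hc
  rw [size_add] at h
  obtain ⟨s, hs, rfl⟩ := ih _ (by omega) a rfl
  obtain ⟨t, ht, rfl⟩ := ih _ (by omega) b rfl
  refine ⟨s + t, ?_, by simp⟩
  intro x hx
  rcases Multiset.mem_add.1 hx with hx | hx
  exacts [hs x hx, ht x hx]

theorem gadd_cancel {a b c : GC} (h : a + c = b + c) : a = b := by
  obtain ⟨s, hs, rfl⟩ := exists_decomp a
  obtain ⟨t, ht, rfl⟩ := exists_decomp b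
  have h2 := congrArg comps h
  rw [comps_add, comps_add, comps_sum s hs, comps_sum t ht] at h2
  rw [add_right_cancel h2]

end CG

namespace CG

/-- An explicit form: no induced `P₄`. -/
theorem isCograph_iff {V : Type} (G : SimpleGraph V) : IsCograph G ↔
    ∀ a b c d : V, G.Adj a b → G.Adj b c → G.Adj c d → ¬ G.Adj a c → ¬ G.Adj a d → ¬ G.Adj b d →
      a ≠ c → a ≠ d → b ≠ d → False := by
  unfold IsCograph
  constructor
  · intro h a b c d ab bc cd ac ad bd nac nad nbd
    apply h
    have nab := ab.ne
    have nbc := bc.ne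
    have ncd := cd.ne
    refine ⟨⟨![a, b, c, d], ?_⟩, ?_⟩
    · intro i j
      fin_cases i <;> fin_cases j <;> simp_all [eq_comm]
    · intro i j
      change G.Adj (![a, b, c, d] i) (![a, b, c, d] j) ↔ _
      clear h
      fin_cases i <;> fin_cases j <;> simp_all [pathGraph_adj, G.adj_comm]
  · rintro h ⟨f, hf⟩
    refine h (f 0) (f 1) (f 2) (f 3) ?_ ?_ ?_ ?_ ?_ ?_ ?_ ?_ ?_ <;>
      first
      | (rw [hf]; simp [pathGraph_adj])
      | (apply f.injective.ne; decide)

theorem isCograph_emb {V W : Type} {G : SimpleGraph V} {H : SimpleGraph W} (e : G ↪g H)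
    (h : IsCograph H) : IsCograph G := by
  rintro ⟨f, hf⟩
  exact h ⟨f.trans e.toEmbedding, fun i j => by rw [← hf]; exact e.map_adj_iff⟩

theorem isCograph_iso {V W : Type} {G : SimpleGraph V} {H : SimpleGraph W} (e : G ≃g H) :
    IsCograph G ↔ IsCograph H :=
  ⟨isCograph_emb e.symm.toEmbedding, isCograph_emb e.toEmbedding⟩

theorem isCograph_compl {V : Type} {G : SimpleGraph V} (h : IsCograph G) : IsCograph Gᶜ := by
  rw [isCograph_iff] at h ⊢
  intro a b c d ab bc cd ac ad bd nac nad nbd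
  simp only [compl_adj, not_and, not_not] at *
  exact h b d a c (bd nbd) (ad nad).symm (ac nac) (fun h => ab.2 h.symm) bc.2
    (fun h => cd.2 h.symm) ab.1.symm bc.1 cd.1.symm

theorem isCograph_sum {V W : Type} {G : SimpleGraph V} {H : SimpleGraph W} :
    IsCograph (G ⊕g H) ↔ IsCograph G ∧ IsCograph H := by
  constructor
  · intro h
    exact ⟨isCograph_emb Embedding.sumInl h, isCograph_emb Embedding.sumInr h⟩
  · rintro ⟨h1, h2⟩
    rw [isCograph_iff] at *
    rintro (a | a) (b | b) (c | c) (d | d) ab bc cd ac ad bd nac nad nbd <;> simp at ab bc cd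
    · exact h1 a b c d ab bc cd (by simpa using ac) (by simpa using ad) (by simpa using bd)
        (by simpa using nac) (by simpa using nad) (by simpa using nbd)
    · exact h2 a b c d ab bc cd (by simpa using ac) (by simpa using ad) (by simpa using bd)
        (by simpa using nac) (by simpa using nad) (by simpa using nbd)

def Cog (g : GC) : Prop := IsCograph (rep g)

theorem cog_cls {V : Type} [Finite V] (G : SimpleGraph V) : Cog (cls G) ↔ IsCograph G :=
  isCograph_iso (repIso G)

theorem cog_compl (g : GC) : Cog (gcompl g) ↔ Cog g := by
  have key : ∀ g, Cog g → Cog (gcompl g) := by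
    intro g
    obtain ⟨n, G, rfl⟩ := ex_rep g
    rw [gcompl_cls, cog_cls, cog_cls]
    exact isCograph_compl
  refine ⟨fun h => ?_, key g⟩
  have := key _ h
  rwa [gcompl_gcompl] at this

theorem cog_add (g h : GC) : Cog (g + h) ↔ Cog g ∧ Cog h := by
  obtain ⟨n, G, rfl⟩ := ex_rep g
  obtain ⟨m, H, rfl⟩ := ex_rep h
  rw [add_cls, cog_cls, cog_cls, cog_cls, isCograph_sum]

theorem cog_zero : Cog 0 := by
  rw [zero_def, cog_cls]
  rintro ⟨f, _⟩
  exact (f 0).elim0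

theorem cog_sum (s : Multiset GC) : Cog s.sum ↔ ∀ x ∈ s, Cog x := by
  induction s using Multiset.induction_on with
  | empty => simp [cog_zero]
  | cons a s ih => simp [cog_add, ih]

/-- Key step: if `G - v` is disconnected, and `G` is a cograph, then `G` or its complement
is disconnected. -/
theorem step {V : Type} (G : SimpleGraph V) (hG : IsCograph G) (v : V)
    (h : ¬ (G.induce {x | x ≠ v}).Preconnected) (hc : G.Connected) (hcc : Gᶜ.Connected) :
    False := by
  rw [isCograph_iff] at hG
  unfold Preconnected at h
  push Not at h
  obtain ⟨p, q, hpq⟩ := h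
  set K := G.induce {x | x ≠ v} with hK
  -- every component of `G - v` has a neighbour of `v`
  have hnb : ∀ p : {x | x ≠ v}, ∃ x : {x | x ≠ v}, K.Reachable p x ∧ G.Adj v x := by
    intro p
    by_contra hno
    push Not at hno
    have key : ∀ w, G.Reachable p w → ∃ hw : w ≠ v, K.Reachable p ⟨w, hw⟩ := by
      intro w hw
      rw [reachable_iff_reflTransGen] at hw
      induction hw with
      | refl => exact ⟨p.2, Reachable.rfl⟩
      | @tail b c _ hbc ih =>
        obtain ⟨hb, hr⟩ := ih
        have hcv : c ≠ v := by
          rintro rfl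
          exact hno ⟨b, hb⟩ hr hbc.symm
        refine ⟨hcv, hr.trans (Adj.reachable ?_)⟩
        exact hbc
    exact (key v (hc.preconnected _ _)).1 rfl
  -- `v` has a non-neighbour
  obtain ⟨y0, hy0⟩ : ∃ y, Gᶜ.Adj v y := by
    have := hcc.preconnected v p
    exact (Reachable.nonempty_neighborSet_left (fun h => p.2 h.symm) this)
  rw [compl_adj] at hy0
  let y : {x | x ≠ v} := ⟨y0, fun h => hy0.1 h.symm⟩
  obtain ⟨x, hyx, hvx⟩ := hnb y
  -- an edge from a neighbour to a non-neighbour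
  have hedge : ∃ a b : {x | x ≠ v}, K.Reachable y a ∧ G.Adj v a ∧ ¬ G.Adj v b ∧ K.Adj a b := by
    by_contra hno
    push Not at hno
    have key : ∀ w, K.Reachable x w → G.Adj v w := by
      intro w hw
      rw [reachable_iff_reflTransGen] at hw
      induction hw with
      | refl => exact hvx
      | @tail b c hb hbc ih =>
        by_contra hcon
        rw [← reachable_iff_reflTransGen] at hb
        exact hno b c (hyx.trans hb) ih hcon hbc
    exact hy0.2 (key y hyx.symm)
  obtain ⟨a, b, hya, hva, hvb, hab⟩ := hedge
  -- a neighbour of `v` in another component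
  obtain ⟨z0, hz0⟩ : ∃ z0, ¬ K.Reachable y z0 := by
    by_contra hno
    push Not at hno
    exact hpq ((hno p).symm.trans (hno q))
  obtain ⟨z, hzz, hvz⟩ := hnb z0
  have hz : ¬ K.Reachable y z := fun h => hz0 (h.trans hzz.symm)
  have hza : ¬ G.Adj z a := fun h => hz (hya.trans (Adj.reachable (G := K) h.symm))
  have hzb : ¬ G.Adj z b := fun h =>
    hz ((hya.trans hab.reachable).trans (Adj.reachable (G := K) h.symm))
  refine hG z v a b hvz.symm hva hab hza hzb hvb ?_ ?_ ?_
  · intro h; exact hz (by rw [Subtype.ext h]; exact hya)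
  · intro h; exact hz (by rw [Subtype.ext h]; exact hya.trans hab.reachable)
  · exact fun h => b.2 h.symm

theorem compl_induce {V : Type} (G : SimpleGraph V) (s : Set V) :
    (G.induce s)ᶜ = Gᶜ.induce s := by
  ext a b
  simp [compl_adj, Subtype.ext_iff]

theorem not_both {V : Type} [Finite V] (G : SimpleGraph V) (hG : IsCograph G)
    (h2 : 2 ≤ Nat.card V) (hc : G.Connected) (hcc : Gᶜ.Connected) : False := by
  induction hn : Nat.card V using Nat.strong_induction_on generalizing V with
  | _ n ih =>
  obtain ⟨v⟩ := hc.nonempty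
  have hcard : Nat.card {x | x ≠ v} + 1 = n := by
    have := Set.ncard_add_ncard_compl {v}
    rw [Set.ncard_singleton, hn, add_comm] at this
    exact this
  by_cases h1 : (G.induce {x | x ≠ v}).Preconnected
  · by_cases h2' : (Gᶜ.induce {x | x ≠ v}).Preconnected
    · have hne : Nonempty {x | x ≠ v} := (Nat.card_pos_iff.1 (by omega)).1
      by_cases h3 : 2 ≤ Nat.card {x | x ≠ v}
      · refine ih (Nat.card {x | x ≠ v}) (by omega) (G.induce {x | x ≠ v})
          (isCograph_emb (Embedding.induce _) hG) h3 ⟨h1⟩ ?_ rfl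
        rw [compl_induce]
        exact ⟨h2'⟩
      · -- two vertices
        obtain ⟨w⟩ := hne
        have hw : ∀ x, x ≠ v → x = w := by
          intro x hx
          have : Subsingleton {x | x ≠ v} := (Finite.card_le_one_iff_subsingleton).1 (by omega)
          exact congrArg Subtype.val (Subsingleton.elim (⟨x, hx⟩ : {x | x ≠ v}) w)
        have hne : v ≠ w := fun h => w.2 h.symm
        obtain ⟨a, ha⟩ := Reachable.nonempty_neighborSet_left hne (hc.preconnected v w)
        obtain ⟨b, hb⟩ := Reachable.nonempty_neighborSet_left hne (hcc.preconnected v w)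
        rw [mem_neighborSet] at ha hb
        rw [hw a ha.ne.symm] at ha
        rw [hw b hb.ne.symm] at hb
        exact hb.2 ha
    · exact step Gᶜ (isCograph_compl hG) v h2' hcc (by rwa [compl_compl])
  · exact step G hG v h1 hc hcc

theorem conn_or (g : GC) (h : 0 < size g) : Conn g ∨ Conn (gcompl g) := by
  obtain ⟨n, G, rfl⟩ := ex_rep g
  rw [size_cls] at h
  have := (Nat.card_pos_iff.1 h).1
  rw [gcompl_cls, conn_cls, conn_cls]
  exact connected_or_connected_compl G

theorem conn_not (g : GC) (h2 : 2 ≤ size g) (hg : Cog g) (hc : Conn g) : ¬ Conn (gcompl g) := by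
  obtain ⟨n, G, rfl⟩ := ex_rep g
  rw [size_cls] at h2
  rw [conn_cls] at hc
  rw [cog_cls] at hg
  rw [gcompl_cls, conn_cls]
  exact fun h => not_both G hg h2 hc h

theorem conn_size {g : GC} (h : Conn g) : 1 ≤ size g := by
  obtain ⟨v⟩ := h.nonempty
  have := v.2
  omega

theorem not_conn_add {a b : GC} (ha : 0 < size a) (hb : 0 < size b) : ¬ Conn (a + b) := by
  obtain ⟨n, G, rfl⟩ := ex_rep a
  obtain ⟨m, H, rfl⟩ := ex_rep b
  rw [size_cls] at ha hb
  have := (Nat.card_pos_iff.1 ha).1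
  have := (Nat.card_pos_iff.1 hb).1
  rw [add_cls, conn_cls]
  exact not_connected_sum

theorem not_conn_sum (s : Multiset GC) (hs : ∀ x ∈ s, Conn x) (h2 : 2 ≤ s.card) :
    ¬ Conn s.sum := by
  intro h
  have h1 := comps_conn h
  rw [comps_sum s hs] at h1
  rw [h1] at h2
  simp at h2

theorem size_sum_ge (s : Multiset GC) (hs : ∀ x ∈ s, Conn x) : s.card ≤ size s.sum := by
  rw [size_sum]
  have := Multiset.card_nsmul_le_sum (s := s.map size) (a := 1) (by
    intro x hx
    obtain ⟨y, hy, rfl⟩ := Multiset.mem_map.1 hx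
    exact conn_size (hs y hy))
  simpa using this

theorem conn_compl_sum (s : Multiset GC) (hs : ∀ x ∈ s, Conn x) (h2 : 2 ≤ s.card) :
    Conn (gcompl s.sum) :=
  (conn_or _ (by have := size_sum_ge s hs; omega)).resolve_left (not_conn_sum s hs h2)

/-- Connected cographs. -/
abbrev TT : Type := {g : GC // Conn g ∧ Cog g}

theorem leaf_spec : Conn (cls (⊥ : SimpleGraph (Fin 1))) ∧ Cog (cls (⊥ : SimpleGraph (Fin 1))) := by
  rw [conn_cls, cog_cls]
  refine ⟨Connected.of_subsingleton, ?_⟩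
  rintro ⟨f, _⟩
  exact absurd (f.injective (Subsingleton.elim (f 0) (f 1))) (by decide)

noncomputable def tleaf : TT := ⟨cls (⊥ : SimpleGraph (Fin 1)), leaf_spec⟩

theorem tt_conn (s : Multiset TT) : ∀ x ∈ s.map Subtype.val, Conn x := by
  intro x hx
  obtain ⟨y, _, rfl⟩ := Multiset.mem_map.1 hx
  exact y.2.1

theorem tt_cog (s : Multiset TT) : ∀ x ∈ s.map Subtype.val, Cog x := by
  intro x hx
  obtain ⟨y, _, rfl⟩ := Multiset.mem_map.1 hx
  exact y.2.2

noncomputable def tnd (s : Multiset TT) : TT :=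
  if h : 2 ≤ s.card then
    ⟨gcompl (s.map Subtype.val).sum, conn_compl_sum _ (tt_conn s) (by simpa using h),
      by rw [cog_compl, cog_sum]; exact tt_cog s⟩
  else tleaf

theorem tnd_val (s : Multiset TT) (h : 2 ≤ s.card) :
    (tnd s).1 = gcompl (s.map Subtype.val).sum := by
  unfold tnd; rw [dif_pos h]

theorem gcompl_inj {a b : GC} (h : gcompl a = gcompl b) : a = b := by
  rw [← gcompl_gcompl a, h, gcompl_gcompl]

theorem size_eq_one {g : GC} (h : size g = 1) : g = cls (⊥ : SimpleGraph (Fin 1)) := by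
  obtain ⟨n, G, rfl⟩ := ex_rep g
  rw [size_cls] at h
  simp at h; subst h
  congr 1
  ext a b
  have : a = b := Subsingleton.elim a b
  simp [this]

theorem fin_size (n : ℕ) : {g : GC | size g = n}.Finite := by
  refine (Set.finite_range (fun G : SimpleGraph (Fin n) => cls G)).subset ?_
  intro g hg
  have hg : size g = n := hg
  subst hg
  exact ⟨rep g, cls_rep g⟩

noncomputable def TS : TreeSys TT where
  sz t := size t.1
  leaf := tleaf
  nd := tnd
  sz_leaf := by
    change size (cls _) = 1
    rw [size_cls]; simp
  sz_nd s h := by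
    rw [tnd_val s h, size_gcompl, size_sum, Multiset.map_map]; rfl
  nd_inj s s' h h' he := by
    have h1 := congrArg Subtype.val he
    rw [tnd_val s h, tnd_val s' h'] at h1
    have h2 := congrArg comps (gcompl_inj h1)
    rw [comps_sum _ (tt_conn s), comps_sum _ (tt_conn s')] at h2
    exact Multiset.map_injective Subtype.val_injective h2
  ex t := by
    have h1 := conn_size t.2.1
    by_cases h2 : 2 ≤ size t.1
    · right
      obtain ⟨s, hs, hsum⟩ := exists_decomp (gcompl t.1)
      have hcog : ∀ x ∈ s, Cog x := by
        rw [← cog_sum, hsum, cog_compl]; exact t.2.2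
      have hcard : 2 ≤ s.card := by
        by_contra hlt
        have hn := conn_not t.1 h2 t.2.2 t.2.1
        have h0 : s.card = 0 ∨ s.card = 1 := by omega
        rcases h0 with h0 | h0
        · rw [Multiset.card_eq_zero] at h0
          subst h0
          have := congrArg size hsum
          rw [size_gcompl, Multiset.sum_zero, size_zero] at this
          omega
        · obtain ⟨a, rfl⟩ := Multiset.card_eq_one.1 h0
          rw [Multiset.sum_singleton] at hsum
          exact hn (hsum ▸ hs a (by simp))
      lift s to Multiset TT using fun x hx => ⟨hs x hx, hcog x hx⟩
      refine ⟨s, by simpa using hcard, Subtype.ext ?_⟩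
      rw [tnd_val s (by simpa using hcard)]
      apply gcompl_inj
      rw [gcompl_gcompl]; exact hsum.symm
    · left
      exact Subtype.ext (size_eq_one (by omega))
  sz_pos t := conn_size t.2.1
  fin n := (fin_size n).preimage Subtype.val_injective.injOn

end CG

namespace CG
open Matrix

open Classical in
/-- The adjacency indicator. -/
noncomputable def AE {V : Type} (G : SimpleGraph V) (i j : V) : ℝ := if G.Adj i j then 1 else 0

theorem AE_pos {V : Type} {G : SimpleGraph V} {i j : V} (h : G.Adj i j) : AE G i j = 1 := by
  simp [AE, h]

theorem AE_neg {V : Type} {G : SimpleGraph V} {i j : V} (h : ¬ G.Adj i j) : AE G i j = 0 := by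
  simp [AE, h]

theorem AE_congr {V W : Type} {G : SimpleGraph V} {H : SimpleGraph W} {i j : V} {k l : W}
    (h : G.Adj i j ↔ H.Adj k l) : AE G i j = AE H k l := by
  by_cases h' : H.Adj k l
  · rw [AE_pos h', AE_pos (h.2 h')]
  · rw [AE_neg h', AE_neg (fun h2 => h' (h.1 h2))]

theorem AE_compl {V : Type} [DecidableEq V] (G : SimpleGraph V) (i k : V) :
    AE Gᶜ i k = 1 - (if i = k then (1 : ℝ) else 0) - AE G i k := by
  by_cases hk : i = k
  · subst hk; rw [AE_neg (by simp), AE_neg (by simp)]; simp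
  · by_cases ha : G.Adj i k
    · rw [AE_neg (by simp [ha]), AE_pos ha]; simp [hk]
    · rw [AE_pos ((compl_adj G i k).2 ⟨hk, ha⟩), AE_neg ha]; simp [hk]

/-- The signless Laplacian. -/
noncomputable def QM {V : Type} [Fintype V] [DecidableEq V] (G : SimpleGraph V) :
    Matrix V V ℝ :=
  Matrix.of fun i j => (if i = j then ∑ k, AE G i k else 0) + AE G i j

theorem qCharPoly_eq {V : Type} [Fintype V] [DecidableEq V] (G : SimpleGraph V) :
    qCharPoly G = (QM G).charpoly := by
  classical
  unfold qCharPoly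
  congr 1
  ext i j
  simp only [QM, AE, Matrix.add_apply, degMatrix, Matrix.diagonal_apply, adjMatrix_apply,
    Matrix.of_apply]
  congr 1
  · split_ifs with h
    · rw [← card_neighborFinset_eq_degree, neighborFinset_eq_filter]
      simp
    · rfl

def SM {V : Type} [Fintype V] [DecidableEq V] (G H : SimpleGraph V) : Prop :=
  ∃ U U' : Matrix V V ℝ, U * U' = 1 ∧ (∀ i, ∑ j, U i j = 1) ∧ (∀ j, ∑ i, U i j = 1) ∧
    U * QM G = QM H * U

theorem SM.cosp {V : Type} [Fintype V] [DecidableEq V] {G H : SimpleGraph V} (h : SM G H) :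
    QCospectral G H := by
  obtain ⟨U, U', hU, _, _, hQ⟩ := h
  unfold QCospectral
  rw [qCharPoly_eq, qCharPoly_eq]
  have hU' : U' * U = 1 := mul_eq_one_comm.1 hU
  let u : (Matrix V V ℝ)ˣ := ⟨U, U', hU, hU'⟩
  have h1 : (U * QM G * U').charpoly = (QM G).charpoly := by
    have := Matrix.charpoly_units_conj u (QM G)
    rwa [← Matrix.coe_units_inv] at this
  rw [← h1, hQ, Matrix.mul_assoc, hU, Matrix.mul_one]

theorem QM_compl {V : Type} [Fintype V] [DecidableEq V] (G : SimpleGraph V) :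
    QM Gᶜ = ((Fintype.card V : ℝ) - 2) • (1 : Matrix V V ℝ) + (Matrix.of fun _ _ => 1) - QM G := by
  ext i j
  simp only [QM, Matrix.of_apply, Matrix.add_apply, Matrix.sub_apply, Matrix.smul_apply,
    Matrix.one_apply, smul_eq_mul, AE_compl]
  by_cases hij : i = j
  · subst hij
    rw [Finset.sum_sub_distrib, Finset.sum_sub_distrib]
    simp
    ring
  · simp [hij]

theorem SM.compl {V : Type} [Fintype V] [DecidableEq V] {G H : SimpleGraph V} (h : SM G H) :
    SM Gᶜ Hᶜ := by
  obtain ⟨U, U', hU, h1, h2, hQ⟩ := h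
  refine ⟨U, U', hU, h1, h2, ?_⟩
  have hJ : U * (Matrix.of fun _ _ => 1) = (Matrix.of fun _ _ => 1) * U := by
    ext i j
    simp [Matrix.mul_apply, h1, h2]
  rw [QM_compl, QM_compl, Matrix.mul_sub, Matrix.mul_add, Matrix.sub_mul, Matrix.add_mul, hQ, hJ]
  simp

theorem QM_sum {V W : Type} [Fintype V] [DecidableEq V] [Fintype W] [DecidableEq W]
    (G : SimpleGraph V) (R : SimpleGraph W) :
    QM (G ⊕g R) = Matrix.fromBlocks (QM G) 0 0 (QM R) := by
  have h1 : ∀ i j, AE (G ⊕g R) (Sum.inl i) (Sum.inl j) = AE G i j := fun i j => AE_congr (by simp)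
  have h2 : ∀ i j, AE (G ⊕g R) (Sum.inr i) (Sum.inr j) = AE R i j := fun i j => AE_congr (by simp)
  have h3 : ∀ i j, AE (G ⊕g R) (Sum.inl i) (Sum.inr j) = 0 := fun i j => AE_neg (by simp)
  have h4 : ∀ i j, AE (G ⊕g R) (Sum.inr i) (Sum.inl j) = 0 := fun i j => AE_neg (by simp)
  ext (i | i) (j | j) <;> simp [QM, Fintype.sum_sum_type, h1, h2, h3, h4]

theorem SM.add {V W : Type} [Fintype V] [DecidableEq V] [Fintype W] [DecidableEq W]
    {G H : SimpleGraph V} (h : SM G H) (R : SimpleGraph W) : SM (G ⊕g R) (H ⊕g R) := by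
  obtain ⟨U, U', hU, h1, h2, hQ⟩ := h
  refine ⟨Matrix.fromBlocks U 0 0 1, Matrix.fromBlocks U' 0 0 1, ?_, ?_, ?_, ?_⟩
  · simp [Matrix.fromBlocks_multiply, hU]
  · rintro (i | i)
    · simp [Fintype.sum_sum_type, h1]
    · simp [Fintype.sum_sum_type, Matrix.one_apply]
  · rintro (i | i)
    · simp [Fintype.sum_sum_type, h2]
    · simp [Fintype.sum_sum_type, Matrix.one_apply]
  · rw [QM_sum, QM_sum, Matrix.fromBlocks_multiply, Matrix.fromBlocks_multiply]
    simp [hQ]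

def Mate (g h : GC) : Prop :=
  ∃ (V : Type) (_ : Fintype V) (_ : DecidableEq V) (G H : SimpleGraph V),
    cls G = g ∧ cls H = h ∧ SM G H

theorem Mate.compl {g h : GC} (m : Mate g h) : Mate (gcompl g) (gcompl h) := by
  obtain ⟨V, _, _, G, H, rfl, rfl, hs⟩ := m
  exact ⟨V, _, _, Gᶜ, Hᶜ, (gcompl_cls G).symm, (gcompl_cls H).symm, hs.compl⟩

theorem Mate.add {g h : GC} (m : Mate g h) (r : GC) : Mate (g + r) (h + r) := by
  obtain ⟨V, _, _, G, H, rfl, rfl, hs⟩ := m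
  obtain ⟨n, R, rfl⟩ := ex_rep r
  exact ⟨V ⊕ Fin n, inferInstance, inferInstance, G ⊕g R, H ⊕g R, (add_cls _ _).symm,
    (add_cls _ _).symm, hs.add R⟩

theorem qCharPoly_iso {V W : Type} [Fintype V] [DecidableEq V] [Fintype W] [DecidableEq W]
    {G : SimpleGraph V} {H : SimpleGraph W} (e : G ≃g H) : qCharPoly G = qCharPoly H := by
  rw [qCharPoly_eq, qCharPoly_eq, ← Matrix.charpoly_reindex e.toEquiv (QM G)]
  congr 1
  ext i j
  obtain ⟨i, rfl⟩ := e.surjective i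
  obtain ⟨j, rfl⟩ := e.surjective j
  have hs : ∀ x, e.toEquiv.symm (e x) = x := fun x => e.toEquiv.symm_apply_apply x
  have ha : ∀ i j, AE H (e i) (e j) = AE G i j := fun i j => AE_congr e.map_adj_iff
  have hsum : ∑ k, AE H (e i) k = ∑ k, AE G i k := by
    rw [← e.toEquiv.sum_comp]
    exact Finset.sum_congr rfl fun k _ => ha i k
  rw [Matrix.reindex_apply, Matrix.submatrix_apply, hs, hs]
  simp only [QM, Matrix.of_apply, hsum, ha, e.injective.eq_iff]

theorem Mate.exists {n : ℕ} {G : SimpleGraph (Fin n)} {h : GC} (m : Mate (cls G) h) :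
    ∃ H : SimpleGraph (Fin n), GenQCospectral G H ∧ cls H = h := by
  obtain ⟨V, _, _, G', H', hG, rfl, hs⟩ := m
  obtain ⟨e⟩ := cls_eq.1 hG
  let f : H' ≃g H'.map e.toEquiv.toEmbedding := Iso.map e.toEquiv H'
  refine ⟨H'.map e.toEquiv.toEmbedding, ⟨?_, ?_⟩, cls_eq.2 ⟨f.symm⟩⟩
  · have h1 : qCharPoly G' = qCharPoly H' := hs.cosp
    unfold QCospectral
    rw [← qCharPoly_iso e, ← qCharPoly_iso f, h1]
  · have h1 : qCharPoly G'ᶜ = qCharPoly H'ᶜ := hs.compl.cosp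
    unfold QCospectral
    rw [← qCharPoly_iso (complIso e), ← qCharPoly_iso (complIso f), h1]

/-- The claw. -/
def claw : SimpleGraph (Fin 4) where
  Adj i j := i ≠ j ∧ (i = 0 ∨ j = 0)
  symm := ⟨fun _ _ h => ⟨h.1.symm, h.2.symm⟩⟩
  loopless := ⟨fun _ h => h.1 rfl⟩

theorem claw_adj (i j : Fin 4) : claw.Adj i j ↔ i ≠ j ∧ (i = 0 ∨ j = 0) := Iff.rfl

theorem claw_conn : claw.Connected := by
  rw [connected_iff_exists_forall_reachable]
  refine ⟨0, fun w => ?_⟩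
  by_cases h : (0 : Fin 4) = w
  · rw [h]
  · exact Adj.reachable ⟨h, Or.inl rfl⟩

theorem claw_cog : IsCograph claw := by
  rw [isCograph_iff]
  simp only [claw_adj]
  decide

theorem claw_SM : SM claw clawᶜ := by
  refine ⟨!![-1/2, 1/2, 1/2, 1/2; 1/2, -1/2, 1/2, 1/2; 1/2, 1/2, -1/2, 1/2; 1/2, 1/2, 1/2, -1/2],
    !![-1/2, 1/2, 1/2, 1/2; 1/2, -1/2, 1/2, 1/2; 1/2, 1/2, -1/2, 1/2; 1/2, 1/2, 1/2, -1/2],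
    ?_, ?_, ?_, ?_⟩
  · ext i j
    fin_cases i <;> fin_cases j <;> simp [Matrix.mul_apply, Fin.sum_univ_four] <;> norm_num
  · intro i
    fin_cases i <;> simp [Fin.sum_univ_four] <;> norm_num
  · intro i
    fin_cases i <;> simp [Fin.sum_univ_four] <;> norm_num
  · have h1 : QM claw = !![3, 1, 1, 1; 1, 1, 0, 0; 1, 0, 1, 0; 1, 0, 0, 1] := by
      ext i j
      fin_cases i <;> fin_cases j <;> simp [QM, AE, claw_adj, Fin.sum_univ_four, -Finset.sum_boole] <;> norm_num
    have h2 : QM clawᶜ = !![0, 0, 0, 0; 0, 2, 1, 1; 0, 1, 2, 1; 0, 1, 1, 2] := by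
      rw [QM_compl, h1]
      ext i j
      fin_cases i <;> fin_cases j <;> simp <;> norm_num
    rw [h1, h2]
    ext i j
    fin_cases i <;> fin_cases j <;> simp [Matrix.mul_apply, Fin.sum_univ_four] <;> norm_num

noncomputable def tclaw : TT :=
  ⟨cls claw, (conn_cls _).2 claw_conn, (cog_cls _).2 claw_cog⟩

theorem has_mate {t : TT} (h : TS.Has tclaw t) : ∃ m, m ≠ t.1 ∧ Mate t.1 m := by
  induction h with
  | self =>
    refine ⟨gcompl (cls claw), ?_, Fin 4, inferInstance, inferInstance, claw, clawᶜ, rfl,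
      (gcompl_cls _).symm, claw_SM⟩
    intro he
    refine conn_not (cls claw) (by rw [size_cls]; simp) ((cog_cls _).2 claw_cog)
      ((conn_cls _).2 claw_conn) ?_
    rw [he]; exact tclaw.2.1
  | child s x hs hx _ ih =>
    obtain ⟨m, hm, hM⟩ := ih
    obtain ⟨s', rfl⟩ := Multiset.exists_cons_of_mem hx
    have hv : (TS.nd (x ::ₘ s')).1 = gcompl (x.1 + (s'.map Subtype.val).sum) := by
      rw [← Multiset.sum_cons, ← Multiset.map_cons]
      exact tnd_val _ hs
    rw [hv]
    refine ⟨gcompl (m + (s'.map Subtype.val).sum), ?_, (hM.add _).compl⟩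
    intro he
    exact hm (gadd_cancel (gcompl_inj he))

theorem classCount_eq (n : ℕ) (P : SimpleGraph (Fin n) → Prop) :
    classCount n P = ((fun G : SimpleGraph (Fin n) => cls G) '' {G | P G}).ncard := by
  unfold classCount
  let f : (Quot fun G H : {G : SimpleGraph (Fin n) // P G} => Nonempty (G.1 ≃g H.1)) → GC :=
    Quot.lift (fun G => cls G.1) (fun G H h => cls_eq.2 h)
  have hf : Function.Injective f := by
    rintro ⟨G⟩ ⟨H⟩ h
    exact Quot.sound (cls_eq.1 h)
  rw [← Nat.card_range_of_injective hf]
  change (Set.range f).ncard = _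
  congr 1
  ext g
  constructor
  · rintro ⟨⟨G⟩, rfl⟩
    exact ⟨G.1, G.2, rfl⟩
  · rintro ⟨G, hG, rfl⟩
    exact ⟨Quot.mk _ ⟨G, hG⟩, rfl⟩

def qP (n : ℕ) (G : SimpleGraph (Fin n)) : Prop :=
  IsCograph G ∧ ∃ H : SimpleGraph (Fin n), GenQCospectral G H ∧ ¬ Nonempty (G ≃g H)

theorem qP_of_mate {n : ℕ} {G : SimpleGraph (Fin n)} (hG : IsCograph G)
    (h : ∃ m, m ≠ cls G ∧ Mate (cls G) m) : qP n G := by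
  obtain ⟨m, hm, hM⟩ := h
  obtain ⟨H, hH, rfl⟩ := hM.exists
  exact ⟨hG, H, hH, fun h => hm (cls_eq.2 h).symm⟩

theorem count_bounds (n : ℕ) (hn : 1 ≤ n) :
    classCount n (fun G => IsCograph G) ≤ classCount n (qP n) + 2 * TS.free tclaw n ∧
    classCount n (qP n) ≤ classCount n (fun G => IsCograph G) ∧
    TS.num n ≤ classCount n (fun G => IsCograph G) := by
  rw [classCount_eq, classCount_eq]
  set c : SimpleGraph (Fin n) → GC := fun G => cls G with hc
  set F : Set TT := {t | TS.sz t = n ∧ ¬ TS.Has tclaw t} with hF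
  have hFfin : F.Finite := (TS.fin n).subset fun t ht => ht.1
  refine ⟨?_, ?_, ?_⟩
  · have hsub : c '' {G | IsCograph G} ⊆
        c '' {G | qP n G} ∪ (Subtype.val '' F ∪ gcompl '' (Subtype.val '' F)) := by
      rintro g ⟨G, hG, rfl⟩
      have hG : IsCograph G := hG
      by_cases hq : qP n G
      · exact Or.inl ⟨G, hq, rfl⟩
      right
      have hsz : size (cls G) = n := by rw [size_cls]; simp
      have hcog : Cog (cls G) := (cog_cls G).2 hG
      rcases conn_or (cls G) (by omega) with hcn | hcn
      · left
        refine ⟨⟨cls G, hcn, hcog⟩, ⟨hsz, fun hh => hq ?_⟩, rfl⟩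
        exact qP_of_mate hG (has_mate hh)
      · right
        refine ⟨gcompl (cls G), ⟨⟨gcompl (cls G), hcn, (cog_compl _).2 hcog⟩, ⟨?_, fun hh => hq ?_⟩,
          rfl⟩, gcompl_gcompl _⟩
        · exact (size_gcompl _).trans hsz
        · obtain ⟨m, hm, hM⟩ := has_mate hh
          refine qP_of_mate hG ⟨gcompl m, ?_, ?_⟩
          · intro he
            apply hm
            rw [← gcompl_gcompl m, he]
          · have := hM.compl
            rwa [gcompl_gcompl] at this
    have hfin1 : (Subtype.val '' F : Set GC).Finite := hFfin.image _
    refine (Set.ncard_le_ncard hsub ((Set.toFinite _).union (hfin1.union (hfin1.image _)))).trans ?_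
    refine (Set.ncard_union_le _ _).trans ?_
    gcongr
    refine (Set.ncard_union_le _ _).trans ?_
    have h1 : (Subtype.val '' F : Set GC).ncard ≤ F.ncard := Set.ncard_image_le hFfin
    have h2 : (gcompl '' (Subtype.val '' F : Set GC)).ncard ≤ _ := Set.ncard_image_le hfin1
    have h3 : TS.free tclaw n = F.ncard := rfl
    omega
  · exact Set.ncard_le_ncard (Set.image_mono fun G hG => hG.1) (Set.toFinite _)
  · have h1 : TS.num n = (Subtype.val '' {t : TT | TS.sz t = n} : Set GC).ncard := by
      rw [Set.ncard_image_of_injective _ Subtype.val_injective]; rfl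
    rw [h1]
    refine Set.ncard_le_ncard ?_ (Set.toFinite _)
    rintro g ⟨t, ht, rfl⟩
    have ht : size t.1 = n := ht
    subst ht
    exact ⟨rep t.1, t.2.2, cls_rep t.1⟩

theorem final : Filter.Tendsto
      (fun n : ℕ => (classCount n (qP n) : ℝ) / (classCount n (fun G => IsCograph G) : ℝ))
      Filter.atTop (nhds 1) := by
  have h0 := TS.free_div_num tclaw
  have h1 : Filter.Tendsto (fun n => 1 - 2 * ((TS.free tclaw n : ℝ) / (TS.num n : ℝ)))
      Filter.atTop (nhds 1) := by
    simpa using (h0.const_mul 2).const_sub 1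
  refine tendsto_of_tendsto_of_tendsto_of_le_of_le' h1 tendsto_const_nhds ?_ ?_
  · filter_upwards [Filter.eventually_ge_atTop 2] with n hn
    obtain ⟨b1, b2, b3⟩ := count_bounds n (by omega)
    have hp := TS.num_ge (n - 2)
    rw [show n - 2 + 2 = n by omega] at hp
    have hp' : 0 < TS.num n := lt_of_lt_of_le (by positivity) hp
    have hN : (0 : ℝ) < TS.num n := by exact_mod_cast hp'
    have b1' : (classCount n (fun G => IsCograph G) : ℝ) ≤
      classCount n (qP n) + 2 * TS.free tclaw n := by exact_mod_cast b1
    have b3' : (TS.num n : ℝ) ≤ classCount n (fun G => IsCograph G) := by exact_mod_cast b3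
    have hC : (0 : ℝ) < classCount n (fun G => IsCograph G) := hN.trans_le b3'
    have hle : (TS.free tclaw n : ℝ) / (classCount n (fun G => IsCograph G)) ≤
      (TS.free tclaw n : ℝ) / (TS.num n : ℝ) := by gcongr
    have : 1 - 2 * ((TS.free tclaw n : ℝ) / (classCount n (fun G => IsCograph G))) ≤
        (classCount n (qP n) : ℝ) / (classCount n (fun G => IsCograph G)) := by
      rw [le_div_iff₀ hC, sub_mul, mul_assoc, div_mul_cancel₀ _ hC.ne']
      linarith
    linarith
  · filter_upwards [Filter.eventually_ge_atTop 1] with n hn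
    obtain ⟨b1, b2, b3⟩ := count_bounds n hn
    exact div_le_one_of_le₀ (by exact_mod_cast b2) (by positivity)

end CG

/-- **Almost all cographs have a generalized `Q`-cospectral mate.** -/
theorem almost_all_cographs_have_generalized_qCospectral_mate :
    Filter.Tendsto
      (fun n : ℕ =>
        (classCount n (fun G => IsCograph G ∧
            ∃ H : SimpleGraph (Fin n), GenQCospectral G H ∧ ¬ Nonempty (G ≃g H)) : ℝ) /
        (classCount n (fun G => IsCograph G) : ℝ))
      Filter.atTop (nhds 1) := by
  exact CG.final
end
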